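/- arXiv:2003.03949 — 2 statements merged into one kernel-verified Lean document; each statement's English description precedes it below -/
import Mathlib

section
/- Let n ≥ 3, N = 2^⌊n/2⌋, and let α₁,…,αₙ be complex N×N matrices satisfying the Clifford relations. Let ψ : B₁ → ℂᴺ be of class C^{1,α} on the open unit ball B₁ ⊂ ℝⁿ for some α ∈ (0,1), not identically zero, and solving the critical Dirac equation Dψ = |ψ|^{2/(n−1)}ψ pointwise on B₁. Then the singular nodal set Z_{≥2} := { x ∈ B₁ : ψ(x) = 0 and dψ(x) = 0 } has Hausdorff dimension at most n − 2. -/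
open MeasureTheory Metric Filter Matrix
open scoped ENNReal NNReal

noncomputable section

/-- The Clifford anticommutation relations `αⱼαₖ + αₖαⱼ = -2 δⱼₖ Id`. -/
def CliffordRel {n N : ℕ} (α : Fin n → Matrix (Fin N) (Fin N) ℂ) : Prop :=
  ∀ j k, α j * α k + α k * α j = (-2 : ℂ) • (if j = k then (1 : Matrix (Fin N) (Fin N) ℂ) else 0)

/-- The Euclidean Dirac operator `Dψ = Σⱼ αⱼ ∂ⱼψ`. -/
def diracOp {n N : ℕ} (α : Fin n → Matrix (Fin N) (Fin N) ℂ)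
    (ψ : EuclideanSpace ℝ (Fin n) → EuclideanSpace ℂ (Fin N))
    (x : EuclideanSpace ℝ (Fin n)) : EuclideanSpace ℂ (Fin N) :=
  ∑ j : Fin n, Matrix.toEuclideanLin (α j) (fderiv ℝ ψ x (EuclideanSpace.single j (1:ℝ)))

/-!
The equation enters only through the local bound `‖Dψ‖ ≤ C ‖ψ‖`. In polar coordinates the angular
part of `D` is `L²`-orthogonal to the radial derivative, which yields a Carleman inequality with
weights `‖x‖ ^ (-2 m) * exp (l ‖x‖²)`; letting `m → ∞`, a zero of infinite order forces `ψ = 0`.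
At every other zero Pompeiu's formula and the Taylor expansion of the Dirac kernel give a nonzero
homogeneous leading term `P` with `D P = 0`.

Split the zeros into countably many classes according to their order `d ≥ 1` and to an `m` with
`‖ψ (x + z)‖ ≤ m ‖z‖ ^ d` for `‖z‖ < 1 / m`. Every tangent direction of a class at one of its points
leaves the leading term there invariant. A nonconstant `P` with `D P = 0` depends on at least two
directions, so these tangent directions lie in a subspace of codimension at least two, and each
class has dimension at most `n - 2`.

The matrices `αⱼ` need not be unitary, but averaging the inner product over the finite group they
generate makes them skew-adjoint.
-/

open Module (finrank)
open scoped Topology ContDiff RealInnerProductSpace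

section DiracSymbol

variable {E F : Type*} [NormedAddCommGroup E] [InnerProductSpace ℝ E]
  [NormedAddCommGroup F] [NormedSpace ℝ F]

lemma clifford_polarization {c : E →L[ℝ] F →L[ℝ] F} (hc : ∀ x u, c x (c x u) = -(‖x‖ ^ 2) • u)
    (x y : E) (u : F) : c x (c y u) + c y (c x u) = (-2 * ⟪x, y⟫) • u := by
  have hxy := hc (x + y) u
  simp only [map_add, _root_.add_apply, hc x u, hc y u, norm_add_sq_real] at hxy
  linear_combination (norm := module) hxy

variable [FiniteDimensional ℝ E]

/-- The principal symbol of the Dirac operator of a Clifford multiplication `c`, so that the Dirac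
operator is `u ↦ diracSymbol c (fderiv ℝ u x)`. The choice of orthonormal basis is immaterial, see
`diracSymbol_apply`. -/
def diracSymbol (c : E →L[ℝ] F →L[ℝ] F) : (E →L[ℝ] F) →L[ℝ] F :=
  ∑ j, (c (stdOrthonormalBasis ℝ E j)).comp
    (ContinuousLinearMap.apply ℝ F (stdOrthonormalBasis ℝ E j))

lemma diracSymbol_apply {ι : Type*} [Fintype ι] (e : OrthonormalBasis ι ℝ E)
    (c : E →L[ℝ] F →L[ℝ] F) (L : E →L[ℝ] F) : diracSymbol c L = ∑ i, c (e i) (L (e i)) := by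
  set b := stdOrthonormalBasis ℝ E
  calc diracSymbol c L = ∑ j, c (b j) (L (b j)) := by
        simp [diracSymbol, b]
    _ = ∑ j, ∑ i, c (⟪e i, b j⟫ • b j) (L (e i)) := by
        refine Finset.sum_congr rfl fun j _ => ?_
        conv_lhs => rw [← e.sum_repr' (b j), map_sum L, map_sum]
        simp [e.sum_repr']
    _ = ∑ i, c (e i) (L (e i)) := by
        rw [Finset.sum_comm]
        refine Finset.sum_congr rfl fun i _ => ?_
        conv_rhs => rw [← b.sum_repr' (e i), map_sum c, _root_.sum_apply, b.sum_repr' (e i)]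
        simp [real_inner_comm]

lemma diracSymbol_smulRight (c : E →L[ℝ] F →L[ℝ] F) (x : E) (u : F) :
    diracSymbol c ((innerSL ℝ x).smulRight u) = c x u := by
  rw [diracSymbol_apply (stdOrthonormalBasis ℝ E)]
  conv_rhs => rw [← (stdOrthonormalBasis ℝ E).sum_repr' x]
  simp [real_inner_comm]

end DiracSymbol

section CliffordMultiplication

variable {E F : Type*} [NormedAddCommGroup E] [InnerProductSpace ℝ E]
  [NormedAddCommGroup F] [InnerProductSpace ℝ F]

/-- Clifford multiplication of an orthogonal Clifford module: vectors `x : E` act on `F` by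
skew-adjoint operators `c x` with `(c x)² = -‖x‖²`. -/
structure IsCliffordMul (c : E →L[ℝ] F →L[ℝ] F) : Prop where
  apply_apply_self : ∀ x u, c x (c x u) = -(‖x‖ ^ 2) • u
  inner_apply_left : ∀ x u v, ⟪c x u, v⟫ = -⟪u, c x v⟫

namespace IsCliffordMul

variable {c : E →L[ℝ] F →L[ℝ] F} (hc : IsCliffordMul c)
include hc

lemma norm_apply (x : E) (u : F) : ‖c x u‖ = ‖x‖ * ‖u‖ := by
  rw [← sq_eq_sq₀ (norm_nonneg _) (by positivity), ← real_inner_self_eq_norm_sq,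
    hc.inner_apply_left, hc.apply_apply_self, real_inner_smul_right, real_inner_self_eq_norm_sq]
  ring

lemma inner_apply_comp_of_orthogonal {x y : E} (hxy : ⟪x, y⟫ = 0) (u v : F) :
    ⟪c x (c y u), v⟫ = -⟪u, c x (c y v)⟫ := by
  have hanti : c x (c y u) = -c y (c x u) := by
    simpa [hxy, add_eq_zero_iff_eq_neg] using clifford_polarization hc.apply_apply_self x y u
  rw [hanti, inner_neg_left, hc.inner_apply_left, hc.inner_apply_left, neg_neg]

end IsCliffordMul

variable [FiniteDimensional ℝ E]

/-- The rotation field `x ↦ ⟪a, x⟫ b - ⟪b, x⟫ a` in the plane of `a` and `b`. -/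
def rotationField (a b : E) : E →L[ℝ] E :=
  (innerSL ℝ a).smulRight b - (innerSL ℝ b).smulRight a

omit [FiniteDimensional ℝ E] in
lemma rotationField_apply (a b x : E) : rotationField a b x = ⟪a, x⟫ • b - ⟪b, x⟫ • a := rfl

omit [FiniteDimensional ℝ E] in
lemma inner_rotationField_self (a b x : E) : ⟪x, rotationField a b x⟫ = 0 := by
  rw [rotationField_apply, inner_sub_right, real_inner_smul_right, real_inner_smul_right,
    real_inner_comm x a, real_inner_comm x b]
  ring

/-- The angular part of the Dirac operator in polar coordinates: `x · D = -∂ₓ + Γ`, where the Gamma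
operator `Γ` differentiates only along rotation fields. -/
lemma IsCliffordMul.apply_diracSymbol_add {ι : Type*} [Fintype ι] (e : OrthonormalBasis ι ℝ E)
    {c : E →L[ℝ] F →L[ℝ] F} (hc : IsCliffordMul c) (x : E) (L : E →L[ℝ] F) :
    c x (diracSymbol c L) + L x
      = (1 / 2 : ℝ) • ∑ i, ∑ j, c (e i) (c (e j) (L (rotationField (e i) (e j) x))) := by
  have hD : c x (diracSymbol c L) = ∑ i, ∑ j, ⟪e i, x⟫ • c (e i) (c (e j) (L (e j))) := by
    conv_lhs => rw [diracSymbol_apply e, ← e.sum_repr' x, map_sum c, _root_.sum_apply]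
    simp
  have hanti : ∑ i, ∑ j, ⟪e i, x⟫ • (c (e i) (c (e j) (L (e j))) + c (e j) (c (e i) (L (e j))))
      = (-2 : ℝ) • L x := by
    classical
    conv_rhs => rw [← e.sum_repr' x]
    simp [clifford_polarization hc.apply_apply_self, e.inner_eq_ite, smul_smul, Finset.smul_sum,
      mul_comm]
  have hswap : ∑ i, ∑ j, ⟪e j, x⟫ • c (e i) (c (e j) (L (e i)))
      = ∑ i, ∑ j, ⟪e i, x⟫ • c (e j) (c (e i) (L (e j))) := Finset.sum_comm
  simp only [smul_add, Finset.sum_add_distrib, ← hD] at hanti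
  simp only [rotationField_apply, map_sub, map_smul, Finset.sum_sub_distrib, ← hD, hswap]
  linear_combination (norm := module) (1 / 2 : ℝ) • hanti

end CliffordMultiplication

section LinearVectorFields

variable {E F : Type*} [NormedAddCommGroup E] [InnerProductSpace ℝ E]
  [NormedAddCommGroup F] [InnerProductSpace ℝ F]

lemma contDiff_of_forall_mem_tsupport {V W : Type*} [NormedAddCommGroup V] [NormedSpace ℝ V]
    [NormedAddCommGroup W] [NormedSpace ℝ W] {f : V → W} {m : WithTop ℕ∞}
    (hf : ∀ x ∈ tsupport f, ContDiffAt ℝ m f x) : ContDiff ℝ m f := by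
  rw [← contMDiff_iff_contDiff]
  exact contMDiff_of_tsupport fun x hx => (hf x hx).contMDiffAt

lemma fderiv_eq_zero_of_notMem_tsupport {V W : Type*} [NormedAddCommGroup V] [NormedSpace ℝ V]
    [NormedAddCommGroup W] [NormedSpace ℝ W] {f : V → W} {x : V} (hx : x ∉ tsupport f) :
    fderiv ℝ f x = 0 :=
  image_eq_zero_of_notMem_tsupport fun h => hx (tsupport_fderiv_subset ℝ h)

lemma fderiv_fderiv_apply_comm {V W : Type*} [NormedAddCommGroup V] [NormedSpace ℝ V]
    [NormedAddCommGroup W] [NormedSpace ℝ W] (A B : V →L[ℝ] V) (hAB : ∀ x, A (B x) = B (A x))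
    {v : V → W} (hv : ContDiff ℝ 2 v) (x : V) :
    fderiv ℝ (fun y => fderiv ℝ v y (A y)) x (B x)
      = fderiv ℝ (fun y => fderiv ℝ v y (B y)) x (A x) := by
  have hd := ((hv.fderiv_right (m := 1) (by norm_num)).differentiable (by norm_num) x).hasFDerivAt
  have hsymm := (hv.contDiffAt (x := x)).isSymmSndFDerivAt (by simp)
  rw [(hd.clm_apply A.hasFDerivAt).fderiv, (hd.clm_apply B.hasFDerivAt).fderiv]
  simp [hAB x, hsymm.eq (B x) (A x)]

lemma hasFDerivAt_norm_sq_add_rpow {x : E} {a : ℝ} (s : ℝ) (hx : ‖x‖ ^ 2 + a ≠ 0) :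
    HasFDerivAt (fun y : E => (‖y‖ ^ 2 + a) ^ s)
      ((2 * s * (‖x‖ ^ 2 + a) ^ (s - 1)) • innerSL ℝ x) x := by
  convert ((hasStrictFDerivAt_norm_sq x).hasFDerivAt.add_const a).rpow_const (p := s)
    (Or.inl hx) using 1
  module

lemma contDiffAt_norm_sq_rpow (s : ℝ) {x : E} (hx : x ≠ 0) {m : WithTop ℕ∞} :
    ContDiffAt ℝ m (fun y : E => (‖y‖ ^ 2) ^ s) x :=
  (contDiff_norm_sq ℝ).contDiffAt.rpow_const_of_ne (by positivity)

variable [FiniteDimensional ℝ E] [MeasurableSpace E] [BorelSpace E]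

lemma integral_fderiv_apply_linear (B : E →L[ℝ] E) {q : E → ℝ} (hq : ContDiff ℝ 1 q)
    (hqs : HasCompactSupport q) :
    ∫ x, fderiv ℝ q x (B x) = -(LinearMap.trace ℝ E B) * ∫ x, q x := by
  set e := stdOrthonormalBasis ℝ E
  have hcoord : ∀ i, Continuous fun x => ⟪e i, B x⟫ := fun i => by fun_prop
  have hdq : ∀ i, Continuous fun x => fderiv ℝ q x (e i) := fun i =>
    (hq.continuous_fderiv (by norm_num)).clm_apply continuous_const
  have hint : ∀ i, Integrable fun x => ⟪e i, B x⟫ * fderiv ℝ q x (e i) := fun i =>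
    ((hcoord i).mul (hdq i)).integrable_of_hasCompactSupport
      (hqs.fderiv_apply (𝕜 := ℝ) (e i)).mul_left
  have hqint : Integrable q := hq.continuous.integrable_of_hasCompactSupport hqs
  have hparts : ∀ i, ∫ x, ⟪e i, B x⟫ * fderiv ℝ q x (e i) = -(⟪e i, B (e i)⟫ * ∫ x, q x) := by
    intro i
    have hder : ∀ x, fderiv ℝ (fun y => ⟪e i, B y⟫) x (e i) = ⟪e i, B (e i)⟫ := fun x => by
      have h : HasFDerivAt (fun y => ⟪e i, B y⟫) ((innerSL ℝ (e i)).comp B) x :=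
        ((innerSL ℝ (e i)).comp B).hasFDerivAt
      rw [h.fderiv]; simp
    rw [integral_mul_fderiv_eq_neg_fderiv_mul_of_integrable]
    · simp_rw [hder, integral_const_mul]
    · simpa only [hder] using hqint.const_mul _
    · exact hint i
    · exact ((hcoord i).mul hq.continuous).integrable_of_hasCompactSupport hqs.mul_left
    · exact fun x _ => ((innerSL ℝ (e i)).comp B).differentiableAt
    · exact fun x _ => hq.differentiable (by norm_num) x
  have hexpand : ∀ x, fderiv ℝ q x (B x) = ∑ i, ⟪e i, B x⟫ * fderiv ℝ q x (e i) := fun x => by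
    conv_lhs => rw [← e.sum_repr' (B x), map_sum]
    simp
  simp_rw [hexpand, integral_finsetSum _ fun i _ => hint i, hparts,
    LinearMap.trace_eq_sum_inner (B : E →ₗ[ℝ] E) e]
  simp [Finset.sum_mul]

lemma integral_inner_fderiv_apply_linear (B : E →L[ℝ] E) {p q : E → F} (hp : ContDiff ℝ 1 p)
    (hps : HasCompactSupport p) (hq : ContDiff ℝ 1 q) :
    ∫ x, ⟪fderiv ℝ p x (B x), q x⟫
      = -(∫ x, ⟪p x, fderiv ℝ q x (B x)⟫) - LinearMap.trace ℝ E B * ∫ x, ⟪p x, q x⟫ := by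
  have hB : ∀ {r : E → F}, ContDiff ℝ 1 r → Continuous fun x => fderiv ℝ r x (B x) := fun hr =>
    (hr.continuous_fderiv (by norm_num)).clm_apply B.continuous
  have hcs : HasCompactSupport fun x => ⟪p x, q x⟫ :=
    hps.mono fun x hx hpx => hx (by simp [hpx])
  have hleft : Integrable fun x => ⟪fderiv ℝ p x (B x), q x⟫ :=
    ((hB hp).inner hq.continuous).integrable_of_hasCompactSupport <|
      (hps.fderiv ℝ).mono fun x hx hpx => hx (by simp [hpx])
  have hright : Integrable fun x => ⟪p x, fderiv ℝ q x (B x)⟫ :=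
    (hp.continuous.inner (hB hq)).integrable_of_hasCompactSupport <|
      hps.mono fun x hx hpx => hx (by simp [hpx])
  have hmain := integral_fderiv_apply_linear B (hp.inner ℝ hq) hcs
  simp_rw [fun x => fderiv_inner_apply ℝ (hp.differentiable (by norm_num) x)
    (hq.differentiable (by norm_num) x) (B x)] at hmain
  rw [integral_add hright hleft] at hmain
  linarith

/-- The density `‖x‖⁻ⁿ`, `n = dim E`, of the dilation-invariant measure on `E ∖ {0}`. -/
def dilationDensity (x : E) : ℝ := (‖x‖ ^ 2) ^ (-(finrank ℝ E : ℝ) / 2)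

omit [FiniteDimensional ℝ E] [MeasurableSpace E] [BorelSpace E] in
lemma dilationDensity_nonneg (x : E) : 0 ≤ dilationDensity x := by
  unfold dilationDensity; positivity

omit [FiniteDimensional ℝ E] [MeasurableSpace E] [BorelSpace E] in
lemma contDiffAt_dilationDensity {x : E} (hx : x ≠ 0) {m : WithTop ℕ∞} :
    ContDiffAt ℝ m (dilationDensity : E → ℝ) x :=
  contDiffAt_norm_sq_rpow _ hx

omit [FiniteDimensional ℝ E] [MeasurableSpace E] [BorelSpace E] in
lemma hasFDerivAt_dilationDensity {x : E} (hx : x ≠ 0) :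
    HasFDerivAt (dilationDensity : E → ℝ)
      (-(finrank ℝ E * dilationDensity x / ‖x‖ ^ 2) • innerSL ℝ x) x := by
  have hx2 : ‖x‖ ^ 2 ≠ 0 := by positivity
  have h := hasFDerivAt_norm_sq_add_rpow (x := x) (a := 0) (-(finrank ℝ E : ℝ) / 2)
    (by simpa using hx2)
  simp only [add_zero, Real.rpow_sub_one hx2] at h
  refine h.congr_fderiv ?_
  congr 1
  simp only [dilationDensity]
  ring

omit [MeasurableSpace E] [BorelSpace E] in
lemma trace_eq_finrank_mul {B : E →L[ℝ] E} {t : ℝ} (hB : ∀ x, ⟪x, B x⟫ = t * ‖x‖ ^ 2) :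
    LinearMap.trace ℝ E B = finrank ℝ E * t := by
  simp [LinearMap.trace_eq_sum_inner (B : E →ₗ[ℝ] E) (stdOrthonormalBasis ℝ E), hB]

/-- The field `B` preserves the measure `‖x‖⁻ⁿ dx`, so no divergence term appears. -/
lemma integral_dilationDensity_inner_fderiv {B : E →L[ℝ] E} {t : ℝ}
    (hB : ∀ x, ⟪x, B x⟫ = t * ‖x‖ ^ 2) {p q : E → F} (hp : ContDiff ℝ 1 p)
    (hps : HasCompactSupport p) (h0 : 0 ∉ tsupport p) (hq : ContDiff ℝ 1 q) :
    ∫ x, dilationDensity x * ⟪fderiv ℝ p x (B x), q x⟫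
      = -∫ x, dilationDensity x * ⟪p x, fderiv ℝ q x (B x)⟫ := by
  set r : E → F := fun x => dilationDensity x • p x
  have hr : ContDiff ℝ 1 r := contDiff_of_forall_mem_tsupport fun x hx =>
    (contDiffAt_dilationDensity (by
      rintro rfl; exact h0 (tsupport_smul_subset_right _ _ hx))).smul hp.contDiffAt
  have hrs : HasCompactSupport r := hps.smul_left
  have hder : ∀ x, dilationDensity x • fderiv ℝ p x (B x)
      = fderiv ℝ r x (B x) + LinearMap.trace ℝ E B • r x := by
    intro x
    by_cases hx : x ∈ tsupport p
    · have hx0 : x ≠ 0 := by rintro rfl; exact h0 hx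
      have hrx : HasFDerivAt r _ x := (hasFDerivAt_dilationDensity hx0).smul
        (hp.differentiable (by norm_num) x).hasFDerivAt
      rw [hrx.fderiv, trace_eq_finrank_mul hB]
      simp only [r, _root_.add_apply, ContinuousLinearMap.smulRight_apply, _root_.smul_apply,
        innerSL_apply_apply, hB, smul_smul, smul_eq_mul, add_assoc, ← add_smul, left_eq_add]
      rw [smul_eq_zero_of_left]
      field_simp
      ring
    · have hxr : x ∉ tsupport r := fun h => hx (tsupport_smul_subset_right _ _ h)
      simp [r, fderiv_eq_zero_of_notMem_tsupport hx, fderiv_eq_zero_of_notMem_tsupport hxr,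
        image_eq_zero_of_notMem_tsupport hx]
  have hint₁ : Integrable fun x => ⟪fderiv ℝ r x (B x), q x⟫ :=
    (((hr.continuous_fderiv (by norm_num)).clm_apply B.continuous).inner
      hq.continuous).integrable_of_hasCompactSupport <|
      (hrs.fderiv ℝ).mono fun x hx hpx => hx (by simp [hpx])
  have hint₂ : Integrable fun x => ⟪r x, q x⟫ :=
    (hr.continuous.inner hq.continuous).integrable_of_hasCompactSupport <|
      hrs.mono fun x hx hpx => hx (by simp [hpx])
  calc ∫ x, dilationDensity x * ⟪fderiv ℝ p x (B x), q x⟫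
      = ∫ x, (⟪fderiv ℝ r x (B x), q x⟫ + LinearMap.trace ℝ E B * ⟪r x, q x⟫) := by
        simp_rw [← real_inner_smul_left, hder, inner_add_left]
    _ = -∫ x, ⟪r x, fderiv ℝ q x (B x)⟫ := by
        rw [integral_add hint₁ (hint₂.const_mul _), integral_const_mul,
          integral_inner_fderiv_apply_linear B hr hrs hq]
        ring
    _ = -∫ x, dilationDensity x * ⟪p x, fderiv ℝ q x (B x)⟫ := by
        simp_rw [r, real_inner_smul_left]

end LinearVectorFields

section CarlemanInequality

variable {E F : Type*} [NormedAddCommGroup E] [InnerProductSpace ℝ E] [FiniteDimensional ℝ E]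
  [MeasurableSpace E] [BorelSpace E] [NormedAddCommGroup F] [InnerProductSpace ℝ F]

lemma integrable_mul_of_compactSupport {w g : E → ℝ} {K : Set E} (hK : IsCompact K)
    (h0 : 0 ∉ K) (hw : ∀ x ≠ 0, ContinuousAt w x) (hg : Continuous g)
    (hgK : ∀ x ∉ K, g x = 0) : Integrable fun x => w x * g x := by
  have hgt : tsupport g ⊆ K :=
    closure_minimal (fun x hx => by_contra fun h => hx (hgK x h)) hK.isClosed
  refine Continuous.integrable_of_hasCompactSupport ?_ (HasCompactSupport.intro hK hgK).mul_left
  refine continuous_of_tsupport fun x hx => ?_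
  have hx0 : x ≠ 0 := by
    rintro rfl
    exact h0 (hgt (tsupport_mul_subset_right hx))
  exact (hw x hx0).mul hg.continuousAt

/-- Radial and rotational derivatives commute, so moving both of them across the inner product
gives back the same integral with the opposite sign. -/
lemma integral_dilationDensity_inner_radial_rotation {B : E →L[ℝ] E} (hB : ∀ x, ⟪x, B x⟫ = 0)
    {S : F →L[ℝ] F} (hS : ∀ u v, ⟪S u, v⟫ = -⟪u, S v⟫) {v : E → F} (hv : ContDiff ℝ 2 v)
    (hvs : HasCompactSupport v) (h0 : 0 ∉ tsupport v) :
    ∫ x, dilationDensity x * ⟪S (fderiv ℝ v x (B x)), fderiv ℝ v x x⟫ = 0 := by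
  have hv1 : ContDiff ℝ 1 v := hv.of_le (by norm_num)
  have hdv : ∀ A : E →L[ℝ] E, ContDiff ℝ 1 fun y => fderiv ℝ v y (A y) := fun A =>
    (hv.fderiv_right (m := 1) (by norm_num)).clm_apply A.contDiff
  have hSd : ∀ (A : E →L[ℝ] E) (x w : E), fderiv ℝ (fun y => S (fderiv ℝ v y (A y))) x w
      = S (fderiv ℝ (fun y => fderiv ℝ v y (A y)) x w) := fun A x w => by
    have h : HasFDerivAt (fun y => S (fderiv ℝ v y (A y))) _ x :=
      S.hasFDerivAt.comp x ((hdv A).differentiable (by norm_num) x).hasFDerivAt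
    rw [h.fderiv]; rfl
  have hradial := integral_dilationDensity_inner_fderiv (B := .id ℝ E) (t := 1) (by simp) hv1 hvs
    h0 (S.contDiff.comp (hdv B))
  have hrotation := integral_dilationDensity_inner_fderiv (t := 0) (by simpa using hB) hv1 hvs h0
    (S.contDiff.comp (hdv (.id ℝ E)))
  simp only [Function.comp_def, hSd] at hradial hrotation
  have hcomm := fderiv_fderiv_apply_comm B (.id ℝ E) (fun _ => rfl) hv
  simp only [ContinuousLinearMap.id_apply] at hradial hrotation hcomm
  simp_rw [hcomm] at hradial
  have hskew : ∀ x, ⟪fderiv ℝ v x (B x), S (fderiv ℝ v x x)⟫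
      = -⟪fderiv ℝ v x x, S (fderiv ℝ v x (B x))⟫ := fun x => by
    rw [← real_inner_comm, hS, real_inner_comm]
  simp_rw [hskew, mul_neg, integral_neg] at hrotation
  simp_rw [real_inner_comm]
  linarith

variable {c : E →L[ℝ] F →L[ℝ] F}

lemma IsCliffordMul.integral_dilationDensity_inner_of_contDiff_two (hc : IsCliffordMul c)
    {v : E → F} (hv : ContDiff ℝ 2 v) (hvs : HasCompactSupport v) (h0 : 0 ∉ tsupport v) :
    ∫ x, dilationDensity x
      * ⟪c x (diracSymbol c (fderiv ℝ v x)) + fderiv ℝ v x x, fderiv ℝ v x x⟫ = 0 := by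
  set e := stdOrthonormalBasis ℝ E
  set f : Fin (finrank ℝ E) → Fin (finrank ℝ E) → E → ℝ := fun i j x => dilationDensity x
    * ⟪c (e i) (c (e j) (fderiv ℝ v x (rotationField (e i) (e j) x))), fderiv ℝ v x x⟫ with hf
  have hdv : Continuous (fderiv ℝ v) := hv.continuous_fderiv (by norm_num)
  have hint : ∀ i j, Integrable (f i j) := fun i j => by
    refine integrable_mul_of_compactSupport hvs h0
      (fun x hx => (contDiffAt_dilationDensity (m := 0) hx).continuousAt) (by fun_prop)
      fun x hx => ?_
    simp [fderiv_eq_zero_of_notMem_tsupport hx]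
  have hzero : ∀ i j, ∫ x, f i j x = 0 := fun i j => by
    rcases eq_or_ne i j with rfl | hij
    · simp [hf, rotationField_apply]
    · exact integral_dilationDensity_inner_radial_rotation (inner_rotationField_self _ _)
        (S := (c (e i)).comp (c (e j)))
        (hc.inner_apply_comp_of_orthogonal (e.orthonormal.inner_eq_zero hij)) hv hvs h0
  have hsum : ∀ x, dilationDensity x
      * ⟪c x (diracSymbol c (fderiv ℝ v x)) + fderiv ℝ v x x, fderiv ℝ v x x⟫
      = 1 / 2 * ∑ i, ∑ j, f i j x := fun x => by
    simp only [hc.apply_diracSymbol_add e, real_inner_smul_left, sum_inner, hf, Finset.mul_sum]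
    exact Finset.sum_congr rfl fun i _ => Finset.sum_congr rfl fun j _ => by ring
  simp_rw [hsum, integral_const_mul,
    integral_finsetSum _ fun i _ => integrable_finsetSum _ fun j _ => hint i j,
    integral_finsetSum _ fun j _ => hint _ j, hzero]
  simp

open scoped Convolution in
lemma exists_contDiff_fderiv_approx [CompleteSpace F] {u : E → F} (hu : ContDiff ℝ 1 u)
    (hus : HasCompactSupport u) {δ : ℝ} (hδ : 0 < δ) {ε : ℝ} (hε : 0 < ε) :
    ∃ v : E → F, ContDiff ℝ ∞ v ∧ tsupport v ⊆ cthickening δ (tsupport u) ∧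
      ∀ x, ‖fderiv ℝ v x - fderiv ℝ u x‖ ≤ ε := by
  have hdu : Continuous (fderiv ℝ u) := hu.continuous_fderiv (by norm_num)
  obtain ⟨η, hη, hηε⟩ := Metric.uniformContinuous_iff.1
    ((hus.fderiv ℝ).uniformContinuous_of_continuous hdu) ε hε
  have hr : 0 < min η δ := lt_min hη hδ
  let φ : ContDiffBump (0 : E) := ⟨min η δ / 2, min η δ, half_pos hr, half_lt_self hr⟩
  set v := φ.normed volume ⋆[ContinuousLinearMap.lsmul ℝ ℝ, volume] u
  have hdv : ∀ x, HasFDerivAt v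
      ((φ.normed volume ⋆[ContinuousLinearMap.lsmul ℝ ℝ, volume] fderiv ℝ u) x) x := fun x =>
    hus.hasFDerivAt_convolution_right (ContinuousLinearMap.lsmul ℝ ℝ)
      φ.continuous_normed.locallyIntegrable hu x
  refine ⟨v, φ.hasCompactSupport_normed.contDiff_convolution_left _ φ.contDiff_normed
    hu.continuous.locallyIntegrable, closure_minimal ?_ isClosed_cthickening, fun x => ?_⟩
  · refine (support_convolution_subset _).trans ?_
    rintro _ ⟨a, ha, y, hy, rfl⟩
    rw [φ.support_normed_eq, mem_ball_zero_iff] at ha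
    exact mem_cthickening_of_dist_le _ y δ _ (subset_tsupport _ hy)
      (by simpa [dist_eq_norm] using ha.le.trans (min_le_right η δ))
  · rw [(hdv x).fderiv, ← dist_eq_norm]
    exact φ.dist_normed_convolution_le hdu.aestronglyMeasurable fun y hy =>
      (hηε ((mem_ball.1 hy).trans_le (min_le_left η δ))).le

lemma exists_seq_contDiff_fderiv_tendsto [CompleteSpace F] {u : E → F} (hu : ContDiff ℝ 1 u)
    (hus : HasCompactSupport u) {δ : ℝ} (hδ : 0 < δ) :
    ∃ v : ℕ → E → F, (∀ k, ContDiff ℝ ∞ (v k)) ∧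
      (∀ k, tsupport (v k) ⊆ cthickening δ (tsupport u)) ∧
      (∀ k x, ‖fderiv ℝ (v k) x‖ ≤ ‖fderiv ℝ u x‖ + 1) ∧
      ∀ x, Tendsto (fun k => fderiv ℝ (v k) x) atTop (𝓝 (fderiv ℝ u x)) := by
  choose v hv hvδ hvu using fun k : ℕ =>
    exists_contDiff_fderiv_approx hu hus hδ (Nat.one_div_pos_of_nat (α := ℝ) (n := k))
  refine ⟨v, hv, hvδ, fun k x => ?_, fun x => ?_⟩
  · have hk : (1 : ℝ) / (k + 1) ≤ 1 := by
      rw [div_le_one (by positivity)]; simp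
    linarith [norm_le_norm_add_norm_sub' (fderiv ℝ (v k) x) (fderiv ℝ u x), hvu k x]
  · exact tendsto_iff_norm_sub_tendsto_zero.2 (squeeze_zero (fun _ => norm_nonneg _)
      (fun k => hvu k x) tendsto_one_div_add_atTop_nhds_zero_nat)

omit [MeasurableSpace E] [BorelSpace E] in
lemma abs_inner_diracSymbol_add_le (c : E →L[ℝ] F →L[ℝ] F) (x : E) (L : E →L[ℝ] F) :
    |⟪c x (diracSymbol c L) + L x, L x⟫|
      ≤ (‖c‖ * ‖diracSymbol c‖ + 1) * ‖x‖ ^ 2 * ‖L‖ ^ 2 := by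
  have hsum : ‖c x (diracSymbol c L) + L x‖
      ≤ ‖c‖ * ‖x‖ * (‖diracSymbol c‖ * ‖L‖) + ‖L‖ * ‖x‖ :=
    norm_add_le_of_le ((c x).le_of_opNorm_le_of_le (c.le_opNorm x) ((diracSymbol c).le_opNorm L))
      (L.le_opNorm x)
  calc |⟪c x (diracSymbol c L) + L x, L x⟫|
      ≤ (‖c‖ * ‖x‖ * (‖diracSymbol c‖ * ‖L‖) + ‖L‖ * ‖x‖) * (‖L‖ * ‖x‖) :=
        (abs_real_inner_le_norm _ _).trans (by gcongr; exact L.le_opNorm x)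
    _ = (‖c‖ * ‖diracSymbol c‖ + 1) * ‖x‖ ^ 2 * ‖L‖ ^ 2 := by ring

/-- The Gamma operator is orthogonal to the radial derivative. -/
lemma IsCliffordMul.integral_dilationDensity_inner [CompleteSpace F] (hc : IsCliffordMul c)
    {v : E → F} (hv : ContDiff ℝ 1 v) (hvs : HasCompactSupport v) (h0 : 0 ∉ tsupport v) :
    ∫ x, dilationDensity x
      * ⟪c x (diracSymbol c (fderiv ℝ v x)) + fderiv ℝ v x x, fderiv ℝ v x x⟫ = 0 := by
  obtain ⟨δ, hδ, hδ0⟩ := hvs.isCompact.exists_cthickening_subset_open isOpen_compl_singleton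
    (Set.subset_compl_singleton_iff.2 h0)
  set K := cthickening δ (tsupport v)
  have hK : IsCompact K := hvs.isCompact.cthickening
  have h0K : (0 : E) ∉ K := Set.subset_compl_singleton_iff.1 hδ0
  obtain ⟨w, hw, hwK, hwv, hlim⟩ := exists_seq_contDiff_fderiv_tendsto hv hvs hδ
  have : Continuous (fderiv ℝ v) := hv.continuous_fderiv (by norm_num)
  have hdw : ∀ k, Continuous (fderiv ℝ (w k)) := fun k => (hw k).continuous_fderiv (by simp)
  have hdens : ContinuousOn (dilationDensity : E → ℝ) K := fun x hx =>
    (contDiffAt_dilationDensity (m := 0) (by rintro rfl; exact h0K hx)).continuousAt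
      |>.continuousWithinAt
  have hmeas : Measurable (dilationDensity : E → ℝ) := by
    unfold dilationDensity; fun_prop
  let b : E → ℝ := fun x => dilationDensity x
    * ((‖c‖ * ‖diracSymbol c‖ + 1) * ‖x‖ ^ 2 * (‖fderiv ℝ v x‖ + 1) ^ 2)
  refine tendsto_nhds_unique (tendsto_integral_of_dominated_convergence (K.indicator b)
    (F := fun k x => dilationDensity x * ⟪c x (diracSymbol c (fderiv ℝ (w k) x))
      + fderiv ℝ (w k) x x, fderiv ℝ (w k) x x⟫)
    (fun k => hmeas.aestronglyMeasurable.mul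
      (Continuous.aestronglyMeasurable (by have := hdw k; fun_prop))) ?_
    (fun k => Eventually.of_forall fun x => ?_) (Eventually.of_forall fun x => ?_)) ?_
  · rw [integrable_indicator_iff hK.measurableSet]
    exact (hdens.mul (by fun_prop : Continuous _).continuousOn).integrableOn_compact hK
  · by_cases hx : x ∈ K
    · rw [Set.indicator_of_mem hx, norm_mul, Real.norm_of_nonneg (dilationDensity_nonneg x)]
      refine mul_le_mul_of_nonneg_left ((abs_inner_diracSymbol_add_le _ _ _).trans ?_)
        (dilationDensity_nonneg x)
      gcongr
      exact hwv k x
    · simp [hx, fderiv_eq_zero_of_notMem_tsupport fun h => hx (hwK k h)]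
  · exact ((by fun_prop : Continuous fun L : E →L[ℝ] F => dilationDensity x
      * ⟪c x (diracSymbol c L) + L x, L x⟫).tendsto _).comp (hlim x)
  · refine tendsto_const_nhds.congr fun k => (hc.integral_dilationDensity_inner_of_contDiff_two
      (contDiff_infty.1 (hw k) 2) ?_ fun h => h0K (hwK k h)).symm
    exact hK.of_isClosed_subset (isClosed_tsupport _) (hwK k)

lemma integral_dilationDensity_radial_deriv_mul_norm_sq {κ : E → ℝ} (hκ : ContDiff ℝ 1 κ)
    {v : E → F} (hv : ContDiff ℝ 1 v) (hvs : HasCompactSupport v) (h0 : 0 ∉ tsupport v) :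
    ∫ x, dilationDensity x * (fderiv ℝ κ x x * ‖v x‖ ^ 2)
      = -2 * ∫ x, dilationDensity x * ⟪fderiv ℝ v x x, κ x • v x⟫ := by
  have hvc := hv.continuous
  have hκc := hκ.continuous
  have : Continuous (fderiv ℝ v) := hv.continuous_fderiv (by norm_num)
  have : Continuous (fderiv ℝ κ) := hκ.continuous_fderiv (by norm_num)
  have hv0 : ∀ x ∉ tsupport v, v x = 0 := fun x => image_eq_zero_of_notMem_tsupport
  have hint : ∀ g : E → ℝ, Continuous g → (∀ x ∉ tsupport v, g x = 0) →
      Integrable fun x => dilationDensity x * g x := fun g => integrable_mul_of_compactSupport hvs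
    h0 fun x hx => (contDiffAt_dilationDensity (m := 0) hx).continuousAt
  have hiκ := hint (fun x => ⟪fderiv ℝ v x x, κ x • v x⟫) (by fun_prop)
    fun x hx => by simp [hv0 x hx]
  have hidκ := hint (fun x => fderiv ℝ κ x x * ‖v x‖ ^ 2) (by fun_prop)
    fun x hx => by simp [hv0 x hx]
  have hder : ∀ x, dilationDensity x * ⟪v x, fderiv ℝ (fun y => κ y • v y) x x⟫
      = dilationDensity x * ⟪fderiv ℝ v x x, κ x • v x⟫
        + dilationDensity x * (fderiv ℝ κ x x * ‖v x‖ ^ 2) := fun x => by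
    rw [fderiv_fun_smul (hκ.differentiable (by norm_num) x) (hv.differentiable (by norm_num) x)]
    simp [inner_add_right, real_inner_smul_right, real_inner_comm (v x)]
    ring
  have hparts := integral_dilationDensity_inner_fderiv (B := .id ℝ E) (t := 1) (by simp) hv hvs h0
    (hκ.smul hv)
  simp only [ContinuousLinearMap.id_apply, Pi.smul_def', hder] at hparts
  rw [integral_add hiκ hidκ] at hparts
  linarith

/-- Expanding the square, the cross term of `κ v` with the radial derivative is integrated by parts
and the one with the Gamma operator vanishes. -/
lemma IsCliffordMul.integral_radial_deriv_mul_norm_sq_le [CompleteSpace F] (hc : IsCliffordMul c)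
    {κ : E → ℝ} (hκ : ContDiff ℝ 1 κ) {v : E → F} (hv : ContDiff ℝ 1 v)
    (hvs : HasCompactSupport v) (h0 : 0 ∉ tsupport v) :
    ∫ x, dilationDensity x * (fderiv ℝ κ x x * ‖v x‖ ^ 2)
      ≤ ∫ x, dilationDensity x * ‖c x (diracSymbol c (fderiv ℝ v x)) + κ x • v x‖ ^ 2 := by
  have hvc := hv.continuous
  have hκc := hκ.continuous
  have : Continuous (fderiv ℝ v) := hv.continuous_fderiv (by norm_num)
  have hint : ∀ g : E → ℝ, Continuous g → (∀ x ∉ tsupport v, g x = 0) →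
      Integrable fun x => dilationDensity x * g x := fun g => integrable_mul_of_compactSupport hvs
    h0 fun x hx => (contDiffAt_dilationDensity (m := 0) hx).continuousAt
  have hv0 : ∀ x ∉ tsupport v, v x = 0 := fun x => image_eq_zero_of_notMem_tsupport
  have hdv0 : ∀ x ∉ tsupport v, fderiv ℝ v x = 0 := fun x => fderiv_eq_zero_of_notMem_tsupport
  set G : E → F := fun x => c x (diracSymbol c (fderiv ℝ v x)) + fderiv ℝ v x x with hG
  have hGc : Continuous G := by fun_prop
  have hiκ := hint (fun x => ⟪fderiv ℝ v x x, κ x • v x⟫) (by fun_prop)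
    fun x hx => by simp [hv0 x hx]
  have hiG := hint (fun x => ⟪G x, fderiv ℝ v x x⟫) (by fun_prop)
    fun x hx => by simp [hdv0 x hx]
  calc ∫ x, dilationDensity x * (fderiv ℝ κ x x * ‖v x‖ ^ 2)
      = ∫ x, (-2 * (dilationDensity x * ⟪fderiv ℝ v x x, κ x • v x⟫)
          + -2 * (dilationDensity x * ⟪G x, fderiv ℝ v x x⟫)) := by
        rw [integral_add (hiκ.const_mul _) (hiG.const_mul _), integral_const_mul,
          integral_const_mul, hc.integral_dilationDensity_inner hv hvs h0,
          integral_dilationDensity_radial_deriv_mul_norm_sq hκ hv hvs h0]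
        ring
    _ ≤ ∫ x, dilationDensity x * ‖c x (diracSymbol c (fderiv ℝ v x)) + κ x • v x‖ ^ 2 := by
        refine integral_mono ((hiκ.const_mul _).add (hiG.const_mul _))
          (hint _ (by fun_prop) fun x hx => by simp [hv0 x hx, hdv0 x hx]) fun x => ?_
        have hsq : ‖c x (diracSymbol c (fderiv ℝ v x)) + κ x • v x‖ ^ 2
            = ‖G x + κ x • v x‖ ^ 2 + ‖fderiv ℝ v x x‖ ^ 2
              - 2 * (⟪fderiv ℝ v x x, κ x • v x⟫ + ⟪G x, fderiv ℝ v x x⟫) := by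
          rw [show c x (diracSymbol c (fderiv ℝ v x)) + κ x • v x
              = (G x + κ x • v x) - fderiv ℝ v x x by simp only [hG]; abel,
            norm_sub_sq_real, inner_add_left, real_inner_comm (κ x • v x)]
          ring
        have hnonneg : 0 ≤ dilationDensity x * (‖G x + κ x • v x‖ ^ 2 + ‖fderiv ℝ v x x‖ ^ 2) :=
          mul_nonneg (dilationDensity_nonneg x) (by positivity)
        simp only [hsq, mul_sub, mul_add] at hnonneg ⊢
        linarith

end CarlemanInequality

section CarlemanWeight

variable {E F : Type*} [NormedAddCommGroup E]

/-- The weight `‖x‖^(-2m) exp (l ‖x‖²)` of the Carleman inequality; at the origin it takes a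
junk value, which never matters as the functions it multiplies vanish there. -/
def carlemanWeight (m : ℕ) (l : ℝ) (x : E) : ℝ :=
  (‖x‖ ^ (2 * m))⁻¹ * Real.exp (l * ‖x‖ ^ 2)

lemma carlemanWeight_nonneg (m : ℕ) (l : ℝ) (x : E) : 0 ≤ carlemanWeight m l x := by
  unfold carlemanWeight; positivity

lemma continuousAt_carlemanWeight (m : ℕ) (l : ℝ) {x : E} (hx : x ≠ 0) :
    ContinuousAt (carlemanWeight m l) x := by
  have : ‖x‖ ^ (2 * m) ≠ 0 := by positivity
  unfold carlemanWeight
  fun_prop (disch := assumption)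

variable [InnerProductSpace ℝ E] [NormedAddCommGroup F] [InnerProductSpace ℝ F]

lemma hasFDerivAt_norm_sq_rpow_mul_exp (s l : ℝ) {x : E} (hx : x ≠ 0) :
    HasFDerivAt (fun y : E => (‖y‖ ^ 2) ^ s * Real.exp (l * ‖y‖ ^ 2))
      (((2 * s + 2 * l * ‖x‖ ^ 2) / ‖x‖ ^ 2 * ((‖x‖ ^ 2) ^ s * Real.exp (l * ‖x‖ ^ 2))) •
        innerSL ℝ x) x := by
  have hpow := hasFDerivAt_norm_sq_add_rpow (a := 0) s (x := x) (by simpa using hx)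
  have hexp := ((hasStrictFDerivAt_norm_sq x).hasFDerivAt.const_mul l).exp
  simp only [add_zero] at hpow
  refine (hpow.mul hexp).congr_fderiv ?_
  rw [Real.rpow_sub_one (by positivity)]
  match_scalars
  field_simp
  ring

lemma dilationDensity_mul_sq_mul_norm_sq (m : ℕ) (l : ℝ) {x : E} (hx : x ≠ 0) :
    dilationDensity x * ((‖x‖ ^ 2) ^ (((finrank ℝ E : ℝ) / 2 - 1 - m) / 2)
      * Real.exp (l / 2 * ‖x‖ ^ 2)) ^ 2 * ‖x‖ ^ 2 = carlemanWeight m l x := by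
  have hr : 0 < ‖x‖ ^ 2 := by positivity
  have hexp : Real.exp (l / 2 * ‖x‖ ^ 2) ^ 2 = Real.exp (l * ‖x‖ ^ 2) := by
    rw [← Real.exp_nat_mul]; ring_nf
  have hpow : dilationDensity x * ((‖x‖ ^ 2) ^ (((finrank ℝ E : ℝ) / 2 - 1 - m) / 2)) ^ 2 * ‖x‖ ^ 2
      = (‖x‖ ^ (2 * m))⁻¹ := by
    rw [dilationDensity, pow_mul ‖x‖, ← Real.rpow_natCast _ m, ← Real.rpow_neg hr.le,
      ← Real.rpow_natCast (_ ^ _) 2, ← Real.rpow_mul hr.le, ← Real.rpow_add hr,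
      ← Real.rpow_add_one hr.ne']
    congr 1
    push_cast; ring
  rw [carlemanWeight, ← hpow, ← hexp]; ring

variable [FiniteDimensional ℝ E]

lemma diracSymbol_smul_add_smulRight (c : E →L[ℝ] F →L[ℝ] F) (s : ℝ) (L : E →L[ℝ] F) (g : E)
    (u : F) : diracSymbol c (s • L + (innerSL ℝ g).smulRight u) = s • diracSymbol c L + c g u := by
  rw [map_add, map_smul, diracSymbol_smulRight]

lemma IsCliffordMul.norm_diracSymbol_fderiv_smul_le {c : E →L[ℝ] F →L[ℝ] F} (hc : IsCliffordMul c)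
    {χ : E → ℝ} {u : E → F} {x : E} (hχ : DifferentiableAt ℝ χ x) (hu : DifferentiableAt ℝ u x) :
    ‖diracSymbol c (fderiv ℝ (fun y => χ y • u y) x)‖
      ≤ |χ x| * ‖diracSymbol c (fderiv ℝ u x)‖ + ‖fderiv ℝ χ x‖ * ‖u x‖ := by
  obtain ⟨g, hg⟩ := (InnerProductSpace.toDual ℝ E).surjective (fderiv ℝ χ x)
  have hg' : fderiv ℝ χ x = innerSL ℝ g := hg.symm
  rw [fderiv_fun_smul hχ hu, hg', diracSymbol_smul_add_smulRight, innerSL_apply_norm]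
  calc _ ≤ ‖χ x • diracSymbol c (fderiv ℝ u x)‖ + ‖c g (u x)‖ := norm_add_le _ _
    _ = _ := by rw [norm_smul, hc.norm_apply, Real.norm_eq_abs]

variable {c : E →L[ℝ] F →L[ℝ] F}

lemma IsCliffordMul.apply_diracSymbol_fderiv_add (hc : IsCliffordMul c) (s l : ℝ) {u : E → F}
    {x : E} (hx : x ≠ 0) (hu : DifferentiableAt ℝ u x) :
    c x (diracSymbol c (fderiv ℝ
        (fun y => ((‖y‖ ^ 2) ^ s * Real.exp (l / 2 * ‖y‖ ^ 2)) • u y) x))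
      + (2 * s + l * ‖x‖ ^ 2) • ((‖x‖ ^ 2) ^ s * Real.exp (l / 2 * ‖x‖ ^ 2)) • u x
      = ((‖x‖ ^ 2) ^ s * Real.exp (l / 2 * ‖x‖ ^ 2)) • c x (diracSymbol c (fderiv ℝ u x)) := by
  have hx0 : ‖x‖ ≠ 0 := by simpa using hx
  have hW := hasFDerivAt_norm_sq_rpow_mul_exp s (l / 2) hx
  rw [fderiv_fun_smul hW.differentiableAt hu, hW.fderiv, ← map_smul, diracSymbol_smul_add_smulRight,
    map_add, map_smul (c x), map_smul c, _root_.smul_apply, map_smul (c x), hc.apply_apply_self]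
  match_scalars <;> field_simp
  ring

variable [MeasurableSpace E] [BorelSpace E]

/-- Conjugating the Dirac operator by `W = (‖x‖²)^s exp (l ‖x‖² / 2)` turns it into `D + κ`
with `κ = 2 s + l ‖x‖²`, whose radial derivative is `2 l ‖x‖²`. -/
lemma IsCliffordMul.carleman_of_notMem_tsupport [CompleteSpace F] (hc : IsCliffordMul c) (m : ℕ)
    (l : ℝ) {u : E → F} (hu : ContDiff ℝ 1 u) (hus : HasCompactSupport u) (h0 : 0 ∉ tsupport u) :
    2 * l * ∫ x, carlemanWeight m l x * ‖u x‖ ^ 2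
      ≤ ∫ x, carlemanWeight m l x * ‖diracSymbol c (fderiv ℝ u x)‖ ^ 2 := by
  set s : ℝ := ((finrank ℝ E : ℝ) / 2 - 1 - m) / 2
  set W : E → ℝ := fun x => (‖x‖ ^ 2) ^ s * Real.exp (l / 2 * ‖x‖ ^ 2)
  set κ : E → ℝ := fun x => 2 * s + l * ‖x‖ ^ 2
  have hWu : tsupport (fun x => W x • u x) ⊆ tsupport u := tsupport_smul_subset_right W u
  have hv : ContDiff ℝ 1 fun x => W x • u x := contDiff_of_forall_mem_tsupport fun x hx =>
    ((contDiffAt_norm_sq_rpow s fun h => h0 (h ▸ hWu hx)).mul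
      (contDiff_const.mul (contDiff_norm_sq ℝ)).exp.contDiffAt).smul hu.contDiffAt
  have hκ1 : ContDiff ℝ 1 κ := contDiff_const.add (contDiff_const.mul (contDiff_norm_sq ℝ))
  have hdκ : ∀ x, fderiv ℝ κ x x = 2 * l * ‖x‖ ^ 2 := fun x => by
    rw [(((hasStrictFDerivAt_norm_sq x).hasFDerivAt.const_mul l).const_add (2 * s)).fderiv]
    simp; ring
  have hleft : ∀ x, dilationDensity x * (fderiv ℝ κ x x * ‖W x • u x‖ ^ 2)
      = 2 * l * (carlemanWeight m l x * ‖u x‖ ^ 2) := fun x => by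
    rcases eq_or_ne x 0 with rfl | hx
    · simp [image_eq_zero_of_notMem_tsupport h0]
    · rw [hdκ, ← dilationDensity_mul_sq_mul_norm_sq m l hx, norm_smul, mul_pow, Real.norm_eq_abs,
        sq_abs]
      ring
  have hright : ∀ x, dilationDensity x
        * ‖c x (diracSymbol c (fderiv ℝ (fun y => W y • u y) x)) + κ x • W x • u x‖ ^ 2
      = carlemanWeight m l x * ‖diracSymbol c (fderiv ℝ u x)‖ ^ 2 := fun x => by
    rcases eq_or_ne x 0 with rfl | hx
    · simp [image_eq_zero_of_notMem_tsupport h0, fderiv_eq_zero_of_notMem_tsupport h0]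
    · rw [hc.apply_diracSymbol_fderiv_add s l hx (hu.differentiable (by norm_num) x),
        ← dilationDensity_mul_sq_mul_norm_sq m l hx, norm_smul, hc.norm_apply, mul_pow, mul_pow,
        Real.norm_eq_abs, sq_abs]
      ring
  have := hc.integral_radial_deriv_mul_norm_sq_le hκ1 hv
    (hus.of_isClosed_subset (isClosed_tsupport _) hWu) (fun h => h0 (hWu h))
  simpa only [hleft, hright, integral_const_mul] using this

end CarlemanWeight

section UniqueContinuation

/-- Vanishing to infinite order at `x`. -/
def IsFlatAt {V W : Type*} [NormedAddCommGroup V] [NormedAddCommGroup W] (u : V → W) (x : V) :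
    Prop :=
  ∀ k : ℕ, u =O[𝓝 x] fun y => ‖y - x‖ ^ k

lemma exists_contDiff_norm_mul_norm_fderiv_le (E : Type*) [NormedAddCommGroup E]
    [InnerProductSpace ℝ E] [FiniteDimensional ℝ E] :
    ∃ (χ : E → ℝ) (A : ℝ), ContDiff ℝ ∞ χ ∧ (∀ x, ‖x‖ ≤ 1 → χ x = 0) ∧ (∀ x, 2 ≤ ‖x‖ → χ x = 1) ∧
      (∀ x, |χ x| ≤ 1) ∧ ∀ x, ‖x‖ * ‖fderiv ℝ χ x‖ ≤ A := by
  let f : ContDiffBump (0 : E) := ⟨1, 2, one_pos, one_lt_two⟩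
  have hf : ContDiff ℝ ∞ f := f.contDiff
  have hdf : Continuous (fderiv ℝ f) := hf.continuous_fderiv (by simp)
  have hsupp : HasCompactSupport fun x => ‖x‖ * ‖fderiv ℝ f x‖ :=
    (f.hasCompactSupport.fderiv ℝ).norm.mul_left
  obtain ⟨A, hA⟩ := hsupp.exists_bound_of_continuous (continuous_norm.mul hdf.norm)
  refine ⟨fun x => 1 - f x, A, contDiff_const.sub hf, fun x hx => ?_, fun x hx => ?_, fun x => ?_,
    fun x => ?_⟩
  · simp [f.one_of_mem_closedBall (x := x) (by simpa using hx)]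
  · simp [f.zero_of_le_dist (x := x) (by simpa using hx)]
  · rw [abs_le]
    constructor <;> linarith [f.nonneg (x := x), f.le_one (x := x)]
  · rw [fderiv_const_sub, norm_neg]
    exact (le_abs_self _).trans (hA x)

lemma integrable_of_continuousOn_compl_singleton {E : Type*} [NormedAddCommGroup E]
    [MeasurableSpace E] [BorelSpace E] (μ : Measure E) [IsFiniteMeasureOnCompacts μ] {f : E → ℝ}
    {a : E} {K : Set E} (hf : ContinuousOn f {a}ᶜ) (ha : f =O[𝓝 a] fun _ => (1 : ℝ))
    (hK : IsCompact K) (hfK : ∀ x ∉ K, f x = 0) : Integrable f μ := by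
  obtain ⟨M, hM⟩ := ha.bound
  obtain ⟨δ, hδ, hball⟩ := Metric.eventually_nhds_iff_ball.1 hM
  obtain ⟨M', hM'⟩ := (hK.diff isOpen_ball).exists_bound_of_continuousOn
    (hf.mono fun x hx h => hx.2 (by simpa [Set.mem_singleton_iff.1 h] using hδ) :
      ContinuousOn f (K \ ball a δ))
  refine (integrableOn_iff_integrable_of_support_subset
    fun x hx => by_contra fun h => hx (hfK x h)).1 ?_
  refine Measure.integrableOn_of_bounded (M := max M M') hK.measure_lt_top.ne
    (measurable_of_continuousOn_compl_singleton a hf).aestronglyMeasurable ?_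
  filter_upwards [ae_restrict_mem hK.measurableSet] with x hx
  by_cases hxa : x ∈ ball a δ
  · exact (by simpa using hball x hxa : ‖f x‖ ≤ M).trans (le_max_left _ _)
  · exact (hM' x ⟨hx, hxa⟩).trans (le_max_right _ _)

lemma IsFlatAt.eq_zero {V W : Type*} [NormedAddCommGroup V] [NormedAddCommGroup W] {u : V → W}
    {x : V} (hu : IsFlatAt u x) : u x = 0 := by
  obtain ⟨M, hM⟩ := (hu 1).bound
  simpa using hM.self_of_nhds

lemma isFlatAt_of_eventuallyEq_zero {V W : Type*} [NormedAddCommGroup V] [NormedAddCommGroup W]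
    {u : V → W} {x : V} (hu : u =ᶠ[𝓝 x] 0) : IsFlatAt u x :=
  fun _ => hu.trans_isBigO (Asymptotics.isBigO_zero _ _)

lemma IsFlatAt.div_norm {V W : Type*} [NormedAddCommGroup V] [NormedAddCommGroup W] {u : V → W}
    (hu : IsFlatAt u 0) :
    IsFlatAt (fun x => ‖u x‖ / ‖x‖) 0 := fun k => by
  obtain ⟨M, hM0, hM⟩ := (hu (k + 1)).exists_nonneg
  refine .of_bound M (hM.bound.mono fun x hx => ?_)
  rcases eq_or_ne x 0 with rfl | hx0
  · simp only [hu.eq_zero, norm_zero, zero_div]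
    positivity
  · rw [norm_div, norm_norm, norm_norm, div_le_iff₀ (by positivity)]
    simpa [pow_succ, mul_assoc] using hx

variable {E F : Type*} [NormedAddCommGroup E] [InnerProductSpace ℝ E] [FiniteDimensional ℝ E]
  [NormedAddCommGroup F] [InnerProductSpace ℝ F] {c : E →L[ℝ] F →L[ℝ] F}

/-- The cutoffs are dilates of a single one, so the gradient terms are `O(‖u x‖ / ‖x‖)` uniformly
in the dilation parameter. -/
lemma IsCliffordMul.exists_seq_zero_notMem_tsupport (hc : IsCliffordMul c) {u : E → F}
    (hu : ContDiff ℝ 1 u) (hus : HasCompactSupport u) :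
    ∃ (w : ℕ → E → F) (A : ℝ),
      (∀ k, ContDiff ℝ 1 (w k) ∧ HasCompactSupport (w k) ∧ 0 ∉ tsupport (w k)) ∧
      (∀ x ≠ 0, ∀ᶠ k in atTop, w k =ᶠ[𝓝 x] u) ∧ (∀ k x, ‖w k x‖ ≤ ‖u x‖) ∧
      ∀ k, ∀ x ≠ 0, ‖diracSymbol c (fderiv ℝ (w k) x)‖
        ≤ ‖diracSymbol c (fderiv ℝ u x)‖ + A * (‖u x‖ / ‖x‖) := by
  obtain ⟨χ, A, hχ, hχ0, hχ1, hχ_le, hdχ⟩ := exists_contDiff_norm_mul_norm_fderiv_le E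
  have hχk : ∀ k : ℕ, ContDiff ℝ 1 fun x : E => χ ((k : ℝ) • x) := fun k =>
    (hχ.of_le (by simp)).comp (contDiff_const_smul _)
  refine ⟨fun k x => χ ((k : ℝ) • x) • u x, A, fun k => ⟨(hχk k).smul hu, hus.smul_left, ?_⟩,
    fun x hx => ?_, fun k x => ?_, fun k x hx => ?_⟩
  · rw [notMem_tsupport_iff_eventuallyEq]
    have hnear : ∀ᶠ x : E in 𝓝 0, ‖(k : ℝ) • x‖ < 1 :=
      (by fun_prop : Continuous fun x : E => ‖(k : ℝ) • x‖).continuousAt.eventually_lt_const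
        (by simp)
    filter_upwards [hnear] with x hx
    simp [hχ0 _ hx.le]
  · have hlarge : ∀ᶠ k : ℕ in atTop, 2 < k * ‖x‖ :=
      (tendsto_natCast_atTop_atTop.atTop_mul_const (norm_pos_iff.2 hx)).eventually_gt_atTop 2
    filter_upwards [hlarge] with k hk
    filter_upwards [(by fun_prop : Continuous fun y : E => k * ‖y‖).continuousAt.eventually_const_lt
      hk] with y hy
    simp [hχ1 ((k : ℝ) • y) (by simpa [norm_smul] using hy.le)]
  · rw [norm_smul]
    exact mul_le_of_le_one_left (norm_nonneg _) (hχ_le _)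
  · have hgrad : ‖fderiv ℝ (fun y => χ ((k : ℝ) • y)) x‖ ≤ A / ‖x‖ := by
      rw [fderiv_comp_smul, norm_smul, le_div_iff₀ (norm_pos_iff.2 hx)]
      simpa [norm_smul, mul_comm, mul_left_comm, mul_assoc] using hdχ ((k : ℝ) • x)
    calc _ ≤ |χ ((k : ℝ) • x)| * ‖diracSymbol c (fderiv ℝ u x)‖
          + ‖fderiv ℝ (fun y => χ ((k : ℝ) • y)) x‖ * ‖u x‖ :=
        hc.norm_diracSymbol_fderiv_smul_le ((hχk k).differentiable (by norm_num) x)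
          (hu.differentiable (by norm_num) x)
      _ ≤ 1 * ‖diracSymbol c (fderiv ℝ u x)‖ + A / ‖x‖ * ‖u x‖ := by
        gcongr; exact hχ_le _
      _ = _ := by ring

lemma exists_contDiff_hasCompactSupport_eventuallyEq {ψ : E → F} {x : E} {R : ℝ} (hR : 0 < R)
    (hψ : ContDiffOn ℝ 1 ψ (ball x R)) :
    ∃ u : E → F, ContDiff ℝ 1 u ∧ HasCompactSupport u ∧
      ∀ z, ‖z‖ < R / 2 → u =ᶠ[𝓝 z] fun z => ψ (x + z) := by
  let η : ContDiffBump (0 : E) := ⟨R / 2, 3 * R / 4, by positivity, by linarith⟩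
  refine ⟨fun z => η z • ψ (x + z), contDiff_of_forall_mem_tsupport fun z hz => ?_,
    η.hasCompactSupport.smul_right, fun z hz => ?_⟩
  · have hzη : z ∈ tsupport η := tsupport_smul_subset_left _ _ hz
    rw [η.tsupport_eq, mem_closedBall_zero_iff] at hzη
    have hηR : η.rOut = 3 * R / 4 := rfl
    have hzR : x + z ∈ ball x R := by
      rw [mem_ball_iff_norm, add_sub_cancel_left]
      linarith
    exact η.contDiff.contDiffAt.smul ((hψ.contDiffAt (isOpen_ball.mem_nhds hzR)).comp z
      (contDiff_const.add contDiff_id).contDiffAt)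
  · filter_upwards [continuous_norm.continuousAt.eventually_lt_const hz] with y hy
    rw [η.one_of_mem_closedBall (by simpa using hy.le), one_smul]

variable [MeasurableSpace E] [BorelSpace E]

lemma integrable_carlemanWeight_mul_sq (m : ℕ) (l : ℝ) {g : E → ℝ} {K : Set E}
    (hg : ContinuousOn g {0}ᶜ) (hflat : IsFlatAt g 0) (hK : IsCompact K) (hgK : ∀ x ∉ K, g x = 0) :
    Integrable fun x => carlemanWeight m l x * g x ^ 2 := by
  refine integrable_of_continuousOn_compl_singleton volume (a := 0) (ContinuousOn.mul
    (fun x hx => (continuousAt_carlemanWeight m l hx).continuousWithinAt) (hg.pow 2)) ?_ hK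
    fun x hx => by simp [hgK x hx]
  have hweight : (fun x : E => carlemanWeight m l x * (‖x - 0‖ ^ m) ^ 2) =O[𝓝 0]
      fun x => Real.exp (l * ‖x‖ ^ 2) := .of_bound 1 <| .of_forall fun x => by
    rw [sub_zero, Real.norm_of_nonneg (mul_nonneg (carlemanWeight_nonneg m l x) (by positivity)),
      Real.norm_of_nonneg (Real.exp_nonneg _), one_mul, carlemanWeight, ← pow_mul, mul_comm m 2,
      mul_right_comm]
    exact mul_le_of_le_one_left (Real.exp_nonneg _) inv_mul_le_one
  have hexp : Continuous fun x : E => Real.exp (l * ‖x‖ ^ 2) := by fun_prop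
  exact (((Asymptotics.isBigO_refl _ _).mul ((hflat m).pow 2)).trans hweight).trans
    ((hexp.tendsto 0).isBigO_one ℝ)

lemma tendsto_integral_carlemanWeight_mul_sq (m : ℕ) (l : ℝ) {f : ℕ → E → ℝ} {g G : E → ℝ}
    {K : Set E} (hf : ∀ k, Continuous (f k)) (hG : ContinuousOn G {0}ᶜ) (hflat : IsFlatAt G 0)
    (hK : IsCompact K) (hGK : ∀ x ∉ K, G x = 0) (hfG : ∀ k x, |f k x| ≤ G x)
    (hlim : ∀ x, ∀ᶠ k in atTop, f k x = g x) :
    Tendsto (fun k => ∫ x, carlemanWeight m l x * f k x ^ 2) atTop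
      (𝓝 (∫ x, carlemanWeight m l x * g x ^ 2)) := by
  have hω : Measurable (carlemanWeight m l : E → ℝ) := by unfold carlemanWeight; fun_prop
  refine tendsto_integral_of_dominated_convergence (fun x => carlemanWeight m l x * G x ^ 2)
    (fun k => (hω.mul ((hf k).pow 2).measurable).aestronglyMeasurable)
    (integrable_carlemanWeight_mul_sq m l hG hflat hK hGK) (fun k => .of_forall fun x => ?_)
    (.of_forall fun x => ?_)
  · have hnn := carlemanWeight_nonneg m l x
    rw [Real.norm_of_nonneg (by positivity), ← sq_abs (f k x)]
    gcongr
    exact hfG k x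
  · exact tendsto_nhds_of_eventually_eq ((hlim x).mono fun k hk => by rw [hk])

lemma IsCliffordMul.carleman_of_isFlatAt [CompleteSpace F] (hc : IsCliffordMul c) (m : ℕ) (l : ℝ)
    {u : E → F} (hu : ContDiff ℝ 1 u) (hus : HasCompactSupport u) (h0 : IsFlatAt u 0)
    (hD0 : IsFlatAt (fun x => diracSymbol c (fderiv ℝ u x)) 0) :
    2 * l * ∫ x, carlemanWeight m l x * ‖u x‖ ^ 2
      ≤ ∫ x, carlemanWeight m l x * ‖diracSymbol c (fderiv ℝ u x)‖ ^ 2 := by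
  obtain ⟨w, A, hw, hwu, hw_le, hDw_le⟩ := hc.exists_seq_zero_notMem_tsupport hu hus
  have huc := hu.continuous
  have : Continuous (fderiv ℝ u) := hu.continuous_fderiv (by norm_num)
  have hdw : ∀ k, Continuous (fderiv ℝ (w k)) := fun k => (hw k).1.continuous_fderiv (by norm_num)
  have hw0 : ∀ k, w k 0 = 0 := fun k => image_eq_zero_of_notMem_tsupport (hw k).2.2
  have hdw0 : ∀ k, fderiv ℝ (w k) 0 = 0 := fun k => fderiv_eq_zero_of_notMem_tsupport (hw k).2.2
  have hu' : ∀ x ∉ tsupport u, u x = 0 := fun x => image_eq_zero_of_notMem_tsupport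
  have hdu' : ∀ x ∉ tsupport u, fderiv ℝ u x = 0 := fun x => fderiv_eq_zero_of_notMem_tsupport
  have hleft := tendsto_integral_carlemanWeight_mul_sq m l (f := fun k x => ‖w k x‖)
    (g := fun x => ‖u x‖) (G := fun x => ‖u x‖) (fun k => (hw k).1.continuous.norm)
    huc.norm.continuousOn (fun k => (h0 k).norm_left) hus (fun x hx => by simp [hu' x hx])
    (fun k x => by simpa using hw_le k x) fun x => by
      rcases eq_or_ne x 0 with rfl | hx
      · simp [hw0, h0.eq_zero]
      · exact (hwu x hx).mono fun k hk => by rw [hk.self_of_nhds]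
  have hright := tendsto_integral_carlemanWeight_mul_sq m l
    (f := fun k x => ‖diracSymbol c (fderiv ℝ (w k) x)‖)
    (g := fun x => ‖diracSymbol c (fderiv ℝ u x)‖)
    (G := fun x => ‖diracSymbol c (fderiv ℝ u x)‖ + A * (‖u x‖ / ‖x‖))
    (fun k => by have := hdw k; fun_prop)
    (by
      have hdiv := huc.norm.continuousOn.div continuous_norm.continuousOn
        (s := {0}ᶜ) fun x hx => norm_ne_zero_iff.2 hx
      exact (by fun_prop : Continuous fun x => ‖diracSymbol c (fderiv ℝ u x)‖).continuousOn.add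
        (continuousOn_const.mul hdiv))
    (fun k => (hD0 k).norm_left.add ((h0.div_norm k).const_mul_left A)) hus
    (fun x hx => by simp [hu' x hx, hdu' x hx])
    (fun k x => by
      rcases eq_or_ne x 0 with rfl | hx
      · simp [hdw0, h0.eq_zero]
      · simpa using hDw_le k x hx)
    fun x => by
      rcases eq_or_ne x 0 with rfl | hx
      · simp [hdw0, hD0.eq_zero]
      · exact (hwu x hx).mono fun k hk => by rw [hk.fderiv_eq]
  exact le_of_tendsto_of_tendsto' (hleft.const_mul (2 * l)) hright
    fun k => hc.carleman_of_notMem_tsupport m l (hw k).1 (hw k).2.1 (hw k).2.2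

lemma IsCliffordMul.integral_carlemanWeight_mul_norm_sq_le [CompleteSpace F] (hc : IsCliffordMul c)
    {u : E → F} (hu : ContDiff ℝ 1 u) (hus : HasCompactSupport u) (h0 : IsFlatAt u 0) {ρ C : ℝ}
    (hρ : 0 < ρ) (hD : ∀ x, ‖x‖ < ρ → ‖diracSymbol c (fderiv ℝ u x)‖ ≤ C * ‖u x‖) (m : ℕ) :
    ∫ x, carlemanWeight m ((C ^ 2 + 1) / 2) x * ‖u x‖ ^ 2 ≤ (ρ ^ (2 * m))⁻¹
      * ∫ x, Real.exp ((C ^ 2 + 1) / 2 * ‖x‖ ^ 2) * ‖diracSymbol c (fderiv ℝ u x)‖ ^ 2 := by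
  set l := (C ^ 2 + 1) / 2 with hl
  have huc := hu.continuous
  have : Continuous (fderiv ℝ u) := hu.continuous_fderiv (by norm_num)
  have hu' : ∀ x ∉ tsupport u, u x = 0 := fun x => image_eq_zero_of_notMem_tsupport
  have hdu' : ∀ x ∉ tsupport u, fderiv ℝ u x = 0 := fun x => fderiv_eq_zero_of_notMem_tsupport
  have hDflat : IsFlatAt (fun x => diracSymbol c (fderiv ℝ u x)) 0 := fun k =>
    (Asymptotics.IsBigO.of_bound C <| by
      filter_upwards [ball_mem_nhds (0 : E) hρ] with x hx
      exact hD x (by simpa using hx)).trans (h0 k)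
  have hint := integrable_carlemanWeight_mul_sq m l huc.norm.continuousOn
    (fun k => (h0 k).norm_left) hus fun x hx => by simp [hu' x hx]
  have hintD := integrable_carlemanWeight_mul_sq m l (g := fun x => ‖diracSymbol c (fderiv ℝ u x)‖)
    (by fun_prop) (fun k => (hDflat k).norm_left) hus fun x hx => by simp [hdu' x hx]
  have hintQ : Integrable fun x => Real.exp (l * ‖x‖ ^ 2) * ‖diracSymbol c (fderiv ℝ u x)‖ ^ 2 :=
    Continuous.integrable_of_hasCompactSupport (by fun_prop)
      (.intro hus fun x hx => by simp [hdu' x hx])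
  have hpt : ∀ x, carlemanWeight m l x * ‖diracSymbol c (fderiv ℝ u x)‖ ^ 2
      ≤ C ^ 2 * (carlemanWeight m l x * ‖u x‖ ^ 2) + (ρ ^ (2 * m))⁻¹
        * (Real.exp (l * ‖x‖ ^ 2) * ‖diracSymbol c (fderiv ℝ u x)‖ ^ 2) := fun x => by
    have hω := carlemanWeight_nonneg m l x
    rcases lt_or_ge ‖x‖ ρ with hx | hx
    · calc _ ≤ carlemanWeight m l x * (C * ‖u x‖) ^ 2 := by gcongr; exact hD x hx
        _ = C ^ 2 * (carlemanWeight m l x * ‖u x‖ ^ 2) := by ring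
        _ ≤ _ := le_add_of_nonneg_right (by positivity)
    · calc _ ≤ (ρ ^ (2 * m))⁻¹ * Real.exp (l * ‖x‖ ^ 2) * ‖diracSymbol c (fderiv ℝ u x)‖ ^ 2 := by
            unfold carlemanWeight; gcongr
        _ ≤ _ := by rw [mul_assoc]; exact le_add_of_nonneg_left (by positivity)
  have hmono := integral_mono hintD ((hint.const_mul _).add (hintQ.const_mul _)) hpt
  simp only [Pi.add_apply] at hmono
  rw [integral_add (hint.const_mul _) (hintQ.const_mul _), integral_const_mul,
    integral_const_mul] at hmono
  have hcarleman := hc.carleman_of_isFlatAt m l hu hus h0 hDflat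
  rw [show 2 * l = C ^ 2 + 1 by rw [hl]; ring] at hcarleman
  linarith

lemma setIntegral_exp_mul_sq_le (m : ℕ) (l : ℝ) {r : ℝ} (hr : 0 ≤ r) {g : E → ℝ}
    (hg : Continuous g) (h0 : IsFlatAt g 0) (hgs : HasCompactSupport g) :
    ∫ x in ball 0 r, Real.exp (l * ‖x‖ ^ 2) * g x ^ 2
      ≤ r ^ (2 * m) * ∫ x, carlemanWeight m l x * g x ^ 2 := by
  have hg' : ∀ x ∉ tsupport g, g x = 0 := fun x => image_eq_zero_of_notMem_tsupport
  have hint : Integrable fun x => Real.exp (l * ‖x‖ ^ 2) * g x ^ 2 :=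
    Continuous.integrable_of_hasCompactSupport (by fun_prop)
      (.intro hgs fun x hx => by simp [hg' x hx])
  have hintω := (integrable_carlemanWeight_mul_sq m l hg.continuousOn h0 hgs hg').const_mul
    (r ^ (2 * m))
  calc ∫ x in ball 0 r, Real.exp (l * ‖x‖ ^ 2) * g x ^ 2
      ≤ ∫ x in ball 0 r, r ^ (2 * m) * (carlemanWeight m l x * g x ^ 2) := by
        refine setIntegral_mono_on hint.integrableOn hintω.integrableOn measurableSet_ball
          fun x hx => ?_
        rcases eq_or_ne x 0 with rfl | hx0
        · simp [h0.eq_zero]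
        · have hle : 1 ≤ r ^ (2 * m) * (‖x‖ ^ (2 * m))⁻¹ := by
            rw [← div_eq_mul_inv, one_le_div (by positivity)]
            gcongr
            exact (mem_ball_zero_iff.1 hx).le
          rw [carlemanWeight, mul_assoc, ← mul_assoc (r ^ _)]
          exact le_mul_of_one_le_left (by positivity) hle
    _ ≤ ∫ x, r ^ (2 * m) * (carlemanWeight m l x * g x ^ 2) :=
        setIntegral_le_integral hintω <| .of_forall fun x =>
          mul_nonneg (by positivity) (mul_nonneg (carlemanWeight_nonneg m l x) (sq_nonneg _))
    _ = r ^ (2 * m) * ∫ x, carlemanWeight m l x * g x ^ 2 := integral_const_mul _ _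

/-- As `m → ∞` the Carleman weight inside a smaller ball exceeds the one outside `ball 0 ρ` by
an arbitrarily large factor. -/
lemma IsCliffordMul.eq_zero_of_isFlatAt_zero [CompleteSpace F] (hc : IsCliffordMul c)
    {u : E → F} (hu : ContDiff ℝ 1 u) (hus : HasCompactSupport u) (h0 : IsFlatAt u 0) {ρ C : ℝ}
    (hρ : 0 < ρ) (hD : ∀ x, ‖x‖ < ρ → ‖diracSymbol c (fderiv ℝ u x)‖ ≤ C * ‖u x‖) {x : E}
    (hx : ‖x‖ < ρ) : u x = 0 := by
  have huc := hu.continuous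
  set l := (C ^ 2 + 1) / 2
  obtain ⟨r, hxr, hrρ⟩ := exists_between hx
  have hr : 0 < r := (norm_nonneg x).trans_lt hxr
  have hint : Integrable fun x => Real.exp (l * ‖x‖ ^ 2) * ‖u x‖ ^ 2 :=
    Continuous.integrable_of_hasCompactSupport (by fun_prop)
      (.intro hus fun x hx => by simp [image_eq_zero_of_notMem_tsupport hx])
  set Q := ∫ x, Real.exp (l * ‖x‖ ^ 2) * ‖diracSymbol c (fderiv ℝ u x)‖ ^ 2
  have hbound : ∀ m : ℕ, ∫ x in ball 0 r, Real.exp (l * ‖x‖ ^ 2) * ‖u x‖ ^ 2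
      ≤ ((r / ρ) ^ 2) ^ m * Q := fun m =>
    calc ∫ x in ball 0 r, Real.exp (l * ‖x‖ ^ 2) * ‖u x‖ ^ 2
        ≤ r ^ (2 * m) * ∫ x, carlemanWeight m l x * ‖u x‖ ^ 2 :=
          setIntegral_exp_mul_sq_le m l hr.le huc.norm (fun k => (h0 k).norm_left) hus.norm
      _ ≤ r ^ (2 * m) * ((ρ ^ (2 * m))⁻¹ * Q) := by
          gcongr
          exact hc.integral_carlemanWeight_mul_norm_sq_le hu hus h0 hρ hD m
      _ = ((r / ρ) ^ 2) ^ m * Q := by rw [← pow_mul, div_pow]; ring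
  have hlim : Tendsto (fun m : ℕ => ((r / ρ) ^ 2) ^ m * Q) atTop (𝓝 0) := by
    simpa using (tendsto_pow_atTop_nhds_zero_of_lt_one (by positivity)
      (pow_lt_one₀ (by positivity) ((div_lt_one hρ).2 hrρ) two_ne_zero)).mul_const Q
  have hzero : ∫ x in ball 0 r, Real.exp (l * ‖x‖ ^ 2) * ‖u x‖ ^ 2 = 0 :=
    le_antisymm (ge_of_tendsto' hlim hbound)
      (setIntegral_nonneg measurableSet_ball fun x _ => by positivity)
  rw [setIntegral_eq_zero_iff_of_nonneg_ae (.of_forall fun x => by positivity) hint.integrableOn]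
    at hzero
  have heq := Measure.eqOn_open_of_ae_eq hzero isOpen_ball
    (by fun_prop) continuousOn_const (mem_ball_zero_iff.2 hxr)
  simpa [Real.exp_ne_zero] using heq

lemma IsCliffordMul.eq_zero_of_isFlatAt_of_mem_ball [CompleteSpace F] (hc : IsCliffordMul c)
    {ψ : E → F} {x : E} {R C : ℝ} (hψ : ContDiffOn ℝ 1 ψ (ball x R))
    (hD : ∀ y ∈ ball x R, ‖diracSymbol c (fderiv ℝ ψ y)‖ ≤ C * ‖ψ y‖) (hflat : IsFlatAt ψ x) {y : E}
    (hy : y ∈ ball x (R / 2)) : ψ y = 0 := by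
  have hR : 0 < R := by linarith [pos_of_mem_ball hy]
  obtain ⟨u, hu, hus, hu_eq⟩ := exists_contDiff_hasCompactSupport_eventuallyEq hR hψ
  have hu0 : IsFlatAt u 0 := fun k => by
    have hshift : Tendsto (fun z => x + z) (𝓝 0) (𝓝 x) := by
      simpa using (continuous_const_add x).tendsto 0
    refine ((hflat k).comp_tendsto hshift).congr' (hu_eq 0 (by simpa using hR)).symm ?_
    exact .of_forall fun z => by simp
  have hDu : ∀ z, ‖z‖ < R / 2 → ‖diracSymbol c (fderiv ℝ u z)‖ ≤ C * ‖u z‖ := fun z hz => by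
    rw [(hu_eq z hz).fderiv_eq, (hu_eq z hz).self_of_nhds, fderiv_comp_add_left]
    exact hD _ (by rw [mem_ball_iff_norm, add_sub_cancel_left]; linarith)
  have hz : ‖y - x‖ < R / 2 := mem_ball_iff_norm.1 hy
  have huz := hc.eq_zero_of_isFlatAt_zero hu hus hu0 (half_pos hR) hDu hz
  simpa [(hu_eq _ hz).self_of_nhds] using huz

lemma IsCliffordMul.eqOn_zero_of_isFlatAt [CompleteSpace F] (hc : IsCliffordMul c) {Ω : Set E}
    (hΩ : IsOpen Ω) (hΩc : IsPreconnected Ω) {ψ : E → F} (hψ : ContDiffOn ℝ 1 ψ Ω)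
    (hD : ∀ x ∈ Ω, (fun y => diracSymbol c (fderiv ℝ ψ y)) =O[𝓝 x] ψ) {x₀ : E}
    (hx₀ : x₀ ∈ Ω) (hflat : IsFlatAt ψ x₀) : Set.EqOn ψ 0 Ω := by
  have hlocal : ∀ x ∈ Ω, ∃ R > 0, ∃ M, ContDiffOn ℝ 1 ψ (ball x R) ∧
      ∀ y ∈ ball x R, ‖diracSymbol c (fderiv ℝ ψ y)‖ ≤ M * ‖ψ y‖ := fun x hx => by
    obtain ⟨M, hM⟩ := (hD x hx).bound
    obtain ⟨R, hR, h⟩ := Metric.eventually_nhds_iff_ball.1 (hM.and (hΩ.mem_nhds hx))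
    exact ⟨R, hR, M, hψ.mono fun y hy => (h y hy).2, fun y hy => (h y hy).1⟩
  have hopen : IsOpen {x | ψ =ᶠ[𝓝 x] 0} :=
    isOpen_iff_mem_nhds.2 fun x hx => hx.eventually_nhds
  have hsub : Ω ⊆ {x | ψ =ᶠ[𝓝 x] 0} := by
    refine hΩc.subset_of_closure_inter_subset hopen ⟨x₀, hx₀, ?_⟩ ?_
    · obtain ⟨R, hR, M, hψR, hDR⟩ := hlocal x₀ hx₀
      filter_upwards [ball_mem_nhds x₀ (half_pos hR)] with y hy
      exact hc.eq_zero_of_isFlatAt_of_mem_ball hψR hDR hflat hy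
    · rintro x ⟨hxcl, hx⟩
      obtain ⟨R, hR, M, hψR, hDR⟩ := hlocal x hx
      obtain ⟨y, hy, hxy⟩ := Metric.mem_closure_iff.1 hxcl (R / 8) (by positivity)
      have hball : ball y (R / 2) ⊆ ball x R := ball_subset_ball' (by rw [dist_comm]; linarith)
      have hxball : x ∈ ball y (R / 2 / 2) := by rw [mem_ball]; linarith
      filter_upwards [isOpen_ball.mem_nhds hxball] with z hz
      exact hc.eq_zero_of_isFlatAt_of_mem_ball (hψR.mono hball) (fun z hz => hDR z (hball hz))
        (isFlatAt_of_eventuallyEq_zero hy) hz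
  exact fun x hx => (hsub hx).self_of_nhds

end UniqueContinuation

section PompeiuFormula

variable {E F : Type*} [NormedAddCommGroup E] [InnerProductSpace ℝ E] [FiniteDimensional ℝ E]
  [NormedAddCommGroup F] [InnerProductSpace ℝ F] {c : E →L[ℝ] F →L[ℝ] F}

lemma IsCliffordMul.diracSymbol_flip (hc : IsCliffordMul c) (w : F) :
    diracSymbol c (c.flip w) = -(finrank ℝ E : ℝ) • w := by
  simp [diracSymbol_apply (stdOrthonormalBasis ℝ E), hc.apply_apply_self,
    ← Nat.cast_smul_eq_nsmul ℝ]

lemma IsCliffordMul.diracSymbol_fderiv_rpow_smul_apply (hc : IsCliffordMul c) {a : ℝ} (ha : 0 < a)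
    (w : F) (z : E) :
    diracSymbol c (fderiv ℝ (fun y => (‖y‖ ^ 2 + a) ^ (-(finrank ℝ E : ℝ) / 2) • c y w) z)
      = -(finrank ℝ E * a * (‖z‖ ^ 2 + a) ^ (-(finrank ℝ E : ℝ) / 2 - 1)) • w := by
  have hpos : ‖z‖ ^ 2 + a ≠ 0 := by positivity
  have h := (hasFDerivAt_norm_sq_add_rpow (-(finrank ℝ E : ℝ) / 2) hpos).fun_smul
    (c.flip w).hasFDerivAt
  simp only [ContinuousLinearMap.flip_apply] at h
  rw [h.fderiv, ← map_smul (innerSL ℝ) _ z, diracSymbol_smul_add_smulRight, hc.diracSymbol_flip,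
    map_smul, _root_.smul_apply, hc.apply_apply_self, Real.rpow_sub_one hpos]
  match_scalars
  field_simp
  ring

variable [MeasurableSpace E] [BorelSpace E]

lemma IsCliffordMul.integral_inner_diracSymbol_fderiv (hc : IsCliffordMul c) {f g : E → F}
    (hf : ContDiff ℝ 1 f) (hfs : HasCompactSupport f) (hg : ContDiff ℝ 1 g) :
    ∫ x, ⟪diracSymbol c (fderiv ℝ f x), g x⟫ = ∫ x, ⟪f x, diracSymbol c (fderiv ℝ g x)⟫ := by
  set e := stdOrthonormalBasis ℝ E
  have : Continuous (fderiv ℝ f) := hf.continuous_fderiv (by norm_num)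
  have : Continuous (fderiv ℝ g) := hg.continuous_fderiv (by norm_num)
  have hcg : ∀ i, ContDiff ℝ 1 fun x => c (e i) (g x) := fun i => (c (e i)).contDiff.comp hg
  have hfderiv : ∀ i x, fderiv ℝ (fun y => c (e i) (g y)) x = (c (e i)).comp (fderiv ℝ g x) :=
    fun i x => ((c (e i)).hasFDerivAt.comp x
      (hg.differentiable (by norm_num) x).hasFDerivAt).fderiv
  have hint_left : ∀ i, Integrable fun x => ⟪fderiv ℝ f x (e i), c (e i) (g x)⟫ := fun i => by
    refine Continuous.integrable_of_hasCompactSupport (by fun_prop) ((hfs.fderiv ℝ).mono ?_)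
    exact fun x hx h => hx (by simp [h])
  have hint_right : ∀ i, Integrable fun x => ⟪f x, c (e i) (fderiv ℝ g x (e i))⟫ := fun i => by
    refine Continuous.integrable_of_hasCompactSupport (by fun_prop) (hfs.mono ?_)
    exact fun x hx h => hx (by simp [h])
  have hparts : ∀ i, ∫ x, ⟪fderiv ℝ f x (e i), c (e i) (g x)⟫
      = -∫ x, ⟪f x, c (e i) (fderiv ℝ g x (e i))⟫ := fun i => by
    have h : ∫ x, ⟪f x, fderiv ℝ (fun y => c (e i) (g y)) x (e i)⟫
        = -∫ x, ⟪fderiv ℝ f x (e i), c (e i) (g x)⟫ :=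
      integral_bilinear_fderiv_right_eq_neg_left_of_integrable (B := innerSL ℝ) (hint_left i)
        (by simp only [hfderiv]; exact hint_right i)
        (Continuous.integrable_of_hasCompactSupport (f := fun x => ⟪f x, c (e i) (g x)⟫)
          (by fun_prop) (hfs.mono fun x hx h => hx (by simp [h])))
        (fun x _ => hf.differentiable (by norm_num) x)
        (fun x _ => (hcg i).differentiable (by norm_num) x)
    simp only [hfderiv, ContinuousLinearMap.comp_apply] at h
    rw [h, neg_neg]
  simp_rw [diracSymbol_apply e, sum_inner, inner_sum, hc.inner_apply_left]
  simp_rw [Finset.sum_neg_distrib, integral_neg]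
  rw [integral_finsetSum _ fun i _ => hint_left i, integral_finsetSum _ fun i _ => hint_right i]
  simp_rw [hparts, Finset.sum_neg_distrib, neg_neg]

lemma IsCliffordMul.integral_rpow_smul_apply_diracSymbol [CompleteSpace F] (hc : IsCliffordMul c)
    {a : ℝ} (ha : 0 < a) {f : E → F} (hf : ContDiff ℝ 1 f) (hfs : HasCompactSupport f) :
    ∫ z, (‖z‖ ^ 2 + a) ^ (-(finrank ℝ E : ℝ) / 2) • c z (diracSymbol c (fderiv ℝ f z))
      = ∫ z, (finrank ℝ E * a * (‖z‖ ^ 2 + a) ^ (-(finrank ℝ E : ℝ) / 2 - 1)) • f z := by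
  have hpos : ∀ z : E, ‖z‖ ^ 2 + a ≠ 0 := fun z => by positivity
  have hrpow : ∀ s : ℝ, ContDiff ℝ 1 fun z : E => (‖z‖ ^ 2 + a) ^ s := fun s =>
    ((contDiff_norm_sq ℝ).add contDiff_const).rpow_const_of_ne hpos
  have hrpow_cont : ∀ s : ℝ, Continuous fun z : E => (‖z‖ ^ 2 + a) ^ s := fun s =>
    (hrpow s).continuous
  have : Continuous (fderiv ℝ f) := hf.continuous_fderiv (by norm_num)
  have hint_left : Integrable fun z =>
      (‖z‖ ^ 2 + a) ^ (-(finrank ℝ E : ℝ) / 2) • c z (diracSymbol c (fderiv ℝ f z)) := by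
    refine Continuous.integrable_of_hasCompactSupport (by fun_prop) ((hfs.fderiv ℝ).mono ?_)
    exact fun x hx h => hx (by simp [h])
  have hint_right : Integrable fun z =>
      (finrank ℝ E * a * (‖z‖ ^ 2 + a) ^ (-(finrank ℝ E : ℝ) / 2 - 1)) • f z := by
    refine Continuous.integrable_of_hasCompactSupport (by fun_prop) (hfs.mono ?_)
    exact fun x hx h => hx (by simp [h])
  refine ext_inner_left ℝ fun w => ?_
  rw [← integral_inner hint_left, ← integral_inner hint_right]
  have hadjoint := hc.integral_inner_diracSymbol_fderiv hf hfs
    (g := fun z => (‖z‖ ^ 2 + a) ^ (-(finrank ℝ E : ℝ) / 2) • c z w)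
    ((hrpow _).smul (c.flip w).contDiff)
  simp only [hc.diracSymbol_fderiv_rpow_smul_apply ha] at hadjoint
  calc _ = -∫ z, ⟪diracSymbol c (fderiv ℝ f z),
          (‖z‖ ^ 2 + a) ^ (-(finrank ℝ E : ℝ) / 2) • c z w⟫ := by
        rw [← integral_neg]
        refine integral_congr_ae (.of_forall fun z => ?_)
        simp only [real_inner_smul_right]
        rw [← real_inner_comm, hc.inner_apply_left]
        ring
    _ = _ := by
        rw [hadjoint, ← integral_neg]
        refine integral_congr_ae (.of_forall fun z => ?_)
        simp only [real_inner_smul_right, real_inner_comm w]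
        ring

/-- The fundamental solution of the Dirac operator, up to the constant `pompeiuConst E`. -/
def diracKernel (c : E →L[ℝ] F →L[ℝ] F) (z : E) : F →L[ℝ] F := dilationDensity z • c z

omit [FiniteDimensional ℝ E] [MeasurableSpace E] [BorelSpace E] in
lemma dilationDensity_mul_norm {x : E} (hx : x ≠ 0) :
    dilationDensity x * ‖x‖ = ‖x‖ ^ (1 - finrank ℝ E : ℝ) := by
  rw [dilationDensity, ← Real.rpow_natCast_mul (norm_nonneg x),
    ← Real.rpow_add_one (by positivity)]
  congr 1
  push_cast
  ring

lemma integrableOn_ball_norm_rpow [Nontrivial E] {s : ℝ} (hs : -(finrank ℝ E : ℝ) < s) (R : ℝ) :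
    IntegrableOn (fun z : E => ‖z‖ ^ s) (ball 0 R) := by
  refine integrableOn_ball_of_norm_le_rpow (C := 1) (α := -s) Module.finrank_pos (by linarith)
    (.of_forall fun z => ?_) (measurable_norm.pow_const s).aestronglyMeasurable
  rw [one_mul, neg_neg, Real.norm_of_nonneg (by positivity)]

variable (E) in
/-- The constant in Pompeiu's formula: the area of the unit sphere of `E`. -/
def pompeiuConst : ℝ := ∫ z : E, finrank ℝ E * (‖z‖ ^ 2 + 1) ^ (-(finrank ℝ E : ℝ) / 2 - 1)

variable (E) in
lemma integrable_pompeiuConst :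
    Integrable fun z : E => finrank ℝ E * (‖z‖ ^ 2 + 1) ^ (-(finrank ℝ E : ℝ) / 2 - 1) := by
  refine Integrable.const_mul ?_ _
  convert integrable_rpow_neg_one_add_norm_sq (E := E) (μ := volume)
    (r := finrank ℝ E + 2) (by linarith) using 3 with z
  · ring
  · ring

variable (E) in
lemma pompeiuConst_pos [Nontrivial E] : 0 < pompeiuConst E := by
  have hfinrank : 0 < finrank ℝ E := Module.finrank_pos
  have hcont : Continuous fun z : E =>
      finrank ℝ E * (‖z‖ ^ 2 + 1) ^ (-(finrank ℝ E : ℝ) / 2 - 1) :=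
    continuous_const.mul (((continuous_norm.pow 2).add continuous_const).rpow_const
      fun z => Or.inl (by positivity : ‖z‖ ^ 2 + 1 ≠ 0))
  exact integral_pos_of_integrable_nonneg_nonzero hcont (integrable_pompeiuConst E)
    (fun z => mul_nonneg (Nat.cast_nonneg _) (by positivity)) (x := 0)
    (mul_pos (Nat.cast_pos.2 hfinrank) (by positivity)).ne'

omit [FiniteDimensional ℝ E] [MeasurableSpace E] [BorelSpace E] in
lemma norm_rpow_smul_apply_le (c : E →L[ℝ] F →L[ℝ] F) {a : ℝ} (ha : 0 ≤ a) (z : E) {u : F} {C : ℝ}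
    (hu : ‖u‖ ≤ C) :
    ‖(‖z‖ ^ 2 + a) ^ (-(finrank ℝ E : ℝ) / 2) • c z u‖
      ≤ ‖c‖ * C * ‖z‖ ^ (1 - finrank ℝ E : ℝ) := by
  have hC : 0 ≤ C := (norm_nonneg u).trans hu
  rcases eq_or_ne z 0 with rfl | hz
  · simp only [map_zero, _root_.zero_apply, smul_zero, norm_zero]
    positivity
  · have hdensity : (‖z‖ ^ 2 + a) ^ (-(finrank ℝ E : ℝ) / 2) ≤ dilationDensity z :=
      Real.rpow_le_rpow_of_nonpos (by positivity) (by linarith)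
        (by rw [neg_div]; exact neg_nonpos.2 (by positivity))
    rw [norm_smul, Real.norm_of_nonneg (by positivity), ← dilationDensity_mul_norm hz]
    calc _ ≤ dilationDensity z * (‖c‖ * ‖z‖ * C) := by
          gcongr
          · exact dilationDensity_nonneg z
          · exact (c.le_opNorm₂ z u).trans (by gcongr)
      _ = _ := by ring

lemma tendsto_integral_rpow_smul_apply [Nontrivial E] (c : E →L[ℝ] F →L[ℝ] F) {g : E → F}
    (hg : Continuous g) (hgs : HasCompactSupport g) {ε : ℕ → ℝ} (hε : Tendsto ε atTop (𝓝 0)) :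
    Tendsto (fun k => ∫ z, (‖z‖ ^ 2 + ε k ^ 2) ^ (-(finrank ℝ E : ℝ) / 2) • c z (g z)) atTop
      (𝓝 (∫ z, diracKernel c z (g z))) := by
  obtain ⟨C, hC⟩ := hgs.exists_bound_of_continuous hg
  obtain ⟨R, -, hR⟩ := hgs.isCompact.isBounded.exists_pos_norm_lt
  have hg0 : ∀ z ∉ ball (0 : E) R, g z = 0 := fun z hz =>
    image_eq_zero_of_notMem_tsupport fun h => hz (by simpa using hR z h)
  refine tendsto_integral_of_dominated_convergence
    ((ball (0 : E) R).indicator fun z => ‖c‖ * C * ‖z‖ ^ (1 - finrank ℝ E : ℝ))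
    (fun k => ?_) ?_ (fun k => .of_forall fun z => ?_) (.of_forall fun z => ?_)
  · exact (((measurable_norm.pow_const 2).add_const _).pow_const _).aestronglyMeasurable.smul
      (by fun_prop : Continuous fun z => c z (g z)).aestronglyMeasurable
  · rw [integrable_indicator_iff measurableSet_ball]
    exact (integrableOn_ball_norm_rpow (by linarith) R).const_mul _
  · by_cases hz : z ∈ ball (0 : E) R
    · rw [Set.indicator_of_mem hz]
      exact norm_rpow_smul_apply_le c (sq_nonneg _) z (hC z)
    · rw [Set.indicator_of_notMem hz, hg0 z hz]
      simp
  · rcases eq_or_ne z 0 with rfl | hz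
    · simp [diracKernel]
    · have hlim : Tendsto (fun k => ‖z‖ ^ 2 + ε k ^ 2) atTop (𝓝 (‖z‖ ^ 2)) := by
        simpa using (hε.pow 2).const_add (‖z‖ ^ 2)
      exact (hlim.rpow_const (Or.inl (by positivity))).smul_const _

lemma integral_rpow_smul_eq_integral_comp_smul {ε : ℝ} (hε : 0 < ε) (f : E → F) :
    ∫ z, (finrank ℝ E * ε ^ 2 * (‖z‖ ^ 2 + ε ^ 2) ^ (-(finrank ℝ E : ℝ) / 2 - 1)) • f z
      = ∫ z, (finrank ℝ E * (‖z‖ ^ 2 + 1) ^ (-(finrank ℝ E : ℝ) / 2 - 1)) • f (ε • z) := by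
  have hscale : ∀ z : E,
      finrank ℝ E * ε ^ 2 * (‖ε • z‖ ^ 2 + ε ^ 2) ^ (-(finrank ℝ E : ℝ) / 2 - 1)
        = (ε ^ finrank ℝ E)⁻¹
          * (finrank ℝ E * (‖z‖ ^ 2 + 1) ^ (-(finrank ℝ E : ℝ) / 2 - 1)) := fun z => by
    have hpow : (ε ^ 2) ^ (-(finrank ℝ E : ℝ) / 2) = (ε ^ finrank ℝ E)⁻¹ := by
      rw [← Real.rpow_natCast_mul hε.le, ← Real.rpow_natCast ε (finrank ℝ E),
        ← Real.rpow_neg hε.le]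
      congr 1
      push_cast
      ring
    rw [norm_smul, Real.norm_of_nonneg hε.le,
      show (ε * ‖z‖) ^ 2 + ε ^ 2 = ε ^ 2 * (‖z‖ ^ 2 + 1) by ring,
      Real.mul_rpow (by positivity) (by positivity), Real.rpow_sub_one (x := ε ^ 2) (by positivity),
      hpow]
    field_simp
  have h := Measure.integral_comp_smul_of_nonneg volume (fun z : E =>
    (finrank ℝ E * ε ^ 2 * (‖z‖ ^ 2 + ε ^ 2) ^ (-(finrank ℝ E : ℝ) / 2 - 1)) • f z) ε (hR := hε.le)
  simp_rw [hscale, mul_smul (ε ^ finrank ℝ E)⁻¹] at h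
  rw [integral_smul] at h
  exact (smul_right_injective F (by positivity : (ε ^ finrank ℝ E)⁻¹ ≠ 0) h).symm

lemma IsCliffordMul.integral_diracKernel_diracSymbol_fderiv [Nontrivial E] [CompleteSpace F]
    (hc : IsCliffordMul c) {f : E → F} (hf : ContDiff ℝ 1 f) (hfs : HasCompactSupport f) :
    ∫ z, diracKernel c z (diracSymbol c (fderiv ℝ f z)) = pompeiuConst E • f 0 := by
  obtain ⟨C, hC⟩ := hfs.exists_bound_of_continuous hf.continuous
  set ε : ℕ → ℝ := fun k => 1 / (k + 1)
  have hε : Tendsto ε atTop (𝓝 0) := tendsto_one_div_add_atTop_nhds_zero_nat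
  have hε0 : ∀ k, 0 < ε k := fun k => by positivity
  have hleft := tendsto_integral_rpow_smul_apply c
    ((diracSymbol c).continuous.comp (hf.continuous_fderiv (by norm_num)))
    ((hfs.fderiv ℝ).comp_left (g := diracSymbol c) (map_zero _)) hε
  have hright : Tendsto (fun k => ∫ z,
      (finrank ℝ E * (‖z‖ ^ 2 + 1) ^ (-(finrank ℝ E : ℝ) / 2 - 1)) • f (ε k • z)) atTop
      (𝓝 (∫ z : E, (finrank ℝ E * (‖z‖ ^ 2 + 1) ^ (-(finrank ℝ E : ℝ) / 2 - 1)) • f 0)) := by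
    refine tendsto_integral_of_dominated_convergence
      (fun z => finrank ℝ E * (‖z‖ ^ 2 + 1) ^ (-(finrank ℝ E : ℝ) / 2 - 1) * C) (fun k => ?_)
      ((integrable_pompeiuConst E).mul_const C) (fun k => .of_forall fun z => ?_)
      (.of_forall fun z => .const_smul ?_ _)
    · exact (integrable_pompeiuConst E).aestronglyMeasurable.smul
        (hf.continuous.comp (continuous_const_smul (ε k))).aestronglyMeasurable
    · rw [norm_smul, Real.norm_of_nonneg (by positivity)]
      exact mul_le_mul_of_nonneg_left (hC _) (by positivity)
    · exact (hf.continuous.tendsto 0).comp (by simpa using hε.smul_const z)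
  simp only [Function.comp_def, hc.integral_rpow_smul_apply_diracSymbol (pow_pos (hε0 _) 2) hf hfs,
    integral_rpow_smul_eq_integral_comp_smul (hε0 _)] at hleft
  rw [tendsto_nhds_unique hleft hright, integral_smul_const, pompeiuConst]

end PompeiuFormula

section HomogeneousKernels

variable {E G : Type*} [NormedAddCommGroup E] [NormedAddCommGroup G] [NormedSpace ℝ G]

/-- A kernel that is positively homogeneous of degree `s` and smooth away from the origin. -/
structure IsHomogeneousKernel [NormedSpace ℝ E] (K : E → G) (s : ℝ) : Prop where
  apply_smul : ∀ t : ℝ, 0 < t → ∀ z, K (t • z) = t ^ s • K z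
  contDiffAt : ∀ z ≠ 0, ContDiffAt ℝ ∞ K z

/-- The value at `y + x` of the Taylor polynomial of `K` at `y` of degree `j`. -/
def taylorSum [NormedSpace ℝ E] (K : E → G) (j : ℕ) (y x : E) : G :=
  ∑ i ∈ Finset.range (j + 1), (i.factorial : ℝ)⁻¹ • iteratedFDeriv ℝ i K y fun _ => x

lemma half_norm_le_norm_add_smul [NormedSpace ℝ E] {x y : E} (hxy : ‖x‖ ≤ ‖y‖ / 2) {t : ℝ}
    (ht : t ∈ Set.Icc (0 : ℝ) 1) : ‖y‖ / 2 ≤ ‖y + t • x‖ := by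
  have hy : ‖y‖ ≤ ‖y + t • x‖ + ‖t • x‖ := by simpa using norm_sub_le (y + t • x) (t • x)
  have htx : ‖t • x‖ ≤ ‖x‖ := by
    rw [norm_smul, Real.norm_of_nonneg ht.1]
    exact mul_le_of_le_one_left (norm_nonneg x) ht.2
  linarith

namespace IsHomogeneousKernel

section NormedSpace

variable [NormedSpace ℝ E] {K : E → G} {s : ℝ}

lemma apply_zero (hK : IsHomogeneousKernel K s) (hs : s < 0) : K 0 = 0 := by
  have h := hK.apply_smul 2 (by norm_num) 0
  rw [smul_zero] at h
  have hne : (1 : ℝ) - 2 ^ s ≠ 0 :=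
    (sub_pos.2 (Real.rpow_lt_one_of_one_lt_of_neg (by norm_num) hs)).ne'
  refine (smul_eq_zero.1 ?_).resolve_left hne
  rw [sub_smul, one_smul, ← h, sub_self]

lemma norm_iteratedFDeriv_smul (hK : IsHomogeneousKernel K s) (i : ℕ) {t : ℝ} (ht : 0 < t) {z : E}
    (hz : z ≠ 0) : ‖iteratedFDeriv ℝ i K (t • z)‖ = t ^ (s - i) * ‖iteratedFDeriv ℝ i K z‖ := by
  let e : E ≃L[ℝ] E := ContinuousLinearEquiv.smulLeft (Units.mk0 t ht.ne')
  have he : K ∘ e = t ^ s • K := funext fun w => hK.apply_smul t ht w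
  have hcomp : iteratedFDeriv ℝ i (K ∘ e) z = t ^ i • iteratedFDeriv ℝ i K (t • z) := by
    have h := e.iteratedFDerivWithin_comp_right (f := K) (s := Set.univ) uniqueDiffOn_univ
      (x := z) (Set.mem_univ _) i
    rw [Set.preimage_univ, iteratedFDerivWithin_univ, iteratedFDerivWithin_univ] at h
    ext m
    rw [h]
    exact ((iteratedFDeriv ℝ i K (t • z)).map_smul_univ (fun _ => t) m).trans (by simp)
  rw [he, iteratedFDeriv_const_smul_apply ((hK.contDiffAt z hz).of_le (mod_cast le_top))] at hcomp
  have hnorm := congrArg norm hcomp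
  rw [norm_smul, norm_smul, Real.norm_of_nonneg (by positivity),
    Real.norm_of_nonneg (by positivity)] at hnorm
  rw [Real.rpow_sub_natCast ht.ne']
  field_simp
  linarith

lemma exists_norm_iteratedFDeriv_le [FiniteDimensional ℝ E] (hK : IsHomogeneousKernel K s)
    (i : ℕ) : ∃ C, 0 ≤ C ∧ ∀ z ≠ 0, ‖iteratedFDeriv ℝ i K z‖ ≤ C * ‖z‖ ^ (s - i) := by
  have hcont : ContinuousOn (iteratedFDeriv ℝ i K) (sphere 0 1) := fun z hz =>
    (((hK.contDiffAt z (ne_zero_of_mem_unit_sphere ⟨z, hz⟩)).iteratedFDeriv_right (m := 0)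
      (by exact_mod_cast le_top)).continuousAt).continuousWithinAt
  have := FiniteDimensional.proper_real E
  obtain ⟨C, hC⟩ := (isCompact_sphere (0 : E) 1).exists_bound_of_continuousOn hcont
  refine ⟨max C 0, le_max_right _ _, fun z hz => ?_⟩
  have hz' : 0 < ‖z‖ := norm_pos_iff.2 hz
  have hunit : ‖(‖z‖⁻¹ • z)‖ = 1 := norm_smul_inv_norm hz
  have hdecomp : ‖z‖ • ‖z‖⁻¹ • z = z := smul_inv_smul₀ hz'.ne' z
  rw [← hdecomp, hK.norm_iteratedFDeriv_smul i hz' (norm_pos_iff.1 (by rw [hunit]; norm_num)),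
    hdecomp, mul_comm]
  gcongr
  exact (hC _ (mem_sphere_zero_iff_norm.2 hunit)).trans (le_max_left _ _)

lemma exists_norm_apply_le [FiniteDimensional ℝ E] (hK : IsHomogeneousKernel K s) (hs : s < 0) :
    ∃ C, 0 ≤ C ∧ ∀ z, ‖K z‖ ≤ C * ‖z‖ ^ s := by
  obtain ⟨C, hC0, hC⟩ := hK.exists_norm_iteratedFDeriv_le 0
  refine ⟨C, hC0, fun z => ?_⟩
  rcases eq_or_ne z 0 with rfl | hz
  · rw [hK.apply_zero hs, norm_zero]
    positivity
  · simpa using hC z hz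

lemma exists_norm_iteratedFDeriv_apply_le [FiniteDimensional ℝ E] (hK : IsHomogeneousKernel K s)
    (j : ℕ) : ∃ C, 0 ≤ C ∧ ∀ i ∈ Finset.range (j + 1), ∀ x, ∀ y ≠ 0,
      ‖(i.factorial : ℝ)⁻¹ • iteratedFDeriv ℝ i K y fun _ => x‖
        ≤ C * (‖x‖ / ‖y‖) ^ i * ‖y‖ ^ s := by
  choose C hC0 hC using hK.exists_norm_iteratedFDeriv_le
  refine ⟨∑ i ∈ Finset.range (j + 1), C i, Finset.sum_nonneg fun i _ => hC0 i,
    fun i hi x y hy => ?_⟩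
  have hy' : 0 < ‖y‖ := norm_pos_iff.2 hy
  have hfactorial : ‖(i.factorial : ℝ)⁻¹‖ ≤ 1 := by
    rw [Real.norm_of_nonneg (by positivity)]
    exact inv_le_one_of_one_le₀ (mod_cast i.factorial_pos)
  calc _ ≤ 1 * (‖iteratedFDeriv ℝ i K y‖ * ‖x‖ ^ i) := by
        rw [norm_smul]
        gcongr
        simpa using (iteratedFDeriv ℝ i K y).le_opNorm fun _ => x
    _ ≤ 1 * (C i * ‖y‖ ^ (s - i) * ‖x‖ ^ i) := by gcongr; exact hC i y hy
    _ = C i * (‖x‖ / ‖y‖) ^ i * ‖y‖ ^ s := by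
        rw [Real.rpow_sub_natCast hy'.ne', div_pow]
        field_simp
    _ ≤ _ := by gcongr; exact Finset.single_le_sum (fun i _ => hC0 i) hi

lemma exists_norm_sub_taylorSum_le_of_norm_le [FiniteDimensional ℝ E] [CompleteSpace G]
    (hK : IsHomogeneousKernel K s) (hs : s < 0) (j : ℕ) :
    ∃ C, 0 ≤ C ∧ ∀ x y, y ≠ 0 → ‖x‖ ≤ ‖y‖ / 2 →
      ‖K (y + x) - taylorSum K j y x‖ ≤ C * (‖x‖ / ‖y‖) ^ (j + 1) * ‖y‖ ^ s := by
  obtain ⟨C, hC0, hC⟩ := hK.exists_norm_iteratedFDeriv_le (j + 1)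
  have : (0 : ℝ) ≤ j := Nat.cast_nonneg j
  refine ⟨C * 2 ^ (j + 1 - s), by positivity, fun x y hy hxy => ?_⟩
  have hy' : 0 < ‖y‖ := norm_pos_iff.2 hy
  have hseg : ∀ t ∈ Set.Icc (0 : ℝ) 1, ‖y‖ / 2 ≤ ‖y + t • x‖ :=
    fun t ht => half_norm_le_norm_add_smul hxy ht
  have hne : ∀ t ∈ Set.Icc (0 : ℝ) 1, y + t • x ≠ 0 := fun t ht =>
    norm_pos_iff.1 (lt_of_lt_of_le (by positivity) (hseg t ht))
  have hremainder : ∀ t ∈ Set.uIoc (0 : ℝ) 1,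
      ‖(1 - t) ^ j • iteratedFDeriv ℝ (j + 1) K (y + t • x) fun _ => x‖
        ≤ C * (‖y‖ / 2) ^ (s - (j + 1)) * ‖x‖ ^ (j + 1) := fun t ht => by
    rw [Set.uIoc_of_le zero_le_one] at ht
    have ht' : t ∈ Set.Icc (0 : ℝ) 1 := ⟨ht.1.le, ht.2⟩
    have hcoef : ‖(1 - t) ^ j‖ ≤ 1 := by
      rw [norm_pow, Real.norm_of_nonneg (by linarith [ht.2])]
      exact pow_le_one₀ (by linarith [ht.2]) (by linarith [ht.1])
    calc _ ≤ 1 * (‖iteratedFDeriv ℝ (j + 1) K (y + t • x)‖ * ‖x‖ ^ (j + 1)) := by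
          rw [norm_smul]
          gcongr
          simpa using (iteratedFDeriv ℝ (j + 1) K (y + t • x)).le_opNorm fun _ => x
      _ ≤ 1 * (C * ‖y + t • x‖ ^ (s - (j + 1)) * ‖x‖ ^ (j + 1)) := by
          gcongr
          simpa using hC _ (hne t ht')
      _ ≤ _ := by
          rw [one_mul]
          gcongr C * ?_ * _
          exact Real.rpow_le_rpow_of_nonpos (by positivity) (hseg t ht') (by linarith)
  have htaylor := map_add_eq_sum_add_integral_iteratedFDeriv (f := K) (x := y) (y := x) (n := j)
    fun t ht => (hK.contDiffAt _ (hne t ht)).of_le (mod_cast le_top)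
  calc _ ≤ 1 * (C * (‖y‖ / 2) ^ (s - (j + 1)) * ‖x‖ ^ (j + 1) * |1 - 0|) := by
        rw [htaylor, taylorSum, add_sub_cancel_left, norm_smul, Real.norm_of_nonneg (by positivity)]
        gcongr
        · exact inv_le_one_of_one_le₀ (mod_cast j.factorial_pos)
        · exact intervalIntegral.norm_integral_le_of_norm_le_const hremainder
    _ = _ := by
        rw [Real.div_rpow hy'.le (by norm_num), ← neg_sub s (j + 1 : ℝ),
          Real.rpow_neg (by norm_num),
          show s - (j + 1) = s - ((j + 1 : ℕ) : ℝ) by push_cast; ring,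
          Real.rpow_sub_natCast hy'.ne', div_pow, sub_zero, abs_one]
        field_simp

lemma exists_norm_sub_taylorSum_le_of_lt_norm [FiniteDimensional ℝ E]
    (hK : IsHomogeneousKernel K s) (hs : s < 0) {j : ℕ} {γ : ℝ} (hjγ : j ≤ γ) :
    ∃ C, 0 ≤ C ∧ ∀ x y, y ≠ 0 → ‖y‖ / 2 < ‖x‖ →
      ‖K (y + x) - taylorSum K j y x‖ ≤ C * (‖x‖ / ‖y‖) ^ γ * (‖y‖ ^ s + ‖y + x‖ ^ s) := by
  obtain ⟨A, hA0, hA⟩ := hK.exists_norm_apply_le hs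
  obtain ⟨B, hB0, hB⟩ := hK.exists_norm_iteratedFDeriv_apply_le j
  refine ⟨(A + (j + 1) * B) * 2 ^ γ, by positivity, fun x y hy hxy => ?_⟩
  have hy' : 0 < ‖y‖ := norm_pos_iff.2 hy
  set q := ‖x‖ / ‖y‖
  have hq0 : 0 ≤ q := by positivity
  have hq : 1 ≤ 2 * q := by
    rw [← mul_div_assoc, le_div_iff₀ hy']
    linarith
  have hpow : ∀ i ∈ Finset.range (j + 1), q ^ i ≤ (2 * q) ^ γ := fun i hi => by
    have hiγ : (i : ℝ) ≤ γ :=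
      (Nat.cast_le.2 (Nat.lt_succ_iff.1 (Finset.mem_range.1 hi))).trans hjγ
    calc q ^ i ≤ (2 * q) ^ i := by gcongr; linarith
      _ ≤ _ := by
        rw [← Real.rpow_natCast]
        exact Real.rpow_le_rpow_of_exponent_le hq hiγ
  have hterm : ∀ i ∈ Finset.range (j + 1),
      ‖(i.factorial : ℝ)⁻¹ • iteratedFDeriv ℝ i K y fun _ => x‖ ≤ B * (2 * q) ^ γ * ‖y‖ ^ s :=
    fun i hi => (hB i hi x y hy).trans (by gcongr; exact hpow i hi)
  have happly : ‖K (y + x)‖ ≤ A * (2 * q) ^ γ * ‖y + x‖ ^ s := (hA _).trans (by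
    gcongr
    exact le_mul_of_one_le_right hA0 (Real.one_le_rpow hq ((Nat.cast_nonneg j).trans hjγ)))
  calc _ ≤ A * (2 * q) ^ γ * ‖y + x‖ ^ s + (j + 1 : ℕ) • (B * (2 * q) ^ γ * ‖y‖ ^ s) := by
        refine (norm_sub_le _ _).trans (add_le_add happly ((norm_sum_le_of_le _ hterm).trans ?_))
        rw [Finset.sum_const, Finset.card_range]
    _ ≤ (A + (j + 1) * B) * (2 * q) ^ γ * ‖y + x‖ ^ s
        + (A + (j + 1) * B) * (2 * q) ^ γ * ‖y‖ ^ s := by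
        rw [nsmul_eq_mul, ← mul_assoc, ← mul_assoc]
        push_cast
        gcongr
        · exact le_add_of_nonneg_right (by positivity)
        · exact le_add_of_nonneg_left hA0
    _ = _ := by
        rw [Real.mul_rpow (by norm_num) hq0]
        ring

lemma exists_norm_sub_taylorSum_le [FiniteDimensional ℝ E] [CompleteSpace G]
    (hK : IsHomogeneousKernel K s) (hs : s < 0) {j : ℕ} {γ : ℝ} (hjγ : j ≤ γ) (hγj : γ ≤ j + 1) :
    ∃ C, 0 ≤ C ∧ ∀ x, ∀ y ≠ 0,
      ‖K (y + x) - taylorSum K j y x‖ ≤ C * (‖x‖ / ‖y‖) ^ γ * (‖y‖ ^ s + ‖y + x‖ ^ s) := by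
  obtain ⟨A, hA0, hA⟩ := hK.exists_norm_sub_taylorSum_le_of_norm_le hs j
  obtain ⟨B, hB0, hB⟩ := hK.exists_norm_sub_taylorSum_le_of_lt_norm hs hjγ
  have : (0 : ℝ) ≤ j := Nat.cast_nonneg j
  refine ⟨A + B, by positivity, fun x y hy => ?_⟩
  have hy' : 0 < ‖y‖ := norm_pos_iff.2 hy
  rcases le_or_gt ‖x‖ (‖y‖ / 2) with hxy | hxy
  · refine (hA x y hy hxy).trans ?_
    gcongr ?_ * ?_ * ?_
    · exact le_add_of_nonneg_right hB0
    · rw [← Real.rpow_natCast]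
      refine Real.rpow_le_rpow_of_exponent_ge_of_imp (by positivity) ?_ (mod_cast hγj)
        fun _ h => absurd h (by positivity)
      exact (div_le_one hy').2 (by linarith)
    · exact le_add_of_nonneg_right (by positivity)
  · refine (hB x y hy hxy).trans ?_
    gcongr
    exact le_add_of_nonneg_left hA0

end NormedSpace

end IsHomogeneousKernel

end HomogeneousKernels

section KernelExpansion

lemma rpow_mul_rpow_le_rpow_add_rpow {a b x y : ℝ} (ha : a ≤ 0) (hb : b ≤ 0) (hx : 0 < x)
    (hy : 0 < y) : x ^ a * y ^ b ≤ x ^ (a + b) + y ^ (a + b) := by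
  rcases le_total x y with h | h
  · calc x ^ a * y ^ b ≤ x ^ a * x ^ b := by
          gcongr x ^ a * ?_
          exact Real.rpow_le_rpow_of_nonpos hx h hb
      _ = x ^ (a + b) := (Real.rpow_add hx a b).symm
      _ ≤ _ := le_add_of_nonneg_right (by positivity)
  · calc x ^ a * y ^ b ≤ y ^ a * y ^ b := by
          gcongr ?_ * y ^ b
          exact Real.rpow_le_rpow_of_nonpos hy h ha
      _ = y ^ (a + b) := (Real.rpow_add hy a b).symm
      _ ≤ _ := le_add_of_nonneg_left (by positivity)

lemma exists_norm_le_mul_rpow_of_isBigO {E F : Type*} [NormedAddCommGroup E]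
    [NormedAddCommGroup F] {h : E → F} {β : ℝ} (hβ : 0 ≤ β) (hh : Continuous h)
    (hhs : HasCompactSupport h) (hO : h =O[𝓝 0] fun y => ‖y‖ ^ β) :
    ∃ A, 0 ≤ A ∧ ∀ y, ‖h y‖ ≤ A * ‖y‖ ^ β := by
  obtain ⟨C, hC0, hC⟩ := hO.exists_nonneg
  obtain ⟨δ, hδ, hball⟩ := Metric.eventually_nhds_iff_ball.1 hC.bound
  obtain ⟨B, hB⟩ := hhs.exists_bound_of_continuous hh
  have hB0 : 0 ≤ B := (norm_nonneg _).trans (hB 0)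
  refine ⟨C + B / δ ^ β, by positivity, fun y => ?_⟩
  rw [add_mul]
  rcases lt_or_ge ‖y‖ δ with hy | hy
  · refine le_add_of_le_of_nonneg ?_ (by positivity)
    simpa [Real.abs_rpow_of_nonneg] using hball y (by simpa using hy)
  · refine le_add_of_nonneg_of_le (by positivity) ((hB y).trans ?_)
    rw [div_mul_eq_mul_div, le_div_iff₀ (by positivity)]
    gcongr

variable {E F G : Type*} [NormedAddCommGroup E] [InnerProductSpace ℝ E] [FiniteDimensional ℝ E]
  [MeasurableSpace E] [BorelSpace E] [NormedAddCommGroup F] [NormedSpace ℝ F]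
  [NormedAddCommGroup G] [NormedSpace ℝ G]

omit [NormedSpace ℝ G] in
lemma integrable_of_norm_le_mul_rpow [Nontrivial E] {f : E → G} {s C R : ℝ}
    (hs : -(finrank ℝ E : ℝ) < s) (hf : ∀ z ≠ 0, ContinuousAt f z)
    (hfR : ∀ z, R ≤ ‖z‖ → f z = 0) (hfC : ∀ z ≠ 0, ‖f z‖ ≤ C * ‖z‖ ^ s) : Integrable f := by
  have hne : ∀ᵐ z : E, z ≠ 0 := Measure.ae_ne volume 0
  have hcont : ContinuousOn f {0}ᶜ := fun z hz => (hf z hz).continuousWithinAt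
  have hmeas : AEStronglyMeasurable f := by
    have h := hcont.aestronglyMeasurable (μ := volume) (measurableSet_singleton (0 : E)).compl
    rwa [Measure.restrict_eq_self_of_ae_mem (s := {0}ᶜ) hne] at h
  refine (integrableOn_iff_integrable_of_support_subset (s := ball 0 R) fun z hz => ?_).1
    (integrableOn_ball_of_norm_le_rpow (C := C) (α := -s) Module.finrank_pos (by linarith)
      (ae_restrict_of_ae ?_) hmeas)
  · rw [mem_ball_zero_iff]
    exact lt_of_not_ge fun h => hz (hfR z h)
  · filter_upwards [hne] with z hz
    rw [neg_neg]
    exact hfC z hz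

/-- The `i`-th derivative of `x ↦ K (y + x) (h y)` at `0`, as a multilinear map. -/
def momentDensity (K : E → F →L[ℝ] G) (h : E → F) (i : ℕ) (y : E) :
    ContinuousMultilinearMap ℝ (fun _ : Fin i => E) G :=
  (ContinuousLinearMap.apply ℝ G (h y)).compContinuousMultilinearMap (iteratedFDeriv ℝ i K y)

/-- The `i`-th Taylor coefficient at `0` of the potential `x ↦ ∫ y, K (y + x) (h y)`, obtained by
differentiating under the integral sign. -/
def kernelMoment (K : E → F →L[ℝ] G) (h : E → F) (i : ℕ) :
    ContinuousMultilinearMap ℝ (fun _ : Fin i => E) G :=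
  (i.factorial : ℝ)⁻¹ • ∫ y, momentDensity K h i y

omit [FiniteDimensional ℝ E] [MeasurableSpace E] [BorelSpace E] in
lemma norm_momentDensity_le (K : E → F →L[ℝ] G) (h : E → F) (i : ℕ) (y : E) :
    ‖momentDensity K h i y‖ ≤ ‖iteratedFDeriv ℝ i K y‖ * ‖h y‖ := by
  refine ContinuousMultilinearMap.opNorm_le_bound (by positivity) fun m => ?_
  calc _ ≤ ‖iteratedFDeriv ℝ i K y m‖ * ‖h y‖ := ContinuousLinearMap.le_opNorm _ _
    _ ≤ ‖iteratedFDeriv ℝ i K y‖ * (∏ k, ‖m k‖) * ‖h y‖ := by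
        gcongr
        exact ContinuousMultilinearMap.le_opNorm _ _
    _ = _ := by ring

lemma integral_sub_sum_kernelMoment [CompleteSpace G] {K : E → F →L[ℝ] G}
    {h : E → F} {j : ℕ} {x : E} (hint : Integrable fun y => K (y + x) (h y))
    (hmoment : ∀ i ∈ Finset.range (j + 1), Integrable (momentDensity K h i)) :
    (∫ y, K (y + x) (h y)) - ∑ i ∈ Finset.range (j + 1), kernelMoment K h i (fun _ => x)
      = ∫ y, (K (y + x) - taylorSum K j y x) (h y) := by
  have hterm : ∀ i ∈ Finset.range (j + 1),
      Integrable fun y => (i.factorial : ℝ)⁻¹ • momentDensity K h i y (fun _ => x) := fun i hi =>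
    ((ContinuousMultilinearMap.apply ℝ (fun _ : Fin i => E) G
      (fun _ => x)).integrable_comp (hmoment i hi)).smul ((i.factorial : ℝ)⁻¹)
  have hmoment_apply : ∀ i ∈ Finset.range (j + 1), kernelMoment K h i (fun _ => x)
      = ∫ y, (i.factorial : ℝ)⁻¹ • momentDensity K h i y (fun _ => x) := fun i hi => by
    rw [kernelMoment, _root_.smul_apply,
      ContinuousMultilinearMap.integral_apply (hmoment i hi), ← integral_smul]
  have htaylor : ∀ y, ∑ i ∈ Finset.range (j + 1),
      (i.factorial : ℝ)⁻¹ • momentDensity K h i y (fun _ => x) = taylorSum K j y x (h y) :=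
    fun y => by
      simp only [taylorSum, _root_.sum_apply, _root_.smul_apply]
      rfl
  rw [Finset.sum_congr rfl hmoment_apply, ← integral_finsetSum _ hterm]
  simp_rw [htaylor]
  rw [← integral_sub hint]
  · rfl
  · simp_rw [← htaylor]
    exact integrable_finsetSum _ hterm

omit [FiniteDimensional ℝ E] [MeasurableSpace E] [BorelSpace E] in
lemma norm_apply_sub_taylorSum_le {K : E → F →L[ℝ] G} {h : E → F} {j : ℕ} {A C s β γ : ℝ}
    (hC0 : 0 ≤ C) (hA0 : 0 ≤ A) (hs : s < 0) (hβγ : β ≤ γ) {x y : E}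
    (hy : y ≠ 0) (hyx : y + x ≠ 0) (hhA : ‖h y‖ ≤ A * ‖y‖ ^ β)
    (hC : ‖K (y + x) - taylorSum K j y x‖ ≤ C * (‖x‖ / ‖y‖) ^ γ * (‖y‖ ^ s + ‖y + x‖ ^ s)) :
    ‖(K (y + x) - taylorSum K j y x) (h y)‖
      ≤ C * A * ‖x‖ ^ γ * (2 * ‖y‖ ^ (s + β - γ) + ‖y + x‖ ^ (s + β - γ)) := by
  have hy' : 0 < ‖y‖ := norm_pos_iff.2 hy
  have hsplit := rpow_mul_rpow_le_rpow_add_rpow (sub_nonpos.2 hβγ) hs.le hy' (norm_pos_iff.2 hyx)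
  rw [show β - γ + s = s + β - γ by ring] at hsplit
  calc _ ≤ C * (‖x‖ / ‖y‖) ^ γ * (‖y‖ ^ s + ‖y + x‖ ^ s) * (A * ‖y‖ ^ β) :=
        (ContinuousLinearMap.le_opNorm _ _).trans (by gcongr)
    _ = C * A * ‖x‖ ^ γ * (‖y‖ ^ (s + β - γ) + ‖y‖ ^ (β - γ) * ‖y + x‖ ^ s) := by
        rw [Real.div_rpow (norm_nonneg x) hy'.le, Real.rpow_sub hy', Real.rpow_sub hy',
          Real.rpow_add hy']
        field_simp
    _ ≤ _ := by
        gcongr ?_ * ?_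
        linarith

namespace IsHomogeneousKernel

variable {K : E → F →L[ℝ] G} {s : ℝ} {h : E → F} {β A R : ℝ}

omit [FiniteDimensional ℝ E] [MeasurableSpace E] [BorelSpace E] in
lemma continuousAt_momentDensity (hK : IsHomogeneousKernel K s) (hh : Continuous h) (i : ℕ) {y : E}
    (hy : y ≠ 0) : ContinuousAt (momentDensity K h i) y := by
  have hderiv : ContinuousAt (iteratedFDeriv ℝ i K) y :=
    ((hK.contDiffAt y hy).iteratedFDeriv_right (m := 0) (mod_cast le_top)).continuousAt
  have hcomp : Continuous fun y => ContinuousLinearMap.compContinuousMultilinearMapL ℝ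
      (fun _ : Fin i => E) (F →L[ℝ] G) G (ContinuousLinearMap.apply ℝ G (h y)) :=
    (ContinuousLinearMap.continuous _).comp ((ContinuousLinearMap.continuous _).comp hh)
  exact hcomp.continuousAt.clm_apply hderiv

lemma integrable_momentDensity [Nontrivial E] (hK : IsHomogeneousKernel K s) (hh : Continuous h)
    (hhR : ∀ y, R ≤ ‖y‖ → h y = 0) (hhA : ∀ y, ‖h y‖ ≤ A * ‖y‖ ^ β) {i : ℕ}
    (hi : -(finrank ℝ E : ℝ) < s - i + β) : Integrable (momentDensity K h i) := by
  obtain ⟨C, hC0, hC⟩ := hK.exists_norm_iteratedFDeriv_le i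
  refine integrable_of_norm_le_mul_rpow (C := C * A) hi
    (fun y hy => hK.continuousAt_momentDensity hh i hy) (R := R) (fun y hy => ?_) fun y hy => ?_
  · simpa [hhR y hy] using norm_momentDensity_le K h i y
  · calc _ ≤ ‖iteratedFDeriv ℝ i K y‖ * ‖h y‖ := norm_momentDensity_le K h i y
      _ ≤ C * ‖y‖ ^ (s - i) * (A * ‖y‖ ^ β) := by
          gcongr
          · exact hC y hy
          · exact hhA y
      _ = _ := by
          rw [Real.rpow_add (norm_pos_iff.2 hy)]
          ring

lemma integrable_apply_add [Nontrivial E] (hK : IsHomogeneousKernel K s) (hs0 : s < 0)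
    (hs : -(finrank ℝ E : ℝ) < s) (hh : Continuous h) (hhs : HasCompactSupport h) (x : E) :
    Integrable fun y => K (y + x) (h y) := by
  obtain ⟨C, hC0, hC⟩ := hK.exists_norm_apply_le hs0
  obtain ⟨B, hB⟩ := hhs.exists_bound_of_continuous hh
  obtain ⟨R, -, hR⟩ := hhs.isCompact.isBounded.exists_pos_norm_lt
  suffices Integrable fun z => K z (h (z - x)) by simpa using this.comp_add_right x
  refine integrable_of_norm_le_mul_rpow (C := C * B) (R := R + ‖x‖) hs (fun z hz => ?_)
    (fun z hz => ?_) fun z hz => ?_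
  · exact (hK.contDiffAt z hz).continuousAt.clm_apply (by fun_prop)
  · have hzero : h (z - x) = 0 := image_eq_zero_of_notMem_tsupport fun hmem => by
      linarith [hR _ hmem, norm_sub_norm_le z x]
    rw [hzero, map_zero]
  · calc _ ≤ ‖K z‖ * ‖h (z - x)‖ := (K z).le_opNorm _
      _ ≤ C * ‖z‖ ^ s * B := by
          gcongr
          · exact hC z
          · exact hB _
      _ = _ := by ring

theorem isBigO_integral_sub_sum_kernelMoment [Nontrivial E] [CompleteSpace G]
    (hK : IsHomogeneousKernel K s) (hs : s < 0) (hh : Continuous h) (hhs : HasCompactSupport h)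
    (hA0 : 0 ≤ A) (hhA : ∀ y, ‖h y‖ ≤ A * ‖y‖ ^ β) {j : ℕ} {γ : ℝ} (hjγ : j ≤ γ) (hγj : γ ≤ j + 1)
    (hβγ : β ≤ γ) (hγ : -(finrank ℝ E : ℝ) < s + β - γ) :
    (fun x => (∫ y, K (y + x) (h y)) - ∑ i ∈ Finset.range (j + 1), kernelMoment K h i (fun _ => x))
      =O[𝓝 0] fun x => ‖x‖ ^ γ := by
  obtain ⟨R, -, hR⟩ := hhs.isCompact.isBounded.exists_pos_norm_lt
  have hhR : ∀ y, R ≤ ‖y‖ → h y = 0 := fun y hy =>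
    image_eq_zero_of_notMem_tsupport fun hmem => hy.not_gt (hR y hmem)
  obtain ⟨C, hC0, hC⟩ := hK.exists_norm_sub_taylorSum_le hs hjγ hγj
  set W : E → ℝ := (ball 0 (R + 1)).indicator fun z => ‖z‖ ^ (s + β - γ)
  have hW0 : ∀ z, 0 ≤ W z := fun z => Set.indicator_nonneg (fun z _ => by positivity) z
  have hWint : Integrable W := by
    rw [integrable_indicator_iff measurableSet_ball]
    exact integrableOn_ball_norm_rpow hγ _
  have hmoment : ∀ i ∈ Finset.range (j + 1), Integrable (momentDensity K h i) := fun i hi =>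
    hK.integrable_momentDensity hh hhR hhA (by
      have : (i : ℝ) ≤ j := Nat.cast_le.2 (Nat.lt_succ_iff.1 (Finset.mem_range.1 hi))
      linarith)
  refine Asymptotics.IsBigO.of_bound (C * A * ∫ z, 3 * W z) ?_
  filter_upwards [closedBall_mem_nhds (0 : E) one_pos] with x hx
  rw [mem_closedBall_zero_iff] at hx
  rw [integral_sub_sum_kernelMoment (hK.integrable_apply_add hs (by linarith) hh hhs x) hmoment,
    Real.norm_of_nonneg (by positivity : 0 ≤ ‖x‖ ^ γ)]
  have hbound : ∀ᵐ y, ‖(K (y + x) - taylorSum K j y x) (h y)‖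
      ≤ C * A * ‖x‖ ^ γ * (2 * W y + W (y + x)) := by
    filter_upwards [Measure.ae_ne volume 0, Measure.ae_ne volume (-x)] with y hy hyx
    rcases le_or_gt R ‖y‖ with hyR | hyR
    · have := hW0 y
      have := hW0 (y + x)
      rw [hhR y hyR, map_zero, norm_zero]
      positivity
    · have hW : ∀ z, ‖z‖ < R + 1 → W z = ‖z‖ ^ (s + β - γ) := fun z hz =>
        Set.indicator_of_mem (mem_ball_zero_iff.2 hz) _
      rw [hW y (by linarith), hW (y + x) ((norm_add_le y x).trans_lt (by linarith))]
      exact norm_apply_sub_taylorSum_le hC0 hA0 hs hβγ hy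
        (fun h => hyx (eq_neg_of_add_eq_zero_left h)) (hhA y) (hC x y hy)
  refine (norm_integral_le_of_norm_le
    (((hWint.const_mul 2).add (hWint.comp_add_right x)).const_mul _) hbound).trans_eq ?_
  rw [integral_const_mul]
  simp only [Pi.add_apply]
  rw [integral_add (hWint.const_mul 2) (hWint.comp_add_right x), integral_const_mul,
    integral_add_right_eq_self W x, integral_const_mul]
  ring

end IsHomogeneousKernel

end KernelExpansion

section LeadingTerm

variable {E F : Type*} [NormedAddCommGroup E]

lemma isBigO_norm_rpow_of_le {a b : ℝ} (ha : 0 ≤ a) (hab : a ≤ b) :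
    (fun z : E => ‖z‖ ^ b) =O[𝓝 0] fun z => ‖z‖ ^ a := by
  refine Asymptotics.IsBigO.of_bound' ?_
  filter_upwards [closedBall_mem_nhds (0 : E) one_pos] with z hz
  rw [Real.norm_of_nonneg (by positivity), Real.norm_of_nonneg (by positivity)]
  exact Real.rpow_le_rpow_of_exponent_ge_of_imp (norm_nonneg z) (by simpa using hz) hab
    fun _ hb => by linarith

lemma isLittleO_norm_rpow_of_lt {a b : ℝ} (ha : 0 ≤ a) (hab : a < b) :
    (fun z : E => ‖z‖ ^ b) =o[𝓝 0] fun z => ‖z‖ ^ a := by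
  have hlim : Tendsto (fun z : E => ‖z‖ ^ (b - a)) (𝓝 0) (𝓝 0) :=
    ((continuous_norm.rpow_const fun _ => Or.inr (sub_nonneg.2 hab.le)).tendsto' 0 0
      (by simp [Real.zero_rpow (sub_pos.2 hab).ne']))
  have h := ((Asymptotics.isLittleO_one_iff ℝ).2 hlim).mul_isBigO
    (Asymptotics.isBigO_refl (fun z : E => ‖z‖ ^ a) (𝓝 0))
  simp only [one_mul, ← Real.rpow_add_of_nonneg (norm_nonneg _) (sub_nonneg.2 hab.le) ha,
    sub_add_cancel] at h
  exact h

section Polynomial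

variable [NormedSpace ℝ E] [NormedAddCommGroup F] [NormedSpace ℝ F]

lemma map_diag_smul {k : ℕ} (P : ContinuousMultilinearMap ℝ (fun _ : Fin k => E) F) (t : ℝ)
    (z : E) : P (fun _ => t • z) = t ^ k • P fun _ => z := by
  simpa using P.map_smul_univ (fun _ => t) fun _ => z

lemma map_diag_eq_zero_of_isLittleO {k : ℕ}
    (P : ContinuousMultilinearMap ℝ (fun _ : Fin k => E) F)
    (hP : (fun z => P fun _ => z) =o[𝓝 0] fun z => ‖z‖ ^ k) (z : E) : P (fun _ => z) = 0 := by
  have hline : Tendsto (fun t : ℝ => t • z) (𝓝[≠] 0) (𝓝 0) :=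
    ((continuous_id.smul continuous_const).tendsto' 0 0 (zero_smul ℝ z)).mono_left
      nhdsWithin_le_nhds
  have hscaled : (fun t : ℝ => t ^ k • P fun _ => z) =o[𝓝[≠] 0] fun t : ℝ => t ^ k := by
    refine ((hP.comp_tendsto hline).congr_left fun t => map_diag_smul P t z).trans_isBigO ?_
    refine .of_bound (‖z‖ ^ k) (.of_forall fun t => le_of_eq ?_)
    simp [norm_smul, mul_pow, mul_comm]
  have hconst := (Asymptotics.isBigO_refl (fun t : ℝ => (t ^ k)⁻¹) (𝓝[≠] 0)).smul_isLittleO hscaled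
  refine (Asymptotics.isLittleO_const_const_iff (l := 𝓝[≠] (0 : ℝ)) (c := (1 : ℝ))).1
    (hconst.congr' ?_ ?_)
  · filter_upwards [self_mem_nhdsWithin] with t ht
    exact inv_smul_smul₀ (pow_ne_zero k ht) _
  · filter_upwards [self_mem_nhdsWithin] with t ht
    exact inv_mul_cancel₀ (pow_ne_zero k ht)

lemma isBigO_map_diag {k : ℕ} (P : ContinuousMultilinearMap ℝ (fun _ : Fin k => E) F)
    (l : Filter E) : (fun z => P fun _ => z) =O[l] fun z => ‖z‖ ^ k :=
  .of_bound ‖P‖ (.of_forall fun z => by simpa using P.le_opNorm fun _ => z)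

lemma map_diag_eq_zero_of_isBigO_sum {m : ℕ} {γ : ℝ} (hγ : m < γ + 1)
    (P : (i : ℕ) → ContinuousMultilinearMap ℝ (fun _ : Fin i => E) F)
    (hP : (fun z => ∑ i ∈ Finset.range m, P i fun _ => z) =O[𝓝 0] fun z => ‖z‖ ^ γ) (i : ℕ)
    (hi : i < m) (z : E) : P i (fun _ => z) = 0 := by
  induction i using Nat.strong_induction_on generalizing z with
  | _ i ih =>
    have him : (i : ℝ) + 1 ≤ m := by exact_mod_cast hi
    have htail : (fun z => ∑ k ∈ Finset.Ico (i + 1) m, P k fun _ => z) =o[𝓝 0]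
        fun z => ‖z‖ ^ i := by
      refine Asymptotics.IsLittleO.fun_sum fun k hk =>
        (isBigO_map_diag (P k) (𝓝 0)).trans_isLittleO ?_
      exact Asymptotics.isLittleO_norm_pow_norm_pow (Finset.mem_Ico.1 hk).1
    have hsum : (fun z => ∑ k ∈ Finset.range m, P k fun _ => z) =o[𝓝 0] fun z : E => ‖z‖ ^ i :=
      hP.trans_isLittleO (by
        simpa using isLittleO_norm_rpow_of_lt (E := E) (a := i) (b := γ) (by positivity)
          (by linarith))
    refine map_diag_eq_zero_of_isLittleO (P i) ((hsum.sub htail).congr_left fun y => ?_) z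
    rw [← Finset.sum_range_add_sum_Ico _ hi.le, Finset.sum_eq_sum_Ico_succ_bot hi,
      Finset.sum_eq_zero fun k hk => ih k (Finset.mem_range.1 hk)
        ((Finset.mem_range.1 hk).trans hi) y]
    abel

end Polynomial

variable [InnerProductSpace ℝ E] [NormedAddCommGroup F] [InnerProductSpace ℝ F]
  {c : E →L[ℝ] F →L[ℝ] F}

lemma isHomogeneousKernel_diracKernel (c : E →L[ℝ] F →L[ℝ] F) :
    IsHomogeneousKernel (diracKernel c) (1 - finrank ℝ E) where
  apply_smul t ht z := by
    have ht' : dilationDensity (t • z) = t ^ (-(finrank ℝ E : ℝ)) * dilationDensity z := by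
      rw [dilationDensity, norm_smul, mul_pow, Real.norm_of_nonneg ht.le,
        Real.mul_rpow (by positivity) (by positivity), ← Real.rpow_natCast_mul ht.le,
        dilationDensity]
      congr 2
      push_cast
      ring
    rw [diracKernel, ht', map_smul, diracKernel, smul_smul, smul_smul, sub_eq_neg_add,
      Real.rpow_add_one ht.ne']
    congr 1
    ring
  contDiffAt z hz := (contDiffAt_dilationDensity hz).smul c.contDiff.contDiffAt

variable [FiniteDimensional ℝ E] [MeasurableSpace E] [BorelSpace E] [CompleteSpace F]

lemma IsCliffordMul.pompeiuConst_smul [Nontrivial E] (hc : IsCliffordMul c) {u : E → F}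
    (hu : ContDiff ℝ 1 u) (hus : HasCompactSupport u) (x : E) :
    pompeiuConst E • u x
      = ∫ y, diracKernel c (y + x) (-diracSymbol c (fderiv ℝ u (-y))) := by
  have hreflect : ContDiff ℝ 1 fun z => u (x - z) := hu.comp (contDiff_const.sub contDiff_id)
  have h := hc.integral_diracKernel_diracSymbol_fderiv hreflect
    (hus.comp_homeomorph (Homeomorph.subLeft x))
  have hderiv : ∀ z, fderiv ℝ (fun z => u (x - z)) z = -fderiv ℝ u (x - z) := fun z => by
    refine (((hu.differentiable one_ne_zero _).hasFDerivAt.comp z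
      ((hasFDerivAt_id z).const_sub x)).congr_fderiv ?_).fderiv
    ext v
    simp
  simp only [hderiv, map_neg, sub_zero] at h
  rw [← h, ← integral_add_right_eq_self _ x]
  simp

theorem IsCliffordMul.exists_isBigO_sub_sum (hn : 1 < finrank ℝ E) (hc : IsCliffordMul c)
    {u : E → F} (hu : ContDiff ℝ 1 u) (hus : HasCompactSupport u) {β : ℝ} (hβ : 0 ≤ β)
    (hD : (fun y => diracSymbol c (fderiv ℝ u y)) =O[𝓝 0] fun y => ‖y‖ ^ β) {j : ℕ} {γ : ℝ}
    (hjγ : j ≤ γ) (hγj : γ ≤ j + 1) (hβγ : β ≤ γ) (hγβ : γ < β + 1) :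
    ∃ P : (i : ℕ) → ContinuousMultilinearMap ℝ (fun _ : Fin i => E) F,
      (fun x => u x - ∑ i ∈ Finset.range (j + 1), P i fun _ => x) =O[𝓝 0] fun x => ‖x‖ ^ γ := by
  have := Module.nontrivial_of_finrank_pos (zero_lt_one.trans hn)
  set h : E → F := fun y => -diracSymbol c (fderiv ℝ u (-y))
  have hh : Continuous h :=
    ((diracSymbol c).continuous.comp
      ((hu.continuous_fderiv (by norm_num)).comp continuous_neg)).neg
  have hhs : HasCompactSupport h :=
    ((hus.fderiv ℝ).comp_homeomorph (Homeomorph.neg E)).comp_left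
      (g := fun L => -diracSymbol c L) (by simp)
  have hhO : h =O[𝓝 0] fun y => ‖y‖ ^ β := by
    have hneg : Tendsto (fun y : E => -y) (𝓝 0) (𝓝 0) := continuous_neg.tendsto' 0 0 neg_zero
    simpa [Function.comp_def, h] using (hD.comp_tendsto hneg).neg_left
  obtain ⟨A, hA0, hA⟩ := exists_norm_le_mul_rpow_of_isBigO hβ hh hhs hhO
  have hs : (1 - finrank ℝ E : ℝ) < 0 := sub_neg.2 (mod_cast hn)
  have hexpand := (isHomogeneousKernel_diracKernel c).isBigO_integral_sub_sum_kernelMoment hs hh hhs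
    hA0 hA hjγ hγj hβγ (by linarith)
  refine ⟨fun i => (pompeiuConst E)⁻¹ • kernelMoment (diracKernel c) h i,
    (hexpand.const_smul_left (pompeiuConst E)⁻¹).congr_left fun x => ?_⟩
  have hrep : ∫ y, diracKernel c (y + x) (h y) = pompeiuConst E • u x :=
    (hc.pompeiuConst_smul hu hus x).symm
  simp only [Pi.smul_apply]
  rw [hrep, smul_sub, inv_smul_smul₀ (pompeiuConst_pos E).ne', Finset.smul_sum]
  rfl

/- The half-integer exponent avoids the logarithm that appears in the expansion of order `j + 1`
when the Dirac derivative only vanishes to order `j`. -/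
lemma IsCliffordMul.exists_isBigO_sub_map_diag (hn : 1 < finrank ℝ E) (hc : IsCliffordMul c)
    {u : E → F} (hu : ContDiff ℝ 1 u) (hus : HasCompactSupport u)
    (hD : (fun y => diracSymbol c (fderiv ℝ u y)) =O[𝓝 0] u) {j : ℕ}
    (huj : u =O[𝓝 0] fun z => ‖z‖ ^ j) :
    ∃ P : ContinuousMultilinearMap ℝ (fun _ : Fin j => E) F,
      (fun z => u z - P fun _ => z) =O[𝓝 0] fun z => ‖z‖ ^ (j + 1 / 2 : ℝ) := by
  have huj' : u =O[𝓝 0] fun z => ‖z‖ ^ (j : ℝ) := by simpa using huj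
  obtain ⟨P, hP⟩ := hc.exists_isBigO_sub_sum hn hu hus (β := j) (j := j) (γ := j + 1 / 2)
    (by positivity) (hD.trans huj') (by linarith) (by linarith) (by linarith) (by linarith)
  have hlower : ∀ i ∈ Finset.range j, ∀ z, P i (fun _ => z) = 0 := fun i hi =>
    map_diag_eq_zero_of_isBigO_sum (γ := j) (by linarith) P (by
      have hle := isBigO_norm_rpow_of_le (E := E) (a := j) (b := j + 1 / 2) (by positivity)
        (by linarith)
      have hPj : (fun z => P j fun _ => z) =O[𝓝 0] fun z : E => ‖z‖ ^ (j : ℝ) := by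
        simpa using isBigO_map_diag (P j) (𝓝 0)
      refine ((huj'.sub (hP.trans hle)).sub hPj).congr_left fun z => ?_
      rw [Finset.sum_range_succ]
      abel) i (Finset.mem_range.1 hi)
  refine ⟨P j, hP.congr_left fun z => ?_⟩
  rw [Finset.sum_range_succ, Finset.sum_eq_zero fun i hi => hlower i hi z, zero_add]

lemma IsCliffordMul.isBigO_pow_succ (hn : 1 < finrank ℝ E) (hc : IsCliffordMul c)
    {u : E → F} (hu : ContDiff ℝ 1 u) (hus : HasCompactSupport u)
    (hD : (fun y => diracSymbol c (fderiv ℝ u y)) =O[𝓝 0] u) {j : ℕ}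
    (huj : u =O[𝓝 0] fun z => ‖z‖ ^ (j + 1 / 2 : ℝ)) :
    u =O[𝓝 0] fun z => ‖z‖ ^ (j + 1) := by
  obtain ⟨P, hP⟩ := hc.exists_isBigO_sub_sum hn hu hus (β := j + 1 / 2) (j := j) (γ := j + 1)
    (by positivity) (hD.trans huj) (by linarith) le_rfl (by linarith) (by linarith)
  have hP0 : ∀ i ∈ Finset.range (j + 1), ∀ z, P i (fun _ => z) = 0 := fun i hi =>
    map_diag_eq_zero_of_isBigO_sum (γ := j + 1 / 2) (by push_cast; linarith) P (by
      have hle := isBigO_norm_rpow_of_le (E := E) (a := j + 1 / 2) (b := j + 1) (by positivity)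
        (by linarith)
      exact (huj.sub (hP.trans hle)).congr_left fun z => sub_sub_cancel _ _) i
      (Finset.mem_range.1 hi)
  refine hP.congr (fun z => ?_) fun z => by exact_mod_cast Real.rpow_natCast ‖z‖ (j + 1)
  rw [Finset.sum_eq_zero fun i hi => hP0 i hi z, sub_zero]

end LeadingTerm

section MonogenicLeadingTerm

variable {E F : Type*} [NormedAddCommGroup E] [InnerProductSpace ℝ E] [FiniteDimensional ℝ E]
  [NormedAddCommGroup F] [InnerProductSpace ℝ F] {c : E →L[ℝ] F →L[ℝ] F}
  [MeasurableSpace E] [BorelSpace E]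

lemma tendsto_integral_inner_rescaling {g v : E → F} (hg : Continuous g)
    (hgs : HasCompactSupport g) {k : ℕ} (hvk : v =o[𝓝 0] fun z => ‖z‖ ^ k) :
    Tendsto (fun r : ℝ => ∫ z, ⟪g z, (r ^ k)⁻¹ • v (r • z)⟫) (𝓝[>] 0) (𝓝 0) := by
  have hmass : Integrable fun z => ‖g z‖ * ‖z‖ ^ k :=
    (hg.norm.mul (continuous_norm.pow k)).integrable_of_hasCompactSupport hgs.norm.mul_right
  obtain ⟨R, hR0, hR⟩ := hgs.isCompact.isBounded.exists_pos_norm_le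
  suffices h : (fun r : ℝ => ∫ z, ⟪g z, (r ^ k)⁻¹ • v (r • z)⟫) =o[𝓝[>] 0]
      fun _ => ∫ z, ‖g z‖ * ‖z‖ ^ k from
    (Asymptotics.isLittleO_one_iff ℝ).1
      (h.trans_isBigO (Asymptotics.isBigO_const_const _ one_ne_zero _))
  refine Asymptotics.IsLittleO.of_bound fun ε hε => ?_
  obtain ⟨δ, hδ, hvδ⟩ := Metric.eventually_nhds_iff_ball.1 (hvk.def hε)
  filter_upwards [Ioo_mem_nhdsGT (div_pos hδ hR0)] with r ⟨hr, hrδ⟩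
  have hbound : ∀ z, ‖⟪g z, (r ^ k)⁻¹ • v (r • z)⟫‖ ≤ ε * (‖g z‖ * ‖z‖ ^ k) := fun z => by
    by_cases hz : z ∈ tsupport g
    · have hrz : r • z ∈ ball (0 : E) δ := by
        rw [mem_ball_zero_iff, norm_smul, Real.norm_of_nonneg hr.le]
        exact (mul_le_mul_of_nonneg_left (hR z hz) hr.le).trans_lt ((lt_div_iff₀ hR0).1 hrδ)
      have hv := hvδ _ hrz
      rw [norm_pow, norm_norm, norm_smul, Real.norm_of_nonneg hr.le, mul_pow] at hv
      calc ‖⟪g z, (r ^ k)⁻¹ • v (r • z)⟫‖ ≤ ‖g z‖ * ‖(r ^ k)⁻¹ • v (r • z)‖ :=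
            norm_inner_le_norm _ _
        _ = ‖g z‖ * ((r ^ k)⁻¹ * ‖v (r • z)‖) := by
          rw [norm_smul, Real.norm_of_nonneg (by positivity)]
        _ ≤ ‖g z‖ * ((r ^ k)⁻¹ * (ε * (r ^ k * ‖z‖ ^ k))) := by gcongr
        _ = ε * (‖g z‖ * ‖z‖ ^ k) := by field_simp
    · simp [image_eq_zero_of_notMem_tsupport hz]
  calc ‖∫ z, ⟪g z, (r ^ k)⁻¹ • v (r • z)⟫‖ ≤ ∫ z, ε * (‖g z‖ * ‖z‖ ^ k) :=
        norm_integral_le_of_norm_le (hmass.const_mul ε) (.of_forall hbound)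
    _ ≤ ε * ‖∫ z, ‖g z‖ * ‖z‖ ^ k‖ := by
      rw [integral_const_mul]
      exact mul_le_mul_of_nonneg_left (Real.le_norm_self _) hε.le

omit [MeasurableSpace E] [BorelSpace E] in
lemma diracSymbol_fderiv_rescaling {u : E → F} {r : ℝ} (hr : 0 < r) (k : ℕ) (z : E) :
    diracSymbol c (fderiv ℝ (fun z => (r ^ (k + 1))⁻¹ • u (r • z)) z)
      = (r ^ k)⁻¹ • diracSymbol c (fderiv ℝ u (r • z)) := by
  have hfderiv : fderiv ℝ (fun z => (r ^ (k + 1))⁻¹ • u (r • z)) z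
      = (r ^ (k + 1))⁻¹ • r • fderiv ℝ u (r • z) := by
    rw [← fderiv_comp_smul]
    exact congrFun (fderiv_const_smul_field (𝕜 := ℝ) (f := fun z => u (r • z)) _) z
  rw [hfderiv, smul_smul, map_smul]
  congr 1
  field_simp
  rw [pow_succ']

lemma IsCliffordMul.integral_inner_diracSymbol_fderiv_eq_zero (hc : IsCliffordMul c) {u p : E → F}
    (hu : ContDiff ℝ 1 u) (hp : Continuous p) {k : ℕ}
    (hhom : ∀ (t : ℝ) z, p (t • z) = t ^ (k + 1) • p z)
    (hup : (fun z => u z - p z) =o[𝓝 0] fun z => ‖z‖ ^ (k + 1))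
    (hD : (fun z => diracSymbol c (fderiv ℝ u z)) =o[𝓝 0] fun z => ‖z‖ ^ k)
    {f : E → F} (hf : ContDiff ℝ 1 f) (hfs : HasCompactSupport f) :
    ∫ z, ⟪diracSymbol c (fderiv ℝ f z), p z⟫ = 0 := by
  have hDf : Continuous fun z => diracSymbol c (fderiv ℝ f z) :=
    (diracSymbol c).continuous.comp (hf.continuous_fderiv one_ne_zero)
  have hDfs : HasCompactSupport fun z => diracSymbol c (fderiv ℝ f z) :=
    (hfs.fderiv ℝ).comp_left (map_zero _)
  have hint : ∀ {w : E → F}, Continuous w →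
      Integrable fun z => ⟪diracSymbol c (fderiv ℝ f z), w z⟫ := fun hw =>
    (hDf.inner hw).integrable_of_hasCompactSupport
      (hDfs.mono fun z hz h0 => hz (by simp [h0]))
  have hsplit : ∀ r : ℝ, 0 < r → ∫ z, ⟪diracSymbol c (fderiv ℝ f z), p z⟫
      = (∫ z, ⟪f z, (r ^ k)⁻¹ • diracSymbol c (fderiv ℝ u (r • z))⟫)
        - ∫ z, ⟪diracSymbol c (fderiv ℝ f z), (r ^ (k + 1))⁻¹ • (u (r • z) - p (r • z))⟫ :=
    fun r hr => by
      have hur : ContDiff ℝ 1 fun z => (r ^ (k + 1))⁻¹ • u (r • z) :=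
        contDiff_const.smul (hu.comp (contDiff_const_smul r))
      have hadjoint := hc.integral_inner_diracSymbol_fderiv hf hfs hur
      simp only [diracSymbol_fderiv_rescaling hr] at hadjoint
      rw [← hadjoint, ← integral_sub (hint hur.continuous)]
      · refine integral_congr_ae (.of_forall fun z => ?_)
        simp only [← inner_sub_right, ← smul_sub, sub_sub_cancel, hhom]
        rw [inv_smul_smul₀ (by positivity)]
      · have := hu.continuous
        exact hint (by fun_prop)
  have hlim := (tendsto_integral_inner_rescaling hf.continuous hfs hD).sub
    (tendsto_integral_inner_rescaling hDf hDfs hup)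
  rw [sub_zero] at hlim
  refine tendsto_nhds_unique (tendsto_const_nhds.congr' ?_) hlim
  filter_upwards [self_mem_nhdsWithin] with r hr using hsplit r hr

/- The rescalings `r⁻ᵏ⁻¹ u (r z)` converge to the leading term `p`, while their Dirac derivatives
converge to zero. -/
theorem IsCliffordMul.diracSymbol_fderiv_eq_zero_of_isLittleO [CompleteSpace F]
    (hc : IsCliffordMul c) {u p : E → F} (hu : ContDiff ℝ 1 u) (hp : ContDiff ℝ 1 p) {k : ℕ}
    (hhom : ∀ (t : ℝ) z, p (t • z) = t ^ (k + 1) • p z)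
    (hup : (fun z => u z - p z) =o[𝓝 0] fun z => ‖z‖ ^ (k + 1))
    (hD : (fun z => diracSymbol c (fderiv ℝ u z)) =o[𝓝 0] fun z => ‖z‖ ^ k) (z : E) :
    diracSymbol c (fderiv ℝ p z) = 0 := by
  have hDp : Continuous fun z => diracSymbol c (fderiv ℝ p z) :=
    (diracSymbol c).continuous.comp (hp.continuous_fderiv one_ne_zero)
  refine congrFun ((hDp.ae_eq_iff_eq volume continuous_zero).1 ?_) z
  refine ae_eq_zero_of_integral_contDiff_smul_eq_zero hDp.locallyIntegrable fun g hg hgs => ?_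
  refine ext_inner_left ℝ fun w => ?_
  have hgw : ContDiff ℝ 1 fun z => g z • w := (hg.of_le (by simp)).smul contDiff_const
  have hgws : HasCompactSupport fun z => g z • w := hgs.smul_right
  have hint : Integrable fun z => g z • diracSymbol c (fderiv ℝ p z) :=
    (hg.continuous.smul hDp).integrable_of_hasCompactSupport hgs.smul_right
  rw [← integral_inner hint, inner_zero_right,
    ← hc.integral_inner_diracSymbol_fderiv_eq_zero hu hp.continuous hhom hup hD hgw hgws,
    hc.integral_inner_diracSymbol_fderiv hgw hgws hp]
  simp only [real_inner_smul_left, real_inner_smul_right]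

omit [MeasurableSpace E] [BorelSpace E] in
lemma exists_localization {Ω : Set E} (hΩ : IsOpen Ω) {ψ : E → F} (hψ : ContDiffOn ℝ 1 ψ Ω)
    {x : E} (hx : x ∈ Ω) :
    ∃ u : E → F, ContDiff ℝ 1 u ∧ HasCompactSupport u ∧
      ∀ᶠ z in 𝓝 (0 : E), u =ᶠ[𝓝 z] fun z => ψ (x + z) := by
  obtain ⟨R, hR, hball⟩ := Metric.isOpen_iff.1 hΩ x hx
  obtain ⟨u, hu, hus, heq⟩ := exists_contDiff_hasCompactSupport_eventuallyEq hR (hψ.mono hball)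
  refine ⟨u, hu, hus, ?_⟩
  filter_upwards [ball_mem_nhds (0 : E) (half_pos hR)] with z hz using heq z (by simpa using hz)

omit [MeasurableSpace E] [BorelSpace E] in
lemma isBigO_diracSymbol_fderiv_of_eventuallyEq {ψ u : E → F} {x : E}
    (hD : (fun y => diracSymbol c (fderiv ℝ ψ y)) =O[𝓝 x] ψ)
    (hu : ∀ᶠ z in 𝓝 (0 : E), u =ᶠ[𝓝 z] fun z => ψ (x + z)) :
    (fun z => diracSymbol c (fderiv ℝ u z)) =O[𝓝 0] u := by
  have hshift : Tendsto (fun z => x + z) (𝓝 0) (𝓝 x) :=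
    (continuous_const.add continuous_id).tendsto' 0 x (add_zero x)
  refine (hD.comp_tendsto hshift).congr' ?_ ?_
  · filter_upwards [hu] with z hz
    rw [hz.fderiv_eq, fderiv_comp_add_left, Function.comp_apply]
  · filter_upwards [hu] with z hz using hz.self_of_nhds.symm

lemma IsCliffordMul.exists_vanishingOrder [CompleteSpace F] (hc : IsCliffordMul c)
    {Ω : Set E} (hΩ : IsOpen Ω) (hΩc : IsPreconnected Ω) {ψ : E → F} (hψ : ContDiffOn ℝ 1 ψ Ω)
    (hD : ∀ x ∈ Ω, (fun y => diracSymbol c (fderiv ℝ ψ y)) =O[𝓝 x] ψ) (hne : ∃ x ∈ Ω, ψ x ≠ 0)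
    {x : E} (hx : x ∈ Ω) :
    ∃ k : ℕ, ((fun z => ψ (x + z)) =O[𝓝 0] fun z => ‖z‖ ^ k) ∧
      ¬(fun z => ψ (x + z)) =O[𝓝 0] fun z => ‖z‖ ^ (k + 1) := by
  classical
  have hshift : Tendsto (fun y => y - x) (𝓝 x) (𝓝 0) :=
    (continuous_id.sub continuous_const).tendsto' x 0 (sub_self x)
  have hnotflat : ∃ k : ℕ, ¬(fun z => ψ (x + z)) =O[𝓝 0] fun z => ‖z‖ ^ k := by
    by_contra! h
    obtain ⟨y, hy, hψy⟩ := hne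
    refine hψy (hc.eqOn_zero_of_isFlatAt hΩ hΩc hψ hD hx (fun k => ?_) hy)
    simpa [Function.comp_def] using (h k).comp_tendsto hshift
  have hzero : Nat.find hnotflat ≠ 0 := fun h0 => by
    refine Nat.find_spec hnotflat ?_
    have hcont : ContinuousAt (fun z => ψ (x + z)) 0 :=
      ContinuousAt.comp_of_eq (hψ.continuousOn.continuousAt (hΩ.mem_nhds hx)) (by fun_prop)
        (add_zero x)
    simpa [h0] using hcont.tendsto.isBigO_one ℝ
  obtain ⟨k, hk⟩ := Nat.exists_eq_succ_of_ne_zero hzero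
  exact ⟨k, not_not.1 (Nat.find_min hnotflat (by omega)),
    by simpa [hk] using Nat.find_spec hnotflat⟩

theorem IsCliffordMul.exists_leadingTerm [CompleteSpace F] (hn : 1 < finrank ℝ E)
    (hc : IsCliffordMul c) {Ω : Set E} (hΩ : IsOpen Ω) (hΩc : IsPreconnected Ω) {ψ : E → F}
    (hψ : ContDiffOn ℝ 1 ψ Ω)
    (hD : ∀ x ∈ Ω, (fun y => diracSymbol c (fderiv ℝ ψ y)) =O[𝓝 x] ψ) (hne : ∃ x ∈ Ω, ψ x ≠ 0)
    {x : E} (hx : x ∈ Ω) (hψx : ψ x = 0) :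
    ∃ (k : ℕ) (P : ContinuousMultilinearMap ℝ (fun _ : Fin (k + 1) => E) F),
      (∃ z, P (fun _ => z) ≠ 0) ∧
      (∀ z, diracSymbol c (fderiv ℝ (fun y => P fun _ => y) z) = 0) ∧
      (fun z => ψ (x + z) - P fun _ => z) =o[𝓝 0] fun z => ‖z‖ ^ (k + 1) := by
  obtain ⟨k, hk, hk1⟩ := hc.exists_vanishingOrder hΩ hΩc hψ hD hne hx
  obtain ⟨u, hu, hus, hu_eq⟩ := exists_localization hΩ hψ hx
  have hDu := isBigO_diracSymbol_fderiv_of_eventuallyEq (hD x hx) hu_eq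
  have huψ : u =ᶠ[𝓝 0] fun z => ψ (x + z) := hu_eq.mono fun z hz => hz.self_of_nhds
  have huk : u =O[𝓝 0] fun z => ‖z‖ ^ k := hk.congr' huψ.symm .rfl
  obtain ⟨P, hP⟩ := hc.exists_isBigO_sub_map_diag hn hu hus hDu huk
  have hP0 : ∃ z, P (fun _ => z) ≠ 0 := by
    by_contra! h
    refine hk1 ((hc.isBigO_pow_succ hn hu hus hDu (j := k) ?_).congr' huψ .rfl)
    simpa [h] using hP
  have hrem : (fun z => u z - P fun _ => z) =o[𝓝 0] fun z => ‖z‖ ^ k := by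
    simpa using hP.trans_isLittleO
      (isLittleO_norm_rpow_of_lt (b := (k : ℝ) + 1 / 2) (a := k) (by positivity) (by linarith))
  have hlin : (fun z => ψ (x + z)) =O[𝓝 0] fun z => ‖z‖ := by
    have hψ0 : DifferentiableAt ℝ (fun z => ψ (x + z)) 0 := by
      rw [differentiableAt_comp_add_left, add_zero]
      exact (hψ.differentiableOn one_ne_zero).differentiableAt (hΩ.mem_nhds hx)
    simpa [hψx] using hψ0.isBigO_sub.norm_right
  obtain _ | k := k
  · exact absurd (by simpa using hlin) hk1
  · refine ⟨k, P, hP0, fun z => ?_, hrem.congr' (huψ.sub .rfl) .rfl⟩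
    have hpow : (fun z : E => ‖z‖ ^ (k + 1)) =o[𝓝 0] fun z => ‖z‖ ^ k :=
      Asymptotics.isLittleO_norm_pow_norm_pow k.lt_succ_self
    exact hc.diracSymbol_fderiv_eq_zero_of_isLittleO hu
      (P.contDiff.comp (contDiff_pi.2 fun _ => contDiff_id))
      (map_diag_smul P) hrem ((hDu.trans huk).trans_isLittleO hpow) z

end MonogenicLeadingTerm

section InvariantSubspace

variable {E F : Type*} [NormedAddCommGroup E] [NormedAddCommGroup F] [NormedSpace ℝ F]

/-- The directions along which a function is invariant under all translations. -/
def invariantSubspace [Module ℝ E] (p : E → F) : Submodule ℝ E where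
  carrier := {v | ∀ (t : ℝ) z, p (t • v + z) = p z}
  zero_mem' t z := by simp
  add_mem' {v w} hv hw t z := by rw [smul_add, add_assoc, hv, hw]
  smul_mem' s v hv t z := by rw [smul_smul, hv]

omit [NormedAddCommGroup F] [NormedSpace ℝ F] in
lemma mem_invariantSubspace [Module ℝ E] {p : E → F} {v : E} :
    v ∈ invariantSubspace p ↔ ∀ (t : ℝ) z, p (t • v + z) = p z :=
  Iff.rfl

lemma fderiv_apply_eq_zero_of_mem_invariantSubspace [NormedSpace ℝ E] {p : E → F}
    (hp : Differentiable ℝ p) {v : E} (hv : v ∈ invariantSubspace p) (z : E) :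
    fderiv ℝ p z v = 0 := by
  have hconst : (fun t : ℝ => p (z + t • v)) = fun _ => p z :=
    funext fun t => by rw [add_comm, mem_invariantSubspace.1 hv]
  rw [← (hp z).lineDeriv_eq_fderiv, lineDeriv, hconst, deriv_const]

/- The derivative of a monogenic function with at most one non-invariant direction `v` has the form
`⟪v, ·⟫ u`, and its Dirac derivative `c v u` vanishes only for `u = 0`. -/
theorem IsCliffordMul.finrank_invariantSubspace_add_two_le {F : Type*} [NormedAddCommGroup F]
    [InnerProductSpace ℝ F] [InnerProductSpace ℝ E] [FiniteDimensional ℝ E]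
    {c : E →L[ℝ] F →L[ℝ] F} (hc : IsCliffordMul c) {p : E → F} (hp : Differentiable ℝ p)
    (hD : ∀ z, diracSymbol c (fderiv ℝ p z) = 0) (hne : ∃ z, p z ≠ p 0) :
    finrank ℝ (invariantSubspace p) + 2 ≤ finrank ℝ E := by
  by_contra! hlt
  obtain ⟨z, hz⟩ := hne
  refine hz (is_const_of_fderiv_eq_zero hp (fun y => ?_) z 0)
  set S := invariantSubspace p
  have hperp : finrank ℝ Sᗮ ≤ 1 := by
    have := S.finrank_add_finrank_orthogonal
    omega
  obtain ⟨⟨v, hvS⟩, hspan⟩ := finrank_le_one_iff.1 hperp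
  set L := fderiv ℝ p y
  have hsplit : ∀ w, ∃ t : ℝ, L w = t • L v ∧ ⟪v, w⟫ = t * ‖v‖ ^ 2 := fun w => by
    obtain ⟨a, ha, b, hb, rfl⟩ := S.exists_add_mem_mem_orthogonal w
    obtain ⟨t, ht⟩ := hspan ⟨b, hb⟩
    obtain rfl : t • v = b := congrArg Subtype.val ht
    refine ⟨t, ?_, ?_⟩
    · rw [map_add, fderiv_apply_eq_zero_of_mem_invariantSubspace hp ha, zero_add, map_smul]
    · rw [inner_add_right, S.inner_left_of_mem_orthogonal ha hvS, zero_add, real_inner_smul_right,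
        real_inner_self_eq_norm_sq]
  have hL : (‖v‖ ^ 2) • L = (innerSL ℝ v).smulRight (L v) := by
    ext w
    obtain ⟨t, hLw, hvw⟩ := hsplit w
    simp [hLw, hvw, smul_smul, mul_comm]
  have hcv : c v (L v) = 0 := by
    rw [← diracSymbol_smulRight, ← hL, map_smul, hD, smul_zero]
  have hLv : L v = 0 := by
    have hsq := hc.apply_apply_self v (L v)
    rw [hcv, map_zero, eq_comm, smul_eq_zero, neg_eq_zero, pow_eq_zero_iff two_ne_zero,
      norm_eq_zero] at hsq
    exact hsq.elim (fun hv => by rw [hv, map_zero]) id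
  ext w
  obtain ⟨t, hLw, -⟩ := hsplit w
  rw [hLw, hLv, smul_zero, _root_.zero_apply]

variable [NormedSpace ℝ E]

lemma exists_polynomial_eval_eq_dual_map_diag {k : ℕ}
    (P : ContinuousMultilinearMap ℝ (fun _ : Fin k => E) F) (f : StrongDual ℝ F) (v z : E) :
    ∃ q : Polynomial ℝ, ∀ t : ℝ, q.eval t = f (P fun _ => t • v + z) := by
  classical
  refine ⟨∑ s : Finset (Fin k), Polynomial.monomial s.card
    (f (P (s.piecewise (fun _ => v) fun _ => z))), fun t => ?_⟩
  have hsplit : ∀ s : Finset (Fin k), P (s.piecewise (fun _ => t • v) fun _ => z)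
      = t ^ s.card • P (s.piecewise (fun _ => v) fun _ => z) := fun s => by
    have h := P.map_piecewise_smul (fun _ => t) (s.piecewise (fun _ => v) fun _ => z) s
    rw [Finset.prod_const] at h
    rw [← h]
    congr 1
    ext i
    by_cases hi : i ∈ s <;> simp [hi]
  rw [show (fun _ : Fin k => t • v + z) = (fun _ => t • v) + fun _ => z from rfl, P.map_add_univ]
  simp only [hsplit, map_sum, map_smul, Polynomial.eval_finsetSum, Polynomial.eval_monomial,
    smul_eq_mul, mul_comm]

/- By homogeneity `P (t v + z)` is bounded in `t`, and a bounded polynomial is constant. -/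
lemma mem_invariantSubspace_of_norm_map_diag_add_le {k : ℕ}
    (P : ContinuousMultilinearMap ℝ (fun _ : Fin k => E) F) {v : E} {M : ℝ}
    (hM : ∀ z, ‖P fun _ => v + z‖ ≤ M * ‖z‖ ^ k) :
    v ∈ invariantSubspace fun z => P fun _ => z := by
  have hbound : ∀ (t : ℝ) z, t ≠ 0 → ‖P fun _ => t • v + z‖ ≤ M * ‖z‖ ^ k := fun t z ht => by
    have hz : t • v + z = t • (v + t⁻¹ • z) := by rw [smul_add, smul_inv_smul₀ ht]
    rw [hz, map_diag_smul, norm_smul, norm_pow]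
    calc ‖t‖ ^ k * ‖P fun _ => v + t⁻¹ • z‖ ≤ ‖t‖ ^ k * (M * ‖t⁻¹ • z‖ ^ k) := by gcongr; exact hM _
      _ = M * ‖z‖ ^ k := by
        have := norm_ne_zero_iff.2 ht
        rw [norm_smul, norm_inv, mul_pow, inv_pow]
        field_simp
  refine mem_invariantSubspace.2 fun t z => ?_
  refine (SeparatingDual.eq_iff_forall_dual_eq (R := ℝ)).2 fun f => ?_
  obtain ⟨q, hq⟩ := exists_polynomial_eval_eq_dual_map_diag P f v z
  have hconst : q.degree ≤ 0 := by
    refine (q.isBoundedUnder_abs_atTop_iff).1 ⟨‖f‖ * (M * ‖z‖ ^ k), ?_⟩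
    rw [eventually_map]
    filter_upwards [eventually_ne_atTop (0 : ℝ)] with s hs
    rw [hq, ← Real.norm_eq_abs]
    exact (f.le_opNorm _).trans (by gcongr; exact hbound s z hs)
  have heval : q.eval t = q.eval 0 := by rw [Polynomial.eq_C_of_degree_le_zero hconst]; simp
  simpa [hq] using heval

lemma tendsto_pow_smul_rescaling {R : E → F} {k : ℕ} (hR : R =o[𝓝 0] fun z => ‖z‖ ^ k)
    {s : ℕ → ℝ} (hs : Tendsto (‖s ·‖) atTop atTop) {w : ℕ → E} {a : E}
    (hw : Tendsto w atTop (𝓝 a)) :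
    Tendsto (fun m => s m ^ k • R ((s m)⁻¹ • w m)) atTop (𝓝 0) := by
  have hsinv : Tendsto (fun m => (s m)⁻¹) atTop (𝓝 0) :=
    tendsto_inv₀_cobounded.comp (tendsto_norm_atTop_iff_cobounded.1 hs)
  have hw0 : Tendsto (fun m => (s m)⁻¹ • w m) atTop (𝓝 0) := by simpa using hsinv.smul hw
  refine (Asymptotics.isLittleO_one_iff ℝ).1 <|
    ((Asymptotics.isBigO_refl (fun m => s m ^ k) atTop).smul_isLittleO
      (hR.comp_tendsto hw0)).trans_isBigO ?_
  refine .trans (.of_bound 1 ?_) ((hw.norm.pow k).isBigO_one ℝ)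
  filter_upwards [hs.eventually_gt_atTop 0] with m hm
  have : ‖s m‖ ^ k ≠ 0 := by positivity
  simp only [Function.comp_apply, norm_smul, norm_mul, norm_pow, norm_norm, norm_inv, mul_pow,
    inv_pow]
  rw [mul_inv_cancel_left₀ this, one_mul]

lemma tangentConeAt_subset_invariantSubspace {ψ : E → F} {Z : Set E} {k : ℕ} {M ρ : ℝ}
    (hρ : 0 < ρ) (hZ : ∀ y ∈ Z, ∀ z, ‖z‖ < ρ → ‖ψ (y + z)‖ ≤ M * ‖z‖ ^ k) {x : E}
    (P : ContinuousMultilinearMap ℝ (fun _ : Fin k => E) F)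
    (hP : (fun z => ψ (x + z) - P fun _ => z) =o[𝓝 0] fun z => ‖z‖ ^ k) :
    tangentConeAt ℝ Z x ⊆ invariantSubspace fun z => P fun _ => z := by
  intro v hv
  refine mem_invariantSubspace_of_norm_map_diag_add_le P (M := M) fun z => ?_
  obtain ⟨s, d, hs, hd, hsd⟩ := mem_tangentConeAt_iff_exists_seq_norm_tendsto_atTop.1 hv
  have hw : Tendsto (fun m => s m • d m + z) atTop (𝓝 (v + z)) := hsd.add_const z
  have hPw : Tendsto (fun m => P fun _ => s m • d m + z) atTop (𝓝 (P fun _ => v + z)) :=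
    (P.cont.tendsto _).comp (tendsto_pi_nhds.2 fun _ => hw)
  have hbound := (tendsto_pow_smul_rescaling hP hs hw).norm.const_add (M * ‖z‖ ^ k)
  rw [norm_zero, add_zero] at hbound
  refine le_of_tendsto_of_tendsto hPw.norm hbound ?_
  have hsz : Tendsto (fun m => ‖(s m)⁻¹ • z‖) atTop (𝓝 0) := by
    simpa [norm_smul] using hs.inv_tendsto_atTop.mul_const ‖z‖
  filter_upwards [hd, hs.eventually_gt_atTop 0, hsz.eventually_lt_const hρ] with m hdm hsm hzm
  have hs0 : s m ≠ 0 := norm_pos_iff.1 hsm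
  have hψ : ‖s m ^ k • ψ (x + (s m)⁻¹ • (s m • d m + z))‖ ≤ M * ‖z‖ ^ k := by
    rw [smul_add, inv_smul_smul₀ hs0, ← add_assoc, norm_smul, norm_pow]
    calc ‖s m‖ ^ k * ‖ψ (x + d m + (s m)⁻¹ • z)‖
        ≤ ‖s m‖ ^ k * (M * ‖(s m)⁻¹ • z‖ ^ k) := by gcongr; exact hZ _ hdm _ hzm
      _ = M * ‖z‖ ^ k := by
        rw [norm_smul, norm_inv, mul_pow, inv_pow]
        field_simp
  calc ‖P fun _ => s m • d m + z‖
      = ‖s m ^ k • ψ (x + (s m)⁻¹ • (s m • d m + z)) - s m ^ k • (ψ (x + (s m)⁻¹ • (s m • d m + z))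
          - P fun _ => (s m)⁻¹ • (s m • d m + z))‖ := by
        rw [smul_sub, sub_sub_cancel, ← map_diag_smul, smul_inv_smul₀ hs0]
    _ ≤ _ := (norm_sub_le _ _).trans (by gcongr)

end InvariantSubspace

section Dimension

variable {E : Type*} [NormedAddCommGroup E] [NormedSpace ℝ E] [FiniteDimensional ℝ E]

lemma exists_injOn_of_finrank_le {d : ℕ} (S : Submodule ℝ E) (hS : finrank ℝ S ≤ d) :
    ∃ T : E →L[ℝ] EuclideanSpace ℝ (Fin d), ∀ v ∈ S, T v = 0 → v = 0 := by
  obtain ⟨f, hf⟩ := (finrank_le_iff_exists_linearMap (R := ℝ) (M := S)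
    (M' := EuclideanSpace ℝ (Fin d))).1 (by simpa using hS)
  obtain ⟨g, hg⟩ := LinearMap.exists_extend f
  refine ⟨LinearMap.toContinuousLinearMap g, fun v hv h0 => ?_⟩
  have hfv : f ⟨v, hv⟩ = 0 := by rw [← hg]; simpa using h0
  exact congrArg Subtype.val ((map_eq_zero_iff f hf).1 hfv)

lemma eventually_mul_norm_sub_le_norm_map_sub {G : Type*} [NormedAddCommGroup G]
    [NormedSpace ℝ G] {Z : Set E} {x : E} (T : E →L[ℝ] G)
    (hT : ∀ v ∈ tangentConeAt ℝ Z x, T v = 0 → v = 0) :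
    ∃ κ > 0, ∀ᶠ y in 𝓝[Z] x, κ * ‖y - x‖ ≤ ‖T (y - x)‖ := by
  by_contra! hcon
  have hseq : ∀ m : ℕ, ∃ y ∈ Z, ‖y - x‖ < 1 / (m + 1 : ℝ) ∧
      ‖T (y - x)‖ < 1 / (m + 1 : ℝ) * ‖y - x‖ := fun m => by
    have hball : ball x (1 / (m + 1 : ℝ)) ∈ 𝓝 x := ball_mem_nhds x (by positivity)
    obtain ⟨y, hTy, hyZ, hy⟩ := ((hcon (1 / (m + 1 : ℝ)) (by positivity)).and_eventually
      (eventually_mem_nhdsWithin.and (mem_nhdsWithin_of_mem_nhds hball))).exists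
    exact ⟨y, hyZ, mem_ball_iff_norm.1 hy, hTy⟩
  choose y hyZ hyx hTy using hseq
  have hpos : ∀ m, 0 < ‖y m - x‖ := fun m =>
    pos_of_mul_pos_right ((norm_nonneg _).trans_lt (hTy m)) (by positivity)
  set v : ℕ → E := fun m => ‖y m - x‖⁻¹ • (y m - x)
  have hv1 : ∀ m, v m ∈ sphere (0 : E) 1 := fun m => by
    rw [mem_sphere_zero_iff_norm, norm_smul, norm_inv, norm_norm, inv_mul_cancel₀ (hpos m).ne']
  obtain ⟨a, ha, φ, hφ, hlim⟩ := (isCompact_sphere (0 : E) 1).tendsto_subseq hv1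
  have hyx0 : Tendsto (fun m => y m - x) atTop (𝓝 0) :=
    squeeze_zero_norm (fun m => (hyx m).le) tendsto_one_div_add_atTop_nhds_zero_nat
  have hacone : a ∈ tangentConeAt ℝ Z x :=
    mem_tangentConeAt_of_seq atTop (fun m => ‖y (φ m) - x‖⁻¹) (fun m => y (φ m) - x)
      (hyx0.comp hφ.tendsto_atTop) (.of_forall fun m => by simpa using hyZ (φ m)) hlim
  have hTv : Tendsto (fun m => T (v m)) atTop (𝓝 0) := by
    refine squeeze_zero_norm (fun m => ?_) tendsto_one_div_add_atTop_nhds_zero_nat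
    rw [map_smul, norm_smul, norm_inv, norm_norm, inv_mul_le_iff₀ (hpos m), mul_comm]
    exact (hTy m).le
  have hTa : T a = 0 :=
    tendsto_nhds_unique ((T.continuous.tendsto a).comp hlim) (hTv.comp hφ.tendsto_atTop)
  simp [hT a hacone hTa] at ha

omit [FiniteDimensional ℝ E] in
lemma dimH_le_finrank_of_mul_norm_sub_le {G : Type*} [NormedAddCommGroup G] [NormedSpace ℝ G]
    [FiniteDimensional ℝ G] {A : Set E} (T : E →L[ℝ] G) {κ : ℝ} (hκ : 0 < κ)
    (hT : ∀ x ∈ A, ∀ y ∈ A, κ * ‖y - x‖ ≤ ‖T (y - x)‖) : dimH A ≤ finrank ℝ G := by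
  have hanti : AntilipschitzWith (Real.toNNReal κ⁻¹) fun x : A => T x :=
    AntilipschitzWith.of_le_mul_dist fun x y => by
      rw [Real.coe_toNNReal _ (inv_nonneg.2 hκ.le), ← div_eq_inv_mul, le_div_iff₀' hκ,
        Subtype.dist_eq, dist_eq_norm, dist_eq_norm, ← map_sub]
      exact hT y y.2 x x.2
  calc dimH A = dimH (Set.univ : Set A) := by
        rw [← (isometry_subtype_coe (s := A)).dimH_image, Set.image_univ, Subtype.range_coe]
    _ ≤ dimH ((fun x : A => T x) '' Set.univ) := hanti.le_dimH_image _
    _ ≤ dimH (Set.univ : Set G) := dimH_mono (Set.subset_univ _)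
    _ = finrank ℝ G := Real.dimH_univ_eq_finrank G

lemma dimH_le_finrank_of_mul_norm_sub_le_of_norm_lt {G : Type*} [NormedAddCommGroup G]
    [NormedSpace ℝ G] [FiniteDimensional ℝ G] {A : Set E} (T : E →L[ℝ] G) {κ : ℝ} (hκ : 0 < κ)
    (hT : ∀ x ∈ A, ∀ y ∈ A, ‖y - x‖ < κ → κ * ‖y - x‖ ≤ ‖T (y - x)‖) :
    dimH A ≤ finrank ℝ G := by
  by_contra! hlt
  obtain ⟨x, -, hx⟩ := exists_mem_nhdsWithin_lt_dimH_of_lt_dimH hlt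
  refine (hx _ (inter_mem_nhdsWithin A (ball_mem_nhds x (half_pos hκ)))).not_ge
    (dimH_le_finrank_of_mul_norm_sub_le T hκ fun y hy z hz => hT y hy.1 z hz.1 ?_)
  rw [← dist_eq_norm]
  exact (dist_triangle_right z y x).trans_lt (by
    linarith [mem_ball.1 hy.2, mem_ball.1 hz.2])

omit [FiniteDimensional ℝ E] in
lemma exists_mem_approx_of_eventually_mul_norm_sub_le {G : Type*} [NormedAddCommGroup G]
    [NormedSpace ℝ G] {D : Set (E →L[ℝ] G)} (hD : Dense D) {Z : Set E} {x : E} (T : E →L[ℝ] G)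
    {κ : ℝ} (hκ : 0 < κ) (hT : ∀ᶠ y in 𝓝[Z] x, κ * ‖y - x‖ ≤ ‖T (y - x)‖) :
    ∃ Q ∈ D, ∃ m : ℕ, ∀ y ∈ Z, ‖y - x‖ < 1 / (m + 1 : ℝ) →
      1 / (m + 1 : ℝ) * ‖y - x‖ ≤ ‖Q (y - x)‖ := by
  obtain ⟨ρ, hρ, hball⟩ := Metric.mem_nhdsWithin_iff.1 hT
  obtain ⟨m, hm⟩ := exists_nat_one_div_lt (lt_min (half_pos hκ) hρ)
  obtain ⟨Q, hQD, hQ⟩ := hD.exists_dist_lt T (half_pos hκ)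
  refine ⟨Q, hQD, m, fun y hy hyx => ?_⟩
  have hTy : κ * ‖y - x‖ ≤ ‖T (y - x)‖ :=
    hball ⟨mem_ball_iff_norm.2 (hyx.trans (hm.trans_le (min_le_right _ _))), hy⟩
  have hdiff : ‖T (y - x) - Q (y - x)‖ ≤ κ / 2 * ‖y - x‖ :=
    ((T - Q).le_opNorm (y - x)).trans (by rw [← dist_eq_norm]; gcongr)
  have hm2 : 1 / (m + 1 : ℝ) * ‖y - x‖ ≤ κ / 2 * ‖y - x‖ := by
    exact mul_le_mul_of_nonneg_right (hm.trans_le (min_le_left _ _)).le (norm_nonneg _)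
  linarith [norm_le_norm_add_norm_sub' (T (y - x)) (Q (y - x))]

/- A tangent cone inside a `d`-dimensional subspace makes some linear map to `ℝᵈ` locally bounded
below on `Z - x`; by separability countably many linear maps suffice for all `x`. -/
theorem dimH_le_of_tangentConeAt_subset {d : ℕ} {Z : Set E}
    (hZ : ∀ x ∈ Z, ∃ S : Submodule ℝ E, finrank ℝ S ≤ d ∧ tangentConeAt ℝ Z x ⊆ S) :
    dimH Z ≤ d := by
  obtain ⟨D, hDc, hD⟩ :=
    TopologicalSpace.exists_countable_dense (E →L[ℝ] EuclideanSpace ℝ (Fin d))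
  let A : (E →L[ℝ] EuclideanSpace ℝ (Fin d)) → ℕ → Set E := fun Q m =>
    {x ∈ Z | ∀ y ∈ Z, ‖y - x‖ < 1 / (m + 1 : ℝ) → 1 / (m + 1 : ℝ) * ‖y - x‖ ≤ ‖Q (y - x)‖}
  have hcover : Z ⊆ ⋃ Q ∈ D, ⋃ m, A Q m := fun x hx => by
    obtain ⟨S, hSd, hS⟩ := hZ x hx
    obtain ⟨T, hT⟩ := exists_injOn_of_finrank_le S hSd
    obtain ⟨κ, hκ, hκT⟩ := eventually_mul_norm_sub_le_norm_map_sub T fun v hv => hT v (hS hv)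
    obtain ⟨Q, hQD, m, hQ⟩ := exists_mem_approx_of_eventually_mul_norm_sub_le hD T hκ hκT
    exact Set.mem_biUnion hQD (Set.mem_iUnion.2 ⟨m, hx, hQ⟩)
  have hA : ∀ Q m, dimH (A Q m) ≤ d := fun Q m => by
    simpa using dimH_le_finrank_of_mul_norm_sub_le_of_norm_lt Q (κ := 1 / (m + 1 : ℝ))
      (by positivity) fun x hx y hy => hx.2 y hy.1
  refine (dimH_mono hcover).trans ?_
  simp only [dimH_bUnion hDc, dimH_iUnion, iSup_le_iff]
  exact fun Q _ m => hA Q m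

end Dimension

lemma exists_nat_forall_norm_le_of_isBigO {E F : Type*} [NormedAddCommGroup E]
    [NormedAddCommGroup F] {f : E → F} {k : ℕ}
    (hf : f =O[𝓝 0] fun z => ‖z‖ ^ k) :
    ∃ m : ℕ, ∀ z, ‖z‖ < 1 / (m + 1 : ℝ) → ‖f z‖ ≤ (m + 1 : ℝ) * ‖z‖ ^ k := by
  obtain ⟨C, hC⟩ := hf.bound
  obtain ⟨δ, hδ, hball⟩ := Metric.eventually_nhds_iff_ball.1 hC
  obtain ⟨m, hm⟩ := exists_nat_gt (max C δ⁻¹)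
  have hmC : C ≤ m + 1 := by linarith [le_max_left C δ⁻¹]
  have hmδ : 1 / (m + 1 : ℝ) ≤ δ := by
    rw [one_div]
    exact inv_le_of_inv_le₀ hδ (by linarith [le_max_right C δ⁻¹])
  refine ⟨m, fun z hz => (hball z (mem_ball_zero_iff.2 (hz.trans_le hmδ))).trans ?_⟩
  rw [norm_pow, norm_norm]
  gcongr

section DiracZeros

variable {E F : Type*} [NormedAddCommGroup E] [InnerProductSpace ℝ E] [FiniteDimensional ℝ E]
  [NormedAddCommGroup F] [InnerProductSpace ℝ F] [CompleteSpace F] {c : E →L[ℝ] F →L[ℝ] F}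

/- The zeros are sorted by vanishing order `k` and by a uniform constant `m`; within each class the
tangent cone lies in the invariant subspace of the leading term. -/
theorem IsCliffordMul.dimH_zeros_le (hn : 1 < finrank ℝ E) (hc : IsCliffordMul c) {Ω : Set E}
    (hΩ : IsOpen Ω) (hΩc : IsPreconnected Ω) {ψ : E → F} (hψ : ContDiffOn ℝ 1 ψ Ω)
    (hD : ∀ x ∈ Ω, (fun y => diracSymbol c (fderiv ℝ ψ y)) =O[𝓝 x] ψ) (hne : ∃ x ∈ Ω, ψ x ≠ 0) :
    dimH {x ∈ Ω | ψ x = 0} ≤ (finrank ℝ E - 2 : ℕ) := by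
  borelize E
  let Z : ℕ → ℕ → Set E := fun k m =>
    {x | (∃ P : ContinuousMultilinearMap ℝ (fun _ : Fin (k + 1) => E) F,
      (∃ z, P (fun _ => z) ≠ 0) ∧ (∀ z, diracSymbol c (fderiv ℝ (fun y => P fun _ => y) z) = 0) ∧
      (fun z => ψ (x + z) - P fun _ => z) =o[𝓝 0] fun z => ‖z‖ ^ (k + 1)) ∧
      ∀ z, ‖z‖ < 1 / (m + 1 : ℝ) → ‖ψ (x + z)‖ ≤ (m + 1 : ℝ) * ‖z‖ ^ (k + 1)}
  have hcover : {x ∈ Ω | ψ x = 0} ⊆ ⋃ k, ⋃ m, Z k m := fun x ⟨hx, hψx⟩ => by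
    obtain ⟨k, P, hP0, hPD, hP⟩ := hc.exists_leadingTerm hn hΩ hΩc hψ hD hne hx hψx
    have hO : (fun z => ψ (x + z)) =O[𝓝 0] fun z => ‖z‖ ^ (k + 1) := by
      simpa using hP.isBigO.add (isBigO_map_diag P (𝓝 0))
    obtain ⟨m, hm⟩ := exists_nat_forall_norm_le_of_isBigO hO
    exact Set.mem_iUnion₂.2 ⟨k, m, ⟨P, hP0, hPD, hP⟩, hm⟩
  have hZ : ∀ k m, dimH (Z k m) ≤ (finrank ℝ E - 2 : ℕ) := fun k m => by
    refine dimH_le_of_tangentConeAt_subset fun x ⟨⟨P, ⟨z, hz⟩, hPD, hP⟩, _⟩ =>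
      ⟨invariantSubspace fun z => P fun _ => z, Nat.le_sub_of_add_le ?_,
        tangentConeAt_subset_invariantSubspace (by positivity) (fun y hy => hy.2) P hP⟩
    have hPdiff : Differentiable ℝ fun z => P fun _ => z :=
      (P.contDiff.comp (contDiff_pi.2 fun _ => contDiff_id)).differentiable one_ne_zero
    have hP0 : P (fun _ => 0) = 0 := P.map_coord_zero 0 rfl
    exact hc.finrank_invariantSubspace_add_two_le hPdiff hPD ⟨z, by rwa [hP0]⟩
  refine (dimH_mono hcover).trans ?_
  simp only [dimH_iUnion, iSup_le_iff]
  exact hZ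

end DiracZeros

section Symmetrization

variable {V : Type*} [NormedAddCommGroup V] [NormedSpace ℝ V] [FiniteDimensional ℝ V]

/- Averaging over the finite group generated by the `c i`, one generator at a time: the pullback of
the inner product of `W × W` along `u ↦ (S u, S (c j u))` gains invariance under `c j`. -/
lemma exists_injective_inner_map_anticommuting_eq {ι : Type*} (c : ι → V →ₗ[ℝ] V)
    (hsq : ∀ i u, c i (c i u) = -u) (hanti : ∀ i j, i ≠ j → ∀ u, c i (c j u) = -c j (c i u))
    (s : Finset ι) :
    ∃ (W : Type) (_ : NormedAddCommGroup W) (_ : InnerProductSpace ℝ W) (S : V →ₗ[ℝ] W),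
      Function.Injective S ∧ ∀ i ∈ s, ∀ u v, ⟪S (c i u), S (c i v)⟫ = ⟪S u, S v⟫ := by
  classical
  induction s using Finset.induction_on with
  | empty => exact ⟨_, _, inferInstance, (toEuclidean (E := V)).toLinearMap,
      (toEuclidean (E := V)).injective, by simp⟩
  | insert j s hj ih =>
    obtain ⟨W, _, _, S, hS, hinv⟩ := ih
    let T : V →ₗ[ℝ] WithLp 2 (W × W) :=
      (WithLp.linearEquiv 2 ℝ (W × W)).symm.toLinearMap ∘ₗ S.prod (S ∘ₗ c j)
    have hT : ∀ u v, ⟪T u, T v⟫ = ⟪S u, S v⟫ + ⟪S (c j u), S (c j v)⟫ := fun u v => by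
      simp [T, WithLp.prod_inner_apply]
    refine ⟨WithLp 2 (W × W), inferInstance, inferInstance, T, fun u v huv => hS ?_, ?_⟩
    · exact congrArg (fun w : WithLp 2 (W × W) => w.fst) huv
    rintro i hi u v
    rw [hT, hT]
    obtain rfl | hij := eq_or_ne i j
    · rw [hsq, hsq, map_neg, map_neg, inner_neg_neg, add_comm]
    · have his := (Finset.mem_insert.1 hi).resolve_left hij
      rw [hanti j i hij.symm, hanti j i hij.symm, map_neg, map_neg, inner_neg_neg, hinv i his,
        hinv i his]

variable {E : Type*} [NormedAddCommGroup E] [InnerProductSpace ℝ E] [FiniteDimensional ℝ E]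

lemma exists_linearEquiv_inner_apply_left {c : E →L[ℝ] V →L[ℝ] V}
    (hc : ∀ x u, c x (c x u) = -(‖x‖ ^ 2) • u) :
    ∃ (F : Type) (_ : NormedAddCommGroup F) (_ : InnerProductSpace ℝ F) (A : V ≃ₗ[ℝ] F),
      ∀ x u v, ⟪A (c x u), A v⟫ = -⟪A u, A (c x v)⟫ := by
  set e := stdOrthonormalBasis ℝ E
  have hsq : ∀ i u, c (e i) (c (e i) u) = -u := fun i u => by simp [hc]
  have hanti : ∀ i j, i ≠ j → ∀ u, c (e i) (c (e j) u) = -c (e j) (c (e i) u) :=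
    fun i j hij u => eq_neg_of_add_eq_zero_left <| by
      rw [clifford_polarization hc, e.inner_eq_zero hij, mul_zero, zero_smul]
  obtain ⟨W, _, _, S, hS, hinv⟩ := exists_injective_inner_map_anticommuting_eq
    (fun i => (c (e i)).toLinearMap) hsq hanti Finset.univ
  have hskew : ∀ i u v, ⟪S (c (e i) u), S v⟫ = -⟪S u, S (c (e i) v)⟫ := fun i u v => by
    have h := hinv i (Finset.mem_univ i) u (c (e i) v)
    simp only [ContinuousLinearMap.coe_coe, hsq, map_neg, inner_neg_right] at h
    linarith
  refine ⟨LinearMap.range S, inferInstance, inferInstance, LinearEquiv.ofInjective S hS,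
    fun x u v => ?_⟩
  change ⟪S (c x u), S v⟫ = -⟪S u, S (c x v)⟫
  rw [← e.sum_repr' x]
  simp [inner_sum, sum_inner, inner_smul_left, inner_smul_right, hskew]

end Symmetrization

section AlgebraicCliffordMultiplication

variable {E V F : Type*} [NormedAddCommGroup E] [InnerProductSpace ℝ E] [FiniteDimensional ℝ E]
  [NormedAddCommGroup V] [NormedSpace ℝ V] [NormedAddCommGroup F] [NormedSpace ℝ F]

lemma diracSymbol_comp_of_intertwining {c : E →L[ℝ] V →L[ℝ] V} {c' : E →L[ℝ] F →L[ℝ] F}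
    {A : V →L[ℝ] F} (hA : ∀ x u, c' x (A u) = A (c x u)) (L : E →L[ℝ] V) :
    diracSymbol c' (A ∘L L) = A (diracSymbol c L) := by
  simp [diracSymbol_apply (stdOrthonormalBasis ℝ E), hA]

theorem dimH_zeros_le_of_clifford [FiniteDimensional ℝ V] (hn : 1 < finrank ℝ E)
    {c : E →L[ℝ] V →L[ℝ] V} (hc : ∀ x u, c x (c x u) = -(‖x‖ ^ 2) • u) {Ω : Set E}
    (hΩ : IsOpen Ω) (hΩc : IsPreconnected Ω) {ψ : E → V} (hψ : ContDiffOn ℝ 1 ψ Ω)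
    (hD : ∀ x ∈ Ω, (fun y => diracSymbol c (fderiv ℝ ψ y)) =O[𝓝 x] ψ) (hne : ∃ x ∈ Ω, ψ x ≠ 0) :
    dimH {x ∈ Ω | ψ x = 0} ≤ (finrank ℝ E - 2 : ℕ) := by
  obtain ⟨F, _, _, A₀, hskew⟩ := exists_linearEquiv_inner_apply_left hc
  have : FiniteDimensional ℝ F := A₀.finiteDimensional
  have : CompleteSpace F := FiniteDimensional.complete ℝ F
  let A : V ≃L[ℝ] F := A₀.toContinuousLinearEquiv
  let c' : E →L[ℝ] F →L[ℝ] F := (A.arrowCongr A).toContinuousLinearMap ∘L c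
  have hA : ∀ x u, c' x (A u) = A (c x u) := fun x u => by simp [c']
  have hc' : IsCliffordMul c' := by
    refine ⟨fun x => A.surjective.forall.2 fun u => ?_,
      fun x => A.surjective.forall₂.2 fun u v => ?_⟩
    · rw [hA, hA, hc, map_smul]
    · rw [hA, hA]
      exact hskew x u v
  have hD' : ∀ x ∈ Ω, (fun y => diracSymbol c' (fderiv ℝ (A ∘ ψ) y)) =O[𝓝 x] (A ∘ ψ) :=
    fun x hx => by
      simp only [A.comp_fderiv]
      have hsymm : ψ =O[𝓝 x] (A ∘ ψ) := by
        simpa using A.symm.toContinuousLinearMap.isBigO_comp (A ∘ ψ) (𝓝 x)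
      refine .trans ?_ ((hD x hx).trans hsymm)
      simpa only [diracSymbol_comp_of_intertwining (A := A.toContinuousLinearMap) hA] using
        A.toContinuousLinearMap.isBigO_comp (fun y => diracSymbol c (fderiv ℝ ψ y)) (𝓝 x)
  have hzeros := hc'.dimH_zeros_le hn hΩ hΩc (A.contDiff.comp_contDiffOn hψ) hD'
    (hne.imp fun x hx => ⟨hx.1, by simpa using hx.2⟩)
  simpa using hzeros

end AlgebraicCliffordMultiplication

section MatrixDirac

variable {n N : ℕ} {α : Fin n → Matrix (Fin N) (Fin N) ℂ}

/-- The matrices `αⱼ` as a Clifford multiplication by vectors, `c(x) = Σⱼ xⱼ αⱼ`. -/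
def matrixCliffordMul (α : Fin n → Matrix (Fin N) (Fin N) ℂ) :
    EuclideanSpace ℝ (Fin n) →L[ℝ] EuclideanSpace ℂ (Fin N) →L[ℝ] EuclideanSpace ℂ (Fin N) :=
  ∑ j, (EuclideanSpace.proj j : StrongDual ℝ (EuclideanSpace ℝ (Fin n))).smulRight
    ((toEuclideanLin (α j)).toContinuousLinearMap.restrictScalars ℝ)

lemma matrixCliffordMul_apply (x : EuclideanSpace ℝ (Fin n)) (u : EuclideanSpace ℂ (Fin N)) :
    matrixCliffordMul α x u = ∑ j, x j • toEuclideanLin (α j) u := by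
  simp [matrixCliffordMul]

lemma diracSymbol_matrixCliffordMul_fderiv (ψ : EuclideanSpace ℝ (Fin n) → EuclideanSpace ℂ (Fin N))
    (x : EuclideanSpace ℝ (Fin n)) :
    diracSymbol (matrixCliffordMul α) (fderiv ℝ ψ x) = diracOp α ψ x := by
  simp [diracSymbol_apply (EuclideanSpace.basisFun (Fin n) ℝ), matrixCliffordMul_apply, diracOp]

lemma CliffordRel.sum_smul_mul_sum_smul (hα : CliffordRel α) (x : Fin n → ℝ) :
    (∑ j, x j • α j) * ∑ k, x k • α k = -(∑ j, x j ^ 2) • (1 : Matrix (Fin N) (Fin N) ℂ) := by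
  have hsum : (∑ j, x j • α j) * ∑ k, x k • α k = ∑ j, ∑ k, (x j * x k) • (α j * α k) := by
    simp only [Finset.sum_mul_sum, smul_mul_smul_comm]
  have hanti : ∀ j k, α j * α k + α k * α j = if j = k then (-2 : ℝ) • 1 else 0 := fun j k => by
    rw [hα j k, smul_ite, smul_zero]
    congr 1
    ext; simp
  have hswap : ∑ j, ∑ k, (x j * x k) • (α k * α j) = ∑ j, ∑ k, (x j * x k) • (α j * α k) := by
    rw [Finset.sum_comm]
    simp only [mul_comm]
  have hdouble : ∑ j, ∑ k, (x j * x k) • (α j * α k + α k * α j)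
      = (-2 * ∑ j, x j ^ 2) • (1 : Matrix (Fin N) (Fin N) ℂ) := by
    simp only [hanti, smul_ite, smul_zero, Finset.sum_ite_eq, Finset.mem_univ, if_true, smul_smul,
      ← Finset.sum_smul, Finset.mul_sum, pow_two, mul_comm]
  simp only [smul_add, Finset.sum_add_distrib, hswap, ← hsum] at hdouble
  linear_combination (norm := module) (1 / 2 : ℝ) • hdouble

lemma matrixCliffordMul_apply_apply_self (hα : CliffordRel α) (x : EuclideanSpace ℝ (Fin n))
    (u : EuclideanSpace ℂ (Fin N)) :
    matrixCliffordMul α x (matrixCliffordMul α x u) = -(‖x‖ ^ 2) • u := by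
  have hx : ∀ v, matrixCliffordMul α x v = toEuclideanLin (∑ j, x j • α j) v := fun v => by
    rw [matrixCliffordMul_apply, map_sum, LinearMap.sum_apply]
    exact Finset.sum_congr rfl fun j _ =>
      LinearMap.congr_fun (toEuclideanLin.toLinearMap.map_smul_of_tower (x j) (α j)).symm v
  rw [hx, hx, EuclideanSpace.real_norm_sq_eq, ← LinearMap.comp_apply,
    ← toLpLin_mul_same, hα.sum_smul_mul_sum_smul,
    ← LinearEquiv.coe_toLinearMap, LinearMap.map_smul_of_tower]
  simp

lemma isBigO_rpow_norm_smul {X F : Type*} [TopologicalSpace X] [NormedAddCommGroup F]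
    [NormedSpace ℝ F] {ψ : X → F} {x : X} (hψ : ContinuousAt ψ x) {p : ℝ} (hp : 0 ≤ p) :
    (fun y => ‖ψ y‖ ^ p • ψ y) =O[𝓝 x] ψ := by
  simpa using ((hψ.norm.rpow_const (.inr hp)).isBigO_one ℝ).smul (Asymptotics.isBigO_refl ψ (𝓝 x))

theorem singular_nodal_set_dimension_general (hn : 2 ≤ n) (hα : CliffordRel α)
    {Ω : Set (EuclideanSpace ℝ (Fin n))} (hΩ : IsOpen Ω) (hΩc : IsPreconnected Ω)
    {ψ : EuclideanSpace ℝ (Fin n) → EuclideanSpace ℂ (Fin N)} (hψ : ContDiffOn ℝ 1 ψ Ω)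
    (hne : ∃ x ∈ Ω, ψ x ≠ 0) (hD : ∀ x ∈ Ω, diracOp α ψ =O[𝓝 x] ψ) :
    dimH {x ∈ Ω | ψ x = 0} ≤ (n : ℝ≥0∞) - 2 := by
  have hzeros := dimH_zeros_le_of_clifford (by rw [finrank_euclideanSpace_fin]; lia)
    (matrixCliffordMul_apply_apply_self hα) hΩ hΩc hψ
    (by simpa only [diracSymbol_matrixCliffordMul_fderiv] using hD) hne
  simpa using hzeros

end MatrixDirac

/-- The singular nodal set `Z_{≥2}` (zeros of `ψ` at which the total derivative also vanishes)
of a nontrivial `C^{1,α}` solution of the critical Dirac equation `Dψ = |ψ|^{2/(n-1)}ψ` on the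
unit ball of `ℝⁿ`, `n ≥ 3`, has Hausdorff dimension at most `n - 2`. -/
theorem singular_nodal_set_dimension
    (n : ℕ) (hn : 3 ≤ n) (N : ℕ) (hN : N = 2 ^ (n / 2))
    (α : Fin n → Matrix (Fin N) (Fin N) ℂ)
    (hcl : CliffordRel α)
    (ψ : EuclideanSpace ℝ (Fin n) → EuclideanSpace ℂ (Fin N))
    -- `ψ` is `C^{1,a}` on the open unit ball for some `a ∈ (0,1)`
    (a : ℝ≥0) (ha0 : 0 < a) (ha1 : a < 1)
    (hreg : ContDiffOn ℝ 1 ψ (Metric.ball 0 1))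
    (hHol : ∃ C : ℝ≥0, HolderOnWith C a (fderiv ℝ ψ) (Metric.ball 0 1))
    -- `ψ` is not identically zero on the unit ball
    (hne : ∃ x ∈ Metric.ball (0 : EuclideanSpace ℝ (Fin n)) 1, ψ x ≠ 0)
    -- `ψ` solves the critical Dirac equation pointwise on the unit ball
    (heq : ∀ x ∈ Metric.ball (0 : EuclideanSpace ℝ (Fin n)) 1,
      diracOp α ψ x = (‖ψ x‖ ^ ((2:ℝ) / ((n:ℝ) - 1))) • ψ x) :
    dimH {x : EuclideanSpace ℝ (Fin n) |
        x ∈ Metric.ball (0 : EuclideanSpace ℝ (Fin n)) 1 ∧ ψ x = 0 ∧ fderiv ℝ ψ x = 0}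
      ≤ (n : ℝ≥0∞) - 2 := by
  have hp : 0 ≤ (2 : ℝ) / ((n : ℝ) - 1) :=
    div_nonneg zero_le_two (sub_nonneg.2 (by exact_mod_cast (by lia : 1 ≤ n)))
  refine (dimH_mono fun x hx => (⟨hx.1, hx.2.1⟩ : x ∈ {x ∈ ball 0 1 | ψ x = 0})).trans
    (singular_nodal_set_dimension_general (by lia) hcl isOpen_ball
      (convex_ball _ _).isPreconnected hreg hne fun x hx => ?_)
  have hball := isOpen_ball.mem_nhds hx
  exact (isBigO_rpow_norm_smul (hreg.continuousOn.continuousAt hball) hp).congr'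
    (eventually_of_mem hball fun y hy => (heq y hy).symm) .rfl
end
end

section
/- Let n ≥ 2, N = 2^⌊n/2⌋, and let α₁,…,αₙ be skew-Hermitian complex N×N matrices satisfying the Clifford relations. Fix λ > 0, x₀ ∈ ℝⁿ, and Φ₀ ∈ ℂᴺ with |Φ₀|² = (λ/2)(n/2)^{n−1}. Then the spinor ψ : ℝⁿ → ℂᴺ defined by ψ(x) = (2λ/(λ² + |x−x₀|²))^{n/2} (Id − γ((x−x₀)/λ)) Φ₀ is smooth and satisfies the critical Dirac equation Dψ(x) = |ψ(x)|^{2/(n−1)} ψ(x) for every x ∈ ℝⁿ. -/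
open MeasureTheory Metric Filter Matrix
open scoped ENNReal NNReal

noncomputable section

/-- Clifford multiplication `γ(v) = Σⱼ vⱼ αⱼ`. -/
def gammaMat {n N : ℕ} (α : Fin n → Matrix (Fin N) (Fin N) ℂ)
    (v : EuclideanSpace ℝ (Fin n)) : Matrix (Fin N) (Fin N) ℂ :=
  ∑ j : Fin n, (v j : ℂ) • α j

/-- The Dirac bubble `ψ(x) = (2λ/(λ²+|x-x₀|²))^{n/2} (Id - γ((x-x₀)/λ)) Φ₀`. -/
def diracBubble {n N : ℕ} (α : Fin n → Matrix (Fin N) (Fin N) ℂ)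
    (l : ℝ) (x₀ : EuclideanSpace ℝ (Fin n)) (Φ₀ : EuclideanSpace ℂ (Fin N))
    (x : EuclideanSpace ℝ (Fin n)) : EuclideanSpace ℂ (Fin N) :=
  ((2 * l / (l ^ 2 + ‖x - x₀‖ ^ 2)) ^ ((n:ℝ)/2)) •
    (Φ₀ - Matrix.toEuclideanLin (gammaMat α (l⁻¹ • (x - x₀))) Φ₀)

/-!
The weight `w(x) = 2λ / (λ² + |x - x₀|²)` has gradient `-(w²/λ) (x - x₀)`, and the affine spinor
`χ(x) = Φ₀ - γ((x - x₀)/λ) Φ₀` satisfies `Dχ = (n/λ) Φ₀`, because each `αⱼ` squares to `-1`. The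
Leibniz rule `D(fχ) = γ(∇f) χ + f Dχ` with `f = w^{n/2}`, together with `γ(v)² = -|v|²`, then makes
`ψ = w^{n/2} χ` satisfy the linear equation `Dψ = (n/2) w ψ`. Since `γ(v)` is skew-Hermitian,
`|χ|² = (1 + |x - x₀|²/λ²) |Φ₀|² = 2 / (λ w) |Φ₀|²`, so `|ψ|²` is a constant multiple of `w^{n-1}`,
and the normalization of `Φ₀` is exactly the one for which `|ψ|^{2/(n-1)} = (n/2) w`.
-/

section Gradient

variable {F : Type*} [NormedAddCommGroup F] [InnerProductSpace ℝ F] [CompleteSpace F]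

lemma hasGradientAt_norm_sub_sq (x₀ x : F) :
    HasGradientAt (fun y => ‖y - x₀‖ ^ 2) ((2 : ℝ) • (x - x₀)) x := by
  rw [hasGradientAt_iff_hasFDerivAt]
  refine ((hasFDerivAt_id x).sub_const x₀).norm_sq.congr_fderiv ?_
  ext v
  simp

lemma hasGradientAt_comp_of_hasDerivAt {f : F → ℝ} {v x : F} {g : ℝ → ℝ} {g' : ℝ}
    (hg : HasDerivAt g g' (f x)) (hf : HasGradientAt f v x) :
    HasGradientAt (fun y => g (f y)) (g' • v) x := by
  rw [hasGradientAt_iff_hasFDerivAt] at hf ⊢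
  refine (hg.comp_hasFDerivAt x hf).congr_fderiv ?_
  rw [map_smulₛₗ, conj_trivial]

end Gradient

section ConformalFactor

/-- The conformal factor `w(x) = 2l / (l² + |x - x₀|²)` of the round metric: stereographic
projection, composed with the dilation by `l` and the translation by `x₀`, turns the metric of the
unit sphere into `w²` times the Euclidean one. -/
def conformalFactor {F : Type*} [NormedAddCommGroup F] (l : ℝ) (x₀ x : F) : ℝ :=
  2 * l / (l ^ 2 + ‖x - x₀‖ ^ 2)

lemma conformalFactor_pos {F : Type*} [NormedAddCommGroup F] {l : ℝ} (hl : 0 < l) (x₀ x : F) :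
    0 < conformalFactor l x₀ x := by
  unfold conformalFactor
  positivity

variable {F : Type*} [NormedAddCommGroup F] [InnerProductSpace ℝ F] {l : ℝ}

lemma one_add_norm_inv_smul_sub_sq (hl : l ≠ 0) (x₀ x : F) :
    1 + ‖l⁻¹ • (x - x₀)‖ ^ 2 = 2 / (l * conformalFactor l x₀ x) := by
  have hden : l ^ 2 + ‖x - x₀‖ ^ 2 ≠ 0 := by positivity
  rw [conformalFactor, norm_smul, Real.norm_eq_abs, mul_pow, sq_abs]
  field_simp

lemma contDiff_conformalFactor (hl : l ≠ 0) (x₀ : F) {k : WithTop ℕ∞} :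
    ContDiff ℝ k (conformalFactor l x₀) :=
  contDiff_const.div (contDiff_const.add ((contDiff_id.sub contDiff_const).norm_sq ℝ))
    fun _ => by positivity

variable [CompleteSpace F]

lemma hasGradientAt_conformalFactor (hl : l ≠ 0) (x₀ x : F) :
    HasGradientAt (conformalFactor l x₀) (-(conformalFactor l x₀ x ^ 2 / l) • (x - x₀)) x := by
  have hden : l ^ 2 + ‖x - x₀‖ ^ 2 ≠ 0 := by positivity
  have hderiv : HasDerivAt (fun r => 2 * l / (l ^ 2 + r))
      (-(2 * l) / (l ^ 2 + ‖x - x₀‖ ^ 2) ^ 2) (‖x - x₀‖ ^ 2) := by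
    simpa using (hasDerivAt_const _ (2 * l)).fun_div ((hasDerivAt_id _).const_add (l ^ 2)) hden
  convert! hasGradientAt_comp_of_hasDerivAt (f := fun y => ‖y - x₀‖ ^ 2) hderiv
    (hasGradientAt_norm_sub_sq x₀ x) using 1
  rw [smul_smul, conformalFactor]
  congr 1
  field_simp

lemma hasGradientAt_conformalFactor_rpow (hl : 0 < l) (s : ℝ) (x₀ x : F) :
    HasGradientAt (fun y => conformalFactor l x₀ y ^ s)
      (-(s * conformalFactor l x₀ x / l * conformalFactor l x₀ x ^ s) • (x - x₀)) x := by
  have hw := (conformalFactor_pos hl x₀ x).ne'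
  convert! hasGradientAt_comp_of_hasDerivAt (Real.hasDerivAt_rpow_const (p := s) (Or.inl hw))
    (hasGradientAt_conformalFactor hl.ne' x₀ x) using 1
  rw [smul_smul, Real.rpow_sub_one hw]
  congr 1
  field_simp

end ConformalFactor

section SkewHermitian

variable {𝕜 ι : Type*} [RCLike 𝕜] [Fintype ι] [DecidableEq ι] {A : Matrix ι ι 𝕜}

lemma inner_toEuclideanLin_left_of_skew (hA : Aᴴ = -A) (Φ Ψ : EuclideanSpace 𝕜 ι) :
    inner 𝕜 (toEuclideanLin A Φ) Ψ = -inner 𝕜 Φ (toEuclideanLin A Ψ) := by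
  rw [← LinearMap.adjoint_inner_right, ← toEuclideanLin_conjTranspose_eq_adjoint, hA, map_neg,
    LinearMap.neg_apply, inner_neg_right]

lemma norm_sub_toEuclideanLin_sq_of_skew (hA : Aᴴ = -A) (Φ : EuclideanSpace 𝕜 ι) :
    ‖Φ - toEuclideanLin A Φ‖ ^ 2 = ‖Φ‖ ^ 2 + ‖toEuclideanLin A Φ‖ ^ 2 := by
  have horth : RCLike.re (inner 𝕜 Φ (toEuclideanLin A Φ)) = 0 := by
    have h := congrArg RCLike.re (inner_toEuclideanLin_left_of_skew hA Φ Φ)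
    rw [inner_re_symm, map_neg] at h
    linarith
  rw [@norm_sub_sq 𝕜, horth]
  ring

end SkewHermitian

section CliffordMultiplication

variable {n N : ℕ} {α : Fin n → Matrix (Fin N) (Fin N) ℂ}

lemma gammaMat_single (j : Fin n) : gammaMat α (EuclideanSpace.single j 1) = α j := by
  simp [gammaMat]

lemma conjTranspose_gammaMat (hskew : ∀ j, (α j)ᴴ = -(α j)) (v : EuclideanSpace ℝ (Fin n)) :
    (gammaMat α v)ᴴ = -gammaMat α v := by
  simp [gammaMat, conjTranspose_sum, conjTranspose_smul, hskew]

/-- Clifford multiplication `v ↦ γ(v) Φ` on a fixed spinor `Φ`, as a continuous real-linear map. -/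
def gammaCLM (α : Fin n → Matrix (Fin N) (Fin N) ℂ) (Φ : EuclideanSpace ℂ (Fin N)) :
    EuclideanSpace ℝ (Fin n) →L[ℝ] EuclideanSpace ℂ (Fin N) :=
  ∑ j, (EuclideanSpace.proj j).smulRight (toEuclideanLin (α j) Φ)

lemma gammaCLM_apply (Φ : EuclideanSpace ℂ (Fin N)) (v : EuclideanSpace ℝ (Fin n)) :
    gammaCLM α Φ v = ∑ j, v j • toEuclideanLin (α j) Φ := by
  simp [gammaCLM]

lemma toEuclideanLin_gammaMat (v : EuclideanSpace ℝ (Fin n)) (Φ : EuclideanSpace ℂ (Fin N)) :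
    toEuclideanLin (gammaMat α v) Φ = gammaCLM α Φ v := by
  simp only [gammaMat, gammaCLM_apply, map_sum, map_smul, LinearMap.sum_apply,
    LinearMap.smul_apply]
  simp only [Complex.coe_smul]

namespace CliffordRel

lemma gammaMat_mul_self (hcl : CliffordRel α) (v : EuclideanSpace ℝ (Fin n)) :
    gammaMat α v * gammaMat α v = (-((‖v‖ ^ 2 : ℝ) : ℂ)) • 1 := by
  have hexpand : gammaMat α v * gammaMat α v
      = ∑ j, ∑ k, ((v j : ℂ) * v k) • (α j * α k) := by
    simp only [gammaMat, Finset.sum_mul_sum, smul_mul_smul_comm]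
  have hswap : gammaMat α v * gammaMat α v
      = ∑ j, ∑ k, ((v j : ℂ) * v k) • (α k * α j) := by
    rw [hexpand, Finset.sum_comm]
    simp only [mul_comm]
  have hdouble : (2 : ℂ) • (gammaMat α v * gammaMat α v)
      = (2 : ℂ) • ((-((‖v‖ ^ 2 : ℝ) : ℂ)) • (1 : Matrix (Fin N) (Fin N) ℂ)) :=
    calc (2 : ℂ) • (gammaMat α v * gammaMat α v)
        = ∑ j, ∑ k, ((v j : ℂ) * v k) • (α j * α k + α k * α j) := by
          simp only [smul_add, Finset.sum_add_distrib, ← hexpand, ← hswap, two_smul]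
      _ = ∑ j, ((v j : ℂ) * v j) • (-2 : ℂ) • (1 : Matrix (Fin N) (Fin N) ℂ) := by
          simp only [hcl _ _, smul_ite, smul_zero, Finset.sum_ite_eq, Finset.mem_univ, if_true]
      _ = (2 : ℂ) • ((-((‖v‖ ^ 2 : ℝ) : ℂ)) • (1 : Matrix (Fin N) (Fin N) ℂ)) := by
          rw [← Finset.sum_smul, EuclideanSpace.real_norm_sq_eq]
          push_cast
          simp only [sq]
          module
  exact smul_right_injective _ two_ne_zero hdouble

lemma gammaCLM_gammaCLM (hcl : CliffordRel α) (v : EuclideanSpace ℝ (Fin n))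
    (Φ : EuclideanSpace ℂ (Fin N)) : gammaCLM α (gammaCLM α Φ v) v = -(‖v‖ ^ 2) • Φ := by
  rw [← toEuclideanLin_gammaMat, ← toEuclideanLin_gammaMat, ← LinearMap.comp_apply,
    ← toLpLin_mul_same, hcl.gammaMat_mul_self, map_smul, toLpLin_one, ← Complex.ofReal_neg]
  simp only [LinearMap.smul_apply, LinearMap.id_apply, Complex.coe_smul]

lemma toEuclideanLin_toEuclideanLin (hcl : CliffordRel α) (j : Fin n)
    (Φ : EuclideanSpace ℂ (Fin N)) :
    toEuclideanLin (α j) (toEuclideanLin (α j) Φ) = -Φ := by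
  simpa [← toEuclideanLin_gammaMat, gammaMat_single]
    using hcl.gammaCLM_gammaCLM (EuclideanSpace.single j 1) Φ

lemma norm_gammaCLM_sq (hcl : CliffordRel α) (hskew : ∀ j, (α j)ᴴ = -(α j))
    (v : EuclideanSpace ℝ (Fin n)) (Φ : EuclideanSpace ℂ (Fin N)) :
    ‖gammaCLM α Φ v‖ ^ 2 = ‖v‖ ^ 2 * ‖Φ‖ ^ 2 := by
  have hinner : inner ℂ (gammaCLM α Φ v) (gammaCLM α Φ v) = (‖v‖ ^ 2 : ℝ) • inner ℂ Φ Φ := by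
    rw [← toEuclideanLin_gammaMat,
      inner_toEuclideanLin_left_of_skew (conjTranspose_gammaMat hskew v),
      toEuclideanLin_gammaMat, toEuclideanLin_gammaMat, hcl.gammaCLM_gammaCLM,
      inner_smul_right_eq_smul, neg_smul, neg_neg]
  rw [← inner_self_eq_norm_sq (𝕜 := ℂ), hinner, RCLike.smul_re, inner_self_eq_norm_sq]

lemma norm_sub_gammaCLM_sq (hcl : CliffordRel α) (hskew : ∀ j, (α j)ᴴ = -(α j))
    (v : EuclideanSpace ℝ (Fin n)) (Φ : EuclideanSpace ℂ (Fin N)) :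
    ‖Φ - gammaCLM α Φ v‖ ^ 2 = (1 + ‖v‖ ^ 2) * ‖Φ‖ ^ 2 := by
  rw [← toEuclideanLin_gammaMat,
    norm_sub_toEuclideanLin_sq_of_skew (conjTranspose_gammaMat hskew v),
    toEuclideanLin_gammaMat, hcl.norm_gammaCLM_sq hskew]
  ring

end CliffordRel

end CliffordMultiplication

section DiracOperator

variable {n N : ℕ} {α : Fin n → Matrix (Fin N) (Fin N) ℂ}

lemma diracOp_smul {f : EuclideanSpace ℝ (Fin n) → ℝ} {g x : EuclideanSpace ℝ (Fin n)}
    {ψ : EuclideanSpace ℝ (Fin n) → EuclideanSpace ℂ (Fin N)}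
    (hf : HasGradientAt f g x) (hψ : DifferentiableAt ℝ ψ x) :
    diracOp α (fun y => f y • ψ y) x = gammaCLM α (ψ x) g + f x • diracOp α ψ x := by
  have hpartial (j : Fin n) :
      fderiv ℝ (fun y => f y • ψ y) x (EuclideanSpace.single j 1)
        = g j • ψ x + f x • fderiv ℝ ψ x (EuclideanSpace.single j 1) := by
    rw [fderiv_fun_smul hf.differentiableAt hψ]
    simp [hf.fderiv_apply, EuclideanSpace.inner_single_right, add_comm]
  simp only [diracOp, hpartial, map_add, LinearMap.map_smul_of_tower, Finset.sum_add_distrib,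
    gammaCLM_apply, Finset.smul_sum]

lemma diracOp_sub_gammaCLM (hcl : CliffordRel α) (c : ℝ) (x₀ x : EuclideanSpace ℝ (Fin n))
    (Φ : EuclideanSpace ℂ (Fin N)) :
    diracOp α (fun y => Φ - gammaCLM α Φ (c • (y - x₀))) x = (n * c) • Φ := by
  have hfderiv :
      HasFDerivAt (fun y => Φ - gammaCLM α Φ (c • (y - x₀))) (-(c • gammaCLM α Φ)) x := by
    have haffine := ((hasFDerivAt_id (𝕜 := ℝ) x).sub_const x₀).const_smul c
    simpa using ((gammaCLM α Φ).hasFDerivAt.comp x haffine).const_sub Φ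
  have hterm (j : Fin n) :
      toEuclideanLin (α j) ((-(c • gammaCLM α Φ)) (EuclideanSpace.single j 1)) = c • Φ := by
    simp [← toEuclideanLin_gammaMat, gammaMat_single, LinearMap.map_smul_of_tower,
      hcl.toEuclideanLin_toEuclideanLin]
  simp only [diracOp, hfderiv.fderiv, hterm, Finset.sum_const, Finset.card_univ, Fintype.card_fin,
    ← Nat.cast_smul_eq_nsmul ℝ, smul_smul]

end DiracOperator

section DiracBubble

variable {n N : ℕ} {α : Fin n → Matrix (Fin N) (Fin N) ℂ} {l : ℝ}

lemma diracBubble_eq (x₀ : EuclideanSpace ℝ (Fin n)) (Φ₀ : EuclideanSpace ℂ (Fin N)) :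
    diracBubble α l x₀ Φ₀ = fun x =>
      conformalFactor l x₀ x ^ ((n : ℝ) / 2) • (Φ₀ - gammaCLM α Φ₀ (l⁻¹ • (x - x₀))) := by
  ext1 x
  rw [diracBubble, conformalFactor, toEuclideanLin_gammaMat]

lemma contDiff_diracBubble (hl : 0 < l) (x₀ : EuclideanSpace ℝ (Fin n))
    (Φ₀ : EuclideanSpace ℂ (Fin N)) {k : WithTop ℕ∞} :
    ContDiff ℝ k (diracBubble α l x₀ Φ₀) := by
  rw [diracBubble_eq]
  refine ((contDiff_conformalFactor hl.ne' x₀).rpow_const_of_ne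
    fun x => (conformalFactor_pos hl x₀ x).ne').smul ?_
  fun_prop

lemma diracOp_diracBubble (hcl : CliffordRel α) (hl : 0 < l) (x₀ x : EuclideanSpace ℝ (Fin n))
    (Φ₀ : EuclideanSpace ℂ (Fin N)) :
    diracOp α (diracBubble α l x₀ Φ₀) x
      = (n / 2 * conformalFactor l x₀ x) • diracBubble α l x₀ Φ₀ x := by
  simp only [diracBubble_eq]
  set w := conformalFactor l x₀ x
  set v := l⁻¹ • (x - x₀)
  have hw : 0 < w := conformalFactor_pos hl x₀ x
  have hnorm : ‖v‖ ^ 2 = 2 / (l * w) - 1 := by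
    rw [← one_add_norm_inv_smul_sub_sq hl.ne' x₀ x, add_sub_cancel_left]
  have hgamma : gammaCLM α (Φ₀ - gammaCLM α Φ₀ v) v = gammaCLM α Φ₀ v + ‖v‖ ^ 2 • Φ₀ := by
    rw [← toEuclideanLin_gammaMat, map_sub, toEuclideanLin_gammaMat, toEuclideanLin_gammaMat,
      hcl.gammaCLM_gammaCLM, neg_smul, sub_neg_eq_add]
  have hgradient : HasGradientAt (fun y => conformalFactor l x₀ y ^ ((n : ℝ) / 2))
      (-(n / 2 * w * w ^ ((n : ℝ) / 2)) • v) x := by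
    convert! hasGradientAt_conformalFactor_rpow hl ((n : ℝ) / 2) x₀ x using 1
    rw [smul_smul]
    congr 1
    ring
  rw [diracOp_smul hgradient (by fun_prop), diracOp_sub_gammaCLM hcl, map_smul, hgamma, hnorm]
  match_scalars <;> field_simp
  ring

lemma norm_diracBubble_sq (hcl : CliffordRel α) (hskew : ∀ j, (α j)ᴴ = -(α j)) (hn : n ≠ 0)
    (hl : 0 < l) (x₀ x : EuclideanSpace ℝ (Fin n)) (Φ₀ : EuclideanSpace ℂ (Fin N)) :
    ‖diracBubble α l x₀ Φ₀ x‖ ^ 2 = 2 / l * conformalFactor l x₀ x ^ (n - 1) * ‖Φ₀‖ ^ 2 := by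
  have hw := conformalFactor_pos hl x₀ x
  have hpow : (conformalFactor l x₀ x ^ ((n : ℝ) / 2)) ^ 2 = conformalFactor l x₀ x ^ n := by
    rw [← Real.rpow_mul_natCast hw.le, Nat.cast_ofNat, div_mul_cancel₀ _ two_ne_zero,
      Real.rpow_natCast]
  rw [diracBubble_eq, norm_smul, mul_pow, Real.norm_eq_abs, sq_abs, hpow,
    hcl.norm_sub_gammaCLM_sq hskew, one_add_norm_inv_smul_sub_sq hl.ne', ← mul_pow_sub_one hn]
  field_simp

end DiracBubble

lemma rpow_two_div_sub_one_eq {a b : ℝ} {n : ℕ} (hn : 2 ≤ n) (ha : 0 ≤ a) (hb : 0 ≤ b)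
    (hab : a ^ 2 = b ^ (n - 1)) : a ^ ((2 : ℝ) / ((n : ℝ) - 1)) = b := by
  have hexp : (2 : ℝ) / ((n : ℝ) - 1) = (2 : ℕ) * ((n - 1 : ℕ) : ℝ)⁻¹ := by
    rw [Nat.cast_pred (by lia), Nat.cast_ofNat, div_eq_mul_inv]
  rw [hexp, Real.rpow_natCast_mul ha, hab, Real.pow_rpow_inv_natCast hb (by lia)]

theorem bubbles_solve_critical_dirac_general {n N : ℕ} (hn : 2 ≤ n)
    {α : Fin n → Matrix (Fin N) (Fin N) ℂ} (hskew : ∀ j, (α j)ᴴ = -(α j)) (hcl : CliffordRel α)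
    {l : ℝ} (hl : 0 < l) (x₀ : EuclideanSpace ℝ (Fin n)) (Φ₀ : EuclideanSpace ℂ (Fin N))
    (hΦ₀ : ‖Φ₀‖ ^ 2 = (l / 2) * ((n : ℝ) / 2) ^ (n - 1)) :
    ContDiff ℝ (⊤ : ℕ∞) (diracBubble α l x₀ Φ₀) ∧
    ∀ x : EuclideanSpace ℝ (Fin n),
      diracOp α (diracBubble α l x₀ Φ₀) x =
        (‖diracBubble α l x₀ Φ₀ x‖ ^ ((2 : ℝ) / ((n : ℝ) - 1))) • diracBubble α l x₀ Φ₀ x := by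
  refine ⟨contDiff_diracBubble hl x₀ Φ₀, fun x => ?_⟩
  have hw := conformalFactor_pos hl x₀ x
  have hnorm : ‖diracBubble α l x₀ Φ₀ x‖ ^ 2 = (n / 2 * conformalFactor l x₀ x) ^ (n - 1) := by
    rw [norm_diracBubble_sq hcl hskew (by lia) hl, hΦ₀, mul_pow]
    field_simp
  rw [diracOp_diracBubble hcl hl,
    rpow_two_div_sub_one_eq hn (norm_nonneg _) (by positivity) hnorm]

/-- The Dirac bubbles are smooth solutions of the critical Dirac equation
`Dψ = |ψ|^{2/(n-1)}ψ` on `ℝⁿ`, provided `|Φ₀|² = (λ/2)(n/2)^{n-1}`. -/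
theorem bubbles_solve_critical_dirac
    (n : ℕ) (hn : 2 ≤ n) (N : ℕ) (hN : N = 2 ^ (n / 2))
    (α : Fin n → Matrix (Fin N) (Fin N) ℂ)
    (hskew : ∀ j, (α j)ᴴ = -(α j))
    (hcl : CliffordRel α)
    (l : ℝ) (hl : 0 < l) (x₀ : EuclideanSpace ℝ (Fin n))
    (Φ₀ : EuclideanSpace ℂ (Fin N))
    (hΦ₀ : ‖Φ₀‖ ^ 2 = (l / 2) * ((n:ℝ)/2) ^ (n - 1)) :
    ContDiff ℝ (⊤ : ℕ∞) (diracBubble α l x₀ Φ₀) ∧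
    ∀ x : EuclideanSpace ℝ (Fin n),
      diracOp α (diracBubble α l x₀ Φ₀) x =
        (‖diracBubble α l x₀ Φ₀ x‖ ^ ((2:ℝ) / ((n:ℝ) - 1))) • diracBubble α l x₀ Φ₀ x :=
  bubbles_solve_critical_dirac_general hn hskew hcl hl x₀ Φ₀ hΦ₀
end
end
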